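/- arXiv:1607.07174 — 5 statements merged into one kernel-verified Lean document; each statement's English description precedes it below -/
import Mathlib

section
/- For every finite simple graph G with at least one edge, the acyclic chromatic number satisfies χ_acyc(G) ≤ 3^{f_1(G)}, i.e., log_3(χ_acyc(G)) ≤ f_1(G). -/
open scoped Classical

namespace InducedArboricity

/-- The edges of the subgraph of `G` induced by vertex set `S`, viewed as edges of `G`. -/
def forestEdges {V : Type*} (G : SimpleGraph V) (S : Set V) : Set (Sym2 V) :=
  {e | e ∈ G.edgeSet ∧ ∀ x ∈ e, x ∈ S}

/-- The number of edges of the connected component of `v` in `H`. -/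
noncomputable def compEdgeCount {W : Type*} (H : SimpleGraph W) (v : W) : ℕ :=
  {e | e ∈ H.edgeSet ∧ ∀ x ∈ e, H.Reachable v x}.ncard

/-- `S` induces a `k`-strong forest in `G`: the induced subgraph is acyclic and each of its
connected components has at least `k` edges. -/
def IsStrongForest {V : Type*} (G : SimpleGraph V) (k : ℕ) (S : Set V) : Prop :=
  (G.induce S).IsAcyclic ∧ ∀ v : S, k ≤ compEdgeCount (G.induce S) v

/-- An edge `e` of `G` is `k`-valid if it lies in some `k`-strong forest of `G`. -/
def KValid {V : Type*} (G : SimpleGraph V) (k : ℕ) (e : Sym2 V) : Prop :=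
  ∃ S : Set V, IsStrongForest G k S ∧ e ∈ forestEdges G S

/-- The `k`-strong induced arboricity: the least number of `k`-strong forests of `G`
covering all `k`-valid edges of `G`. -/
noncomputable def fStrong {V : Type*} (G : SimpleGraph V) (k : ℕ) : ℕ :=
  sInf {N | ∃ F : Fin N → Set V,
    (∀ i, IsStrongForest G k (F i)) ∧
    ∀ e : Sym2 V, KValid G k e → ∃ i, e ∈ forestEdges G (F i)}

/-- `G` is a `d`-shallow minor of `H`. -/
def IsShallowMinor {V W : Type*} (d : ℕ) (G : SimpleGraph V) (H : SimpleGraph W) : Prop :=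
  ∃ B : V → Set W,
    Pairwise (Function.onFun Disjoint B) ∧
    (∀ v, ∃ c : B v, ∀ y : B v,
      (H.induce (B v)).Reachable c y ∧ (H.induce (B v)).dist c y ≤ d) ∧
    (∀ u v, G.Adj u v → ∃ x ∈ B u, ∃ y ∈ B v, H.Adj x y)

/-- A class of finite simple graphs, one set of graphs for each number of vertices. -/
def GraphClass : Type :=
  ∀ n : ℕ, Set (SimpleGraph (Fin n))

/-- A class of graphs has bounded expansion if for every `d` there is a constant `a` such that
every `d`-shallow minor of a member of the class has at most `a` times as many edges
as vertices. -/
def BoundedExpansion (C : GraphClass) : Prop :=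
  ∀ d : ℕ, ∃ a : ℕ, ∀ (m : ℕ) (G : SimpleGraph (Fin m)),
    (∃ n : ℕ, ∃ H ∈ C n, IsShallowMinor d G H) → G.edgeSet.ncard ≤ a * m

/-- A class of graphs is nowhere dense if for every `d` some graph is not a `d`-shallow minor
of any member of the class. -/
def NowhereDense (C : GraphClass) : Prop :=
  ∀ d : ℕ, ∃ (m : ℕ) (G : SimpleGraph (Fin m)), ¬ ∃ n : ℕ, ∃ H ∈ C n, IsShallowMinor d G H

/-- The closed neighborhood of `v` in `G`. -/
def closedNbr {V : Type*} (G : SimpleGraph V) (v : V) : Set V :=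
  insert v (G.neighborSet v)

/-- The sum of the labels over the closed neighborhood of `v`. -/
noncomputable def closedNbrSum {V : Type*} [Fintype V] (G : SimpleGraph V)
    (f : V → ℕ) (v : V) : ℕ :=
  ∑ x : V, if x ∈ closedNbr G v then f x else 0

/-- A labeling is distinguishing if adjacent vertices with different closed neighborhoods
receive different label sums over their closed neighborhoods. -/
def Distinguishing {V : Type*} [Fintype V] (G : SimpleGraph V) (f : V → ℕ) : Prop :=
  ∀ u v : V, G.Adj u v → closedNbr G u ≠ closedNbr G v →
    closedNbrSum G f u ≠ closedNbrSum G f v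

/-- The adjacent closed vertex-distinguishing number of `G`. -/
noncomputable def disNumber {V : Type*} [Fintype V] (G : SimpleGraph V) : ℕ :=
  sInf {L | 1 ≤ L ∧ ∃ f : V → ℕ, (∀ v, 1 ≤ f v ∧ f v ≤ L) ∧ Distinguishing G f}

/-- A proper coloring in which any two color classes together induce a forest. -/
def IsAcyclicColoring {V : Type*} (G : SimpleGraph V) {m : ℕ} (c : V → Fin m) : Prop :=
  (∀ u v : V, G.Adj u v → c u ≠ c v) ∧
  ∀ i j : Fin m, (G.induce {v | c v = i ∨ c v = j}).IsAcyclic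

/-- The acyclic chromatic number of `G`. -/
noncomputable def chiAcyc {V : Type*} (G : SimpleGraph V) : ℕ :=
  sInf {m | ∃ c : V → Fin m, IsAcyclicColoring G c}

/-- The edge arboricity of `G`: the least number of (not necessarily induced) forests
covering all edges of `G`. -/
noncomputable def arboricity {V : Type*} (G : SimpleGraph V) : ℕ :=
  sInf {N | ∃ F : Fin N → SimpleGraph V,
    (∀ i, F i ≤ G ∧ (F i).IsAcyclic) ∧
    ∀ e ∈ G.edgeSet, ∃ i, e ∈ (F i).edgeSet}

/-- `G` admits a tree decomposition of width at most `t`. -/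
def HasTreewidthAtMost {V : Type*} (G : SimpleGraph V) (t : ℕ) : Prop :=
  ∃ (ι : Type) (T : SimpleGraph ι) (B : ι → Finset V),
    T.IsTree ∧
    (∀ e ∈ G.edgeSet, ∃ i, ∀ x ∈ e, x ∈ B i) ∧
    (∀ v : V, (T.induce {i | v ∈ B i}).Connected) ∧
    (∀ i, (B i).card ≤ t + 1)

/-- The tree-width of `G`. -/
noncomputable def treewidth {V : Type*} (G : SimpleGraph V) : ℕ :=
  sInf {t | HasTreewidthAtMost G t}

/-- `G` has tree-depth at most `d`: there is a "forest order" on the vertices (the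
ancestor order of a rooted spanning forest) in which ancestor sets are chains of at most
`d` vertices and endpoints of edges of `G` are comparable.  Equivalently, every connected
component of `G` is a subgraph of the transitive closure of a rooted tree of depth `d`. -/
def HasTreedepthAtMost {V : Type*} (G : SimpleGraph V) (d : ℕ) : Prop :=
  ∃ le : V → V → Prop, IsPartialOrder V le ∧
    (∀ v : V, IsChain le {u | le u v}) ∧
    (∀ u v : V, G.Adj u v → le u v ∨ le v u) ∧
    (∀ v : V, {u | le u v}.ncard ≤ d)

/-- The tree-depth of `G`. -/
noncomputable def treedepth {V : Type*} (G : SimpleGraph V) : ℕ :=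
  sInf {d | HasTreedepthAtMost G d}

/-- `G` is a minor of `H`, witnessed by disjoint connected branch sets. -/
def IsMinorOf {V W : Type*} (G : SimpleGraph V) (H : SimpleGraph W) : Prop :=
  ∃ B : V → Set W,
    Pairwise (Function.onFun Disjoint B) ∧
    (∀ v, (B v).Nonempty) ∧
    (∀ v, (H.induce (B v)).Connected) ∧
    (∀ u v, G.Adj u v → ∃ x ∈ B u, ∃ y ∈ B v, H.Adj x y)

/-- A class of graphs closed under taking minors. -/
def MinorClosed (C : GraphClass) : Prop :=
  ∀ (m n : ℕ) (G : SimpleGraph (Fin m)) (H : SimpleGraph (Fin n)),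
    H ∈ C n → IsMinorOf G H → G ∈ C m

/-- Planarity, via Wagner's characterization: no `K₅` and no `K₃,₃` minor. -/
def IsPlanar {V : Type*} (G : SimpleGraph V) : Prop :=
  ¬ IsMinorOf (SimpleGraph.completeGraph (Fin 5)) G ∧
  ¬ IsMinorOf (completeBipartiteGraph (Fin 3) (Fin 3)) G

/-- Every edge of a finite graph is 1-valid. -/
theorem kValid_one_of_mem {V : Type} [Fintype V] (G : SimpleGraph V) (u v : V)
    (h : G.Adj u v) : KValid G 1 s(u, v) := by
  have hu : u ∈ ({u, v} : Set V) := by simp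
  have hv : v ∈ ({u, v} : Set V) := by simp
  have hadj : (G.induce {u, v}).Adj ⟨u, hu⟩ ⟨v, hv⟩ := h
  refine ⟨{u, v}, ⟨?_, ?_⟩, ?_⟩
  · apply SimpleGraph.IsAcyclic.of_card_le_two
    have h1 : ENat.card ({u, v} : Set V) = ({u, v} : Set V).encard := rfl
    rw [h1]
    rw [Set.encard_pair h.ne]
  · intro w
    unfold compEdgeCount
    rw [Nat.succ_le_iff, Set.ncard_pos (Set.toFinite _)]
    refine ⟨s(⟨u, hu⟩, ⟨v, hv⟩), hadj, ?_⟩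
    have key : (G.induce {u, v}).Reachable w ⟨u, hu⟩ ∧
        (G.induce {u, v}).Reachable w ⟨v, hv⟩ := by
      obtain ⟨w, hw⟩ := w
      rcases hw with rfl | hw
      · exact ⟨SimpleGraph.Reachable.refl _, hadj.reachable⟩
      · have hw' : w = v := hw
        subst hw'
        exact ⟨hadj.symm.reachable, SimpleGraph.Reachable.refl _⟩
    intro x hx
    rcases Sym2.mem_iff.1 hx with rfl | rfl
    · exact key.1
    · exact key.2
  · refine ⟨h, ?_⟩
    intro x hx
    rcases Sym2.mem_iff.1 hx with rfl | rfl
    · exact hu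
    · exact hv

/-- A vertex set inducing a forest has a labelling with three labels, using label `2` exactly
outside the set, which is proper inside the set. -/
theorem exists_label {V : Type} (G : SimpleGraph V) (S : Set V)
    (hS : (G.induce S).IsAcyclic) :
    ∃ c : V → Fin 3, (∀ v, v ∈ S ↔ c v ≠ 2) ∧
      ∀ u ∈ S, ∀ v ∈ S, G.Adj u v → c u ≠ c v := by
  obtain ⟨C⟩ := hS.colorable_two
  refine ⟨fun v => if h : v ∈ S then (C ⟨v, h⟩).castSucc else 2, ?_, ?_⟩
  · intro v
    by_cases h : v ∈ S
    · simp only [h, dif_pos, true_iff]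
      exact (Fin.castSucc_lt_last (C ⟨v, h⟩)).ne
    · simp [h]
  · intro u hu v hv huv
    simp only [hu, hv, dif_pos]
    intro heq
    have h1 : (G.induce S).Adj ⟨u, hu⟩ ⟨v, hv⟩ := huv
    exact C.valid h1 (Fin.castSucc_injective _ heq)

/-- The set defining `fStrong G 1` is nonempty. -/
theorem fStrong_set_nonempty {V : Type} [Fintype V] (G : SimpleGraph V) :
    {N | ∃ F : Fin N → Set V, (∀ i, IsStrongForest G 1 (F i)) ∧
      ∀ e : Sym2 V, KValid G 1 e → ∃ i, e ∈ forestEdges G (F i)}.Nonempty := by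
  obtain ⟨n, ⟨φ⟩⟩ := Finite.exists_equiv_fin {S : Set V // IsStrongForest G 1 S}
  refine ⟨n, fun i => (φ.symm i).1, fun i => (φ.symm i).2, ?_⟩
  rintro e ⟨S, hS, he⟩
  exact ⟨φ ⟨S, hS⟩, by simpa using he⟩

/-- For every finite simple graph `G` with at least one edge,
`χ_acyc(G) ≤ 3 ^ f₁(G)`, i.e. `log₃ χ_acyc(G) ≤ f₁(G)`. -/
theorem chiAcyc_le_three_pow_fStrong_one {V : Type} [Fintype V] (G : SimpleGraph V)
    (hE : G.edgeSet.Nonempty) :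
    chiAcyc G ≤ 3 ^ fStrong G 1 := by
  have hmem := Nat.sInf_mem (fStrong_set_nonempty G)
  unfold fStrong
  revert hmem
  generalize sInf {N | ∃ F : Fin N → Set V, (∀ i, IsStrongForest G 1 (F i)) ∧
      ∀ e : Sym2 V, KValid G 1 e → ∃ i, e ∈ forestEdges G (F i)} = N
  rintro ⟨F, hF, hcov⟩
  choose c hc2 hcp using fun i => exists_label G (F i) (hF i).1
  have cov : ∀ u v, G.Adj u v → ∃ i, u ∈ F i ∧ v ∈ F i := by
    intro u v huv
    obtain ⟨i, -, hi⟩ := hcov _ (kValid_one_of_mem G u v huv)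
    exact ⟨i, hi u (by simp), hi v (by simp)⟩
  let φ : (Fin N → Fin 3) ≃ Fin (3 ^ N) := finFunctionFinEquiv
  have proper : ∀ u v : V, G.Adj u v → φ (fun i => c i u) ≠ φ (fun i => c i v) := by
    intro u v huv heq
    obtain ⟨i, hu, hv⟩ := cov u v huv
    exact hcp i u hu v hv huv (congrFun (φ.injective heq) i)
  refine Nat.sInf_le ⟨fun v => φ (fun i => c i v), proper, ?_⟩
  intro a b
  by_cases hedge : ∃ u v, G.Adj u v ∧ (φ (fun i => c i u) = a ∨ φ (fun i => c i u) = b) ∧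
      (φ (fun i => c i v) = a ∨ φ (fun i => c i v) = b)
  · obtain ⟨u, v, huv, hu, hv⟩ := hedge
    obtain ⟨i, hui, hvi⟩ := cov u v huv
    have hne := proper u v huv
    have hsub : {w | φ (fun i => c i w) = a ∨ φ (fun i => c i w) = b} ⊆ F i := by
      intro w hw
      have hw' : φ (fun i => c i w) = φ (fun i => c i u) ∨
          φ (fun i => c i w) = φ (fun i => c i v) := by
        rcases hw with hw | hw <;> rcases hu with hu | hu <;> rcases hv with hv | hv <;>
          simp_all
      rw [hc2 i w]
      rcases hw' with h | h
      · rw [congrFun (φ.injective h) i]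
        exact (hc2 i u).1 hui
      · rw [congrFun (φ.injective h) i]
        exact (hc2 i v).1 hvi
    exact (hF i).1.embedding (SimpleGraph.induceHomOfLE G hsub)
  · have hbot : G.induce {w | φ (fun i => c i w) = a ∨ φ (fun i => c i w) = b} = ⊥ := by
      ext x y
      simp only [SimpleGraph.bot_adj, iff_false]
      intro hxy
      exact hedge ⟨x.1, y.1, hxy, x.2, y.2⟩
    rw [hbot]
    exact SimpleGraph.isAcyclic_bot
end InducedArboricity
end

section
/- For every integer k ≥ 1 there exists a finite simple graph G with tree-width tw(G) = 2 and f_k(G) ≥ k. -/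
open scoped Classical

namespace InducedArboricity

open SimpleGraph in
theorem acyclic_of_order {W : Type*} [LinearOrder W] (H : SimpleGraph W)
    (h : ∀ x y z, H.Adj x y → H.Adj x z → y < x → z < x → y = z) : H.IsAcyclic := by
  intro u w hw
  obtain ⟨x, hx, hmax⟩ := w.support.toFinset.exists_max_image id ⟨u, by simp⟩
  rw [List.mem_toFinset] at hx
  have hc := hw.rotate hx
  have hm : ∀ y ∈ (w.rotate x hx).support, y ≤ x := by
    intro y hy
    rw [Walk.mem_support_rotate_iff] at hy
    exact hmax y (by simpa using hy)
  have h1 := (w.rotate x hx).adj_snd hc.not_nil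
  have h2 := ((w.rotate x hx).adj_penultimate hc.not_nil).symm
  apply hc.snd_ne_penultimate
  refine h x _ _ h1 h2 (lt_of_le_of_ne (hm _ (Walk.getVert_mem_support _ _)) h1.ne')
    (lt_of_le_of_ne (hm _ (Walk.getVert_mem_support _ _)) h2.ne')

theorem acyclic_no_triangle {W : Type*} {H : SimpleGraph W} (h : H.IsAcyclic) {x y z : W}
    (h1 : H.Adj x y) (h2 : H.Adj y z) (h3 : H.Adj x z) : False := by
  have := h.path_unique ⟨.cons h1 (.cons h2 .nil), by simp [h1.ne, h2.ne, h3.ne]⟩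
    ⟨.cons h3 .nil, by simp [h3.ne]⟩
  have := congrArg (fun p : H.Path x z => p.1.length) this
  simp at this

theorem acyclic_no_square {W : Type*} {H : SimpleGraph W} (h : H.IsAcyclic) {x y z w : W}
    (h1 : H.Adj x y) (h2 : H.Adj y z) (h3 : H.Adj x w) (h4 : H.Adj w z) (hxz : x ≠ z) :
    y = w := by
  have := h.path_unique ⟨.cons h1 (.cons h2 .nil), by simp [h1.ne, h2.ne, hxz]⟩
    ⟨.cons h3 (.cons h4 .nil), by simp [h3.ne, h4.ne, hxz]⟩
  have := congrArg (fun p : H.Path x z => p.1.snd) this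
  simpa using this

open SimpleGraph in
theorem exists_walk_in {ι : Type*} {T : SimpleGraph ι} {S : Set ι} (h : (T.induce S).Connected)
    {i j : ι} (hi : i ∈ S) (hj : j ∈ S) : ∃ p : T.Walk i j, ∀ x ∈ p.support, x ∈ S := by
  obtain ⟨p⟩ := h.preconnected ⟨i, hi⟩ ⟨j, hj⟩
  refine ⟨p.map (Embedding.induce S).toHom, ?_⟩
  intro x hx
  have hx' := (Walk.support_map (Embedding.induce S).toHom p) ▸ hx
  obtain ⟨y, _, rfl⟩ := List.mem_map.1 hx'
  exact y.2

open SimpleGraph in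
theorem helly {ι : Type*} {T : SimpleGraph ι} (hT : T.IsAcyclic) {A B C : Set ι}
    (hA : (T.induce A).Connected) (hB : (T.induce B).Connected) (hC : (T.induce C).Connected)
    {i j l : ι} (hiA : i ∈ A) (hiB : i ∈ B) (hjB : j ∈ B) (hjC : j ∈ C) (hlA : l ∈ A)
    (hlC : l ∈ C) : ∃ x, x ∈ A ∧ x ∈ B ∧ x ∈ C := by
  by_cases hjA : j ∈ A
  · exact ⟨j, hjA, hjB, hjC⟩
  obtain ⟨p, hp⟩ := exists_walk_in hB hiB hjB
  obtain ⟨q, hq⟩ := exists_walk_in hA hiA hlA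
  obtain ⟨r, hr⟩ := exists_walk_in hC hlC hjC
  obtain ⟨d, hd, hd1, hd2⟩ := p.toPath.1.exists_boundary_dart A hiA hjA
  have hfB : d.fst ∈ B :=
    hp _ (p.support_bypass_subset_support (Walk.dart_fst_mem_support_of_mem_darts _ hd))
  have he : d.edge ∈ (q.append r).edges := by
    apply (q.append r).edges_toPath_subset_edges
    rw [← hT.path_unique p.toPath (q.append r).toPath]
    exact List.mem_map_of_mem hd
  rw [Walk.edges_append, List.mem_append] at he
  have hde : d.edge = s(d.fst, d.snd) := rfl
  rw [hde] at he
  rcases he with he | he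
  · exact absurd (hq _ (Walk.snd_mem_support_of_mem_edges _ he)) hd2
  · exact ⟨_, hd1, hfB, hr _ (Walk.fst_mem_support_of_mem_edges _ he)⟩

theorem two_le_of_triangle {V : Type*} {G : SimpleGraph V} {a b c : V} (hab : G.Adj a b)
    (hbc : G.Adj b c) (hac : G.Adj a c) {t : ℕ} (h : HasTreewidthAtMost G t) : 2 ≤ t := by
  obtain ⟨ι, T, B, hT, hE, hconn, hcard⟩ := h
  obtain ⟨i, hi⟩ := hE s(a, b) hab
  obtain ⟨j, hj⟩ := hE s(b, c) hbc
  obtain ⟨l, hl⟩ := hE s(a, c) hac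
  obtain ⟨x, ha, hb, hc⟩ := helly hT.isAcyclic (hconn a) (hconn b) (hconn c)
    (i := i) (j := j) (l := l) (hi a (by simp)) (hi b (by simp)) (hj b (by simp))
    (hj c (by simp)) (hl a (by simp)) (hl c (by simp))
  have h3 : ({a, b, c} : Finset V).card = 3 :=
    Finset.card_eq_three.2 ⟨a, b, c, hab.ne, hac.ne, hbc.ne, rfl⟩
  have : ({a, b, c} : Finset V).card ≤ (B x).card := by
    apply Finset.card_le_card
    intro y hy
    simp only [Finset.mem_insert, Finset.mem_singleton] at hy
    rcases hy with rfl | rfl | rfl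
    exacts [ha, hb, hc]
  have := hcard x
  omega

open SimpleGraph in
theorem tw_le_two {V : Type} [Fintype V] {G : SimpleGraph V} (K : Finset V) (hK : K.card ≤ 3)
    (D : V → Finset V) (hDK : ∀ x, D x ⊆ K) (hD : ∀ x, (D x).card ≤ 2)
    (hadj : ∀ x y, G.Adj x y → y ∉ K → x ∈ D y) : HasTreewidthAtMost G 2 := by
  refine ⟨Option V, starGraph none, fun o => o.elim K (fun x => insert x (D x)),
    isTree_starGraph _, ?_, ?_, ?_⟩
  · intro e
    induction e with | _ x y
    intro he
    rw [mem_edgeSet] at he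
    by_cases hy : y ∈ K
    · by_cases hx : x ∈ K
      · refine ⟨none, ?_⟩
        simp [hx, hy]
      · refine ⟨some x, ?_⟩
        simp [hadj y x he.symm hx]
    · refine ⟨some y, ?_⟩
      simp [hadj x y he hy]
  · intro x
    by_cases hx : x ∈ K
    · apply Connected.of_isUniversal (v := ⟨none, hx⟩)
      rintro ⟨y, hy⟩ hne
      simp only [comap_adj, Function.Embedding.subtype_apply]
      apply starGraph_center_adj
      intro h
      exact hne (Subtype.ext h)
    · have hs : ∀ o : {i : Option V | x ∈ (i.elim K (fun x => insert x (D x)) : Finset V)},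
          o = ⟨some x, by simp⟩ := by
        rintro ⟨o, ho⟩
        apply Subtype.ext
        cases o with
        | none => exact absurd ho hx
        | some y =>
          simp only [Set.mem_ofPred_eq, Option.elim, Finset.mem_insert] at ho
          rcases ho with rfl | ho
          · rfl
          · exact absurd (hDK _ ho) hx
      have : Nonempty {i : Option V | x ∈ (i.elim K (fun x => insert x (D x)) : Finset V)} :=
        ⟨⟨some x, by simp⟩⟩
      refine Connected.mk ?_
      intro u w
      rw [hs u, hs w]
  · rintro (_ | x)
    · exact hK
    · exact (Finset.card_insert_le _ _).trans (by have := hD x; omega)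

/-- Directed adjacency (from smaller to larger) of the witness graph: `0 = b`, `1 = c`, `2 = a`,
`3, …, k+1` are the middle vertices, `k+2 = v`, `k+3, …, 2k+2` are the leaves at `b`. -/
def R (k x y : ℕ) : Prop :=
  (x = 0 ∧ y = 1) ∨ (x = 0 ∧ y = 2) ∨ (x = 1 ∧ y = 2) ∨ (x = 1 ∧ 3 ≤ y ∧ y ≤ k + 1) ∨
    (3 ≤ x ∧ x ≤ k + 1 ∧ y = k + 2) ∨ (x = 0 ∧ k + 3 ≤ y)

/-- The witness graph. -/
def wG (k : ℕ) : SimpleGraph (Fin (2 * k + 3)) where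
  Adj x y := R k x y ∨ R k y x
  symm := ⟨fun _ _ h => h.symm⟩
  loopless := ⟨fun x h => by unfold R at h; omega⟩

theorem wG_adj {k : ℕ} {x y : Fin (2 * k + 3)} : (wG k).Adj x y ↔ R k x y ∨ R k y x := Iff.rfl

theorem wG_tw (k : ℕ) : treewidth (wG k) = 2 := by
  have hle : HasTreewidthAtMost (wG k) 2 := by
    refine tw_le_two (G := wG k) {⟨0, by omega⟩, ⟨1, by omega⟩, ⟨k + 2, by omega⟩}
      Finset.card_le_three
      (fun x => if x.1 = 2 then {⟨0, by omega⟩, ⟨1, by omega⟩} else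
        if x.1 ≤ k + 2 then {⟨1, by omega⟩, ⟨k + 2, by omega⟩} else {⟨0, by omega⟩}) ?_ ?_ ?_
    · intro x y
      split_ifs <;> simp <;> tauto
    · intro x
      split_ifs
      · exact Finset.card_le_two
      · exact Finset.card_le_two
      · simp
    · intro x y h hy
      rw [wG_adj] at h
      simp only [Finset.mem_insert, Finset.mem_singleton, Fin.ext_iff] at hy
      unfold R at h
      split_ifs <;> simp only [Finset.mem_insert, Finset.mem_singleton, Fin.ext_iff] <;> omega
  apply le_antisymm (Nat.sInf_le hle)
  have hab : (wG k).Adj ⟨0, by omega⟩ ⟨1, by omega⟩ := by simp [wG_adj, R]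
  have hbc : (wG k).Adj ⟨1, by omega⟩ ⟨2, by omega⟩ := by simp [wG_adj, R]
  have hac : (wG k).Adj ⟨0, by omega⟩ ⟨2, by omega⟩ := by simp [wG_adj, R]
  exact two_le_of_triangle hab hbc hac (Nat.sInf_mem (s := {t | HasTreewidthAtMost (wG k) t}) ⟨2, hle⟩)

open SimpleGraph in
/-- Sets containing `b` and all leaves, in which every other vertex has exactly one
smaller neighbour, are `k`-strong forests. -/
theorem strong_of {k : ℕ} (S : Set (Fin (2 * k + 3)))
    (hleaf : ∀ x : Fin (2 * k + 3), k + 3 ≤ x.1 → x ∈ S) (h0 : (⟨0, by omega⟩ : Fin (2 * k + 3)) ∈ S)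
    (huniq : ∀ x ∈ S, ∀ y ∈ S, ∀ z ∈ S, R k y x → R k z x → y = z)
    (hex : ∀ x ∈ S, x.1 ≠ 0 → ∃ y ∈ S, R k y x) : IsStrongForest (wG k) k S := by
  have hlt : ∀ x y, R k x y → x < y := by intro x y h; unfold R at h; omega
  refine ⟨acyclic_of_order _ ?_, ?_⟩
  · rintro ⟨x, hx⟩ ⟨y, hy⟩ ⟨z, hz⟩ hxy hxz hyx hzx
    simp only [comap_adj, Function.Embedding.subtype_apply, wG_adj] at hxy hxz
    have hyx' : y.1 < x.1 := hyx
    have hzx' : z.1 < x.1 := hzx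
    apply Subtype.ext
    apply huniq x hx y hy z hz
    · rcases hxy with h | h
      · have := hlt _ _ h; omega
      · exact h
    · rcases hxz with h | h
      · have := hlt _ _ h; omega
      · exact h
  · have hreach : ∀ n, ∀ x : S, x.1.1 = n → ((wG k).induce S).Reachable x ⟨⟨0, by omega⟩, h0⟩ := by
      intro n
      induction n using Nat.strong_induction_on with
      | _ n ih =>
        intro x hxn
        by_cases hx0 : x.1.1 = 0
        · have : x = ⟨⟨0, by omega⟩, h0⟩ := Subtype.ext (Fin.ext hx0)
          rw [this]
        · obtain ⟨y, hy, hyx⟩ := hex x.1 x.2 hx0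
          have h1 : ((wG k).induce S).Adj x ⟨y, hy⟩ := Or.inr hyx
          exact h1.reachable.trans (ih y.1 (by have := hlt _ _ hyx; omega) ⟨y, hy⟩ rfl)
    intro v
    let f : Fin k → Sym2 S := fun j =>
      s(⟨⟨0, by omega⟩, h0⟩, ⟨⟨k + 3 + j.1, by omega⟩, hleaf _ (by simp)⟩)
    have hf : Function.Injective f := by
      intro i j hij
      simp only [f, Sym2.eq_iff, Subtype.mk.injEq, Fin.mk.injEq] at hij
      apply Fin.ext
      omega
    have hr : (Set.range f).ncard = k := by
      rw [Set.ncard_range_of_injective hf]; simp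
    unfold compEdgeCount
    conv_lhs => rw [← hr]
    apply Set.ncard_le_ncard _ (Set.toFinite _)
    rintro _ ⟨j, rfl⟩
    refine ⟨?_, ?_⟩
    · change (wG k).Adj _ _
      simp [wG_adj, R]
    · intro x _
      exact (hreach _ v rfl).trans (hreach _ x rfl).symm

theorem valid_ab (k : ℕ) : KValid (wG k) k s(⟨0, by omega⟩, ⟨2, by omega⟩) := by
  refine ⟨{x | x.1 = 0 ∨ x.1 = 2 ∨ k + 3 ≤ x.1}, strong_of _ ?_ ?_ ?_ ?_, ?_⟩
  · intro x hx; right; right; exact hx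
  · left; rfl
  · intro x hx y hy z hz h1 h2
    simp only [Set.mem_ofPred_eq] at hx hy hz
    unfold R at h1 h2
    apply Fin.ext
    omega
  · intro x hx h
    refine ⟨⟨0, by omega⟩, by simp, ?_⟩
    simp only [Set.mem_ofPred_eq] at hx
    change R k 0 x.1
    unfold R
    omega
  · refine ⟨?_, ?_⟩
    · change (wG k).Adj _ _
      simp [wG_adj, R]
    · intro x hx
      rw [Sym2.mem_iff] at hx
      rcases hx with rfl | rfl <;> simp

theorem valid_p (k i : ℕ) (hi3 : 3 ≤ i) (hi : i ≤ k + 1) :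
    KValid (wG k) k s(⟨i, by omega⟩, ⟨k + 2, by omega⟩) := by
  refine ⟨{x | x.1 = 0 ∨ x.1 = 1 ∨ x.1 = i ∨ k + 2 ≤ x.1}, strong_of _ ?_ ?_ ?_ ?_, ?_⟩
  · intro x hx
    simp only [Set.mem_ofPred_eq]
    omega
  · left; rfl
  · intro x hx y hy z hz h1 h2
    simp only [Set.mem_ofPred_eq] at hx hy hz
    unfold R at h1 h2
    apply Fin.ext
    omega
  · intro x hx h
    simp only [Set.mem_ofPred_eq] at hx
    by_cases hxi : x.1 = i
    · refine ⟨⟨1, by omega⟩, by simp, ?_⟩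
      change R k 1 x.1
      unfold R
      omega
    by_cases hxv : x.1 = k + 2
    · refine ⟨⟨i, by omega⟩, by simp, ?_⟩
      change R k i x.1
      unfold R
      omega
    refine ⟨⟨0, by omega⟩, by simp, ?_⟩
    change R k 0 x.1
    unfold R
    omega
  · refine ⟨?_, ?_⟩
    · change (wG k).Adj _ _
      simp [wG_adj, R, hi, hi3]
    · intro x hx
      rw [Sym2.mem_iff] at hx
      rcases hx with rfl | rfl <;> simp

open SimpleGraph in
/-- A `k`-strong forest containing `v` contains `c`. -/
theorem c_mem {k : ℕ} (hk : 1 ≤ k) {S : Set (Fin (2 * k + 3))} (hS : IsStrongForest (wG k) k S)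
    (hv : (⟨k + 2, by omega⟩ : Fin (2 * k + 3)) ∈ S) :
    (⟨1, by omega⟩ : Fin (2 * k + 3)) ∈ S := by
  by_contra hc
  have hcount := hS.2 ⟨_, hv⟩
  have hne1 : ∀ x : S, x.1.1 ≠ 1 := by
    intro x hx
    apply hc
    have : (⟨1, by omega⟩ : Fin (2 * k + 3)) = x.1 := Fin.ext hx.symm
    rw [this]
    exact x.2
  have hreach : ∀ x : S, ((wG k).induce S).Reachable ⟨_, hv⟩ x → 3 ≤ x.1.1 ∧ x.1.1 ≤ k + 2 := by
    intro x hx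
    by_contra hcon
    obtain ⟨p⟩ := hx
    obtain ⟨d, _, h1, h2⟩ := p.exists_boundary_dart {x : S | 3 ≤ x.1.1 ∧ x.1.1 ≤ k + 2}
      (by simp; omega) hcon
    have hadj : R k d.fst.1 d.snd.1 ∨ R k d.snd.1 d.fst.1 := d.adj
    have := hne1 d.snd
    simp only [Set.mem_ofPred_eq] at h1 h2
    unfold R at hadj
    omega
  let g : Fin (2 * k + 3) → Sym2 (Fin (2 * k + 3)) := fun x => s(x, ⟨k + 2, by omega⟩)
  have hle : compEdgeCount ((wG k).induce S) ⟨_, hv⟩ ≤ k - 1 := by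
    unfold compEdgeCount
    rw [← Set.ncard_image_of_injective _ (Sym2.map.injective Subtype.val_injective)]
    have hsub : Sym2.map Subtype.val '' {e | e ∈ ((wG k).induce S).edgeSet ∧
        ∀ x ∈ e, ((wG k).induce S).Reachable ⟨_, hv⟩ x} ⊆
        Set.range (fun j : Fin (k - 1) => g ⟨3 + j.1, by omega⟩) := by
      rintro _ ⟨e, ⟨he, hr⟩, rfl⟩
      induction e with | _ x y
      have hx := hreach x (hr x (by simp))
      have hy := hreach y (hr y (by simp))
      have hadj : R k x.1 y.1 ∨ R k y.1 x.1 := he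
      unfold R at hadj
      have : (3 ≤ x.1.1 ∧ x.1.1 ≤ k + 1 ∧ y.1.1 = k + 2) ∨
        (3 ≤ y.1.1 ∧ y.1.1 ≤ k + 1 ∧ x.1.1 = k + 2) := by omega
      rcases this with ⟨h1, h2, h3⟩ | ⟨h1, h2, h3⟩
      · refine ⟨⟨x.1.1 - 3, by omega⟩, ?_⟩
        simp only [g, Sym2.map_mk, Sym2.eq_iff, Fin.ext_iff]
        left; omega
      · refine ⟨⟨y.1.1 - 3, by omega⟩, ?_⟩
        simp only [g, Sym2.map_mk, Sym2.eq_iff, Fin.ext_iff]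
        right; omega
    refine (Set.ncard_le_ncard hsub (Set.toFinite _)).trans ?_
    rw [← Set.image_univ]
    refine (Set.ncard_image_le (Set.toFinite _)).trans ?_
    simp
  omega

theorem wG_bound {k : ℕ} (hk : 1 ≤ k) {N : ℕ} (F : Fin N → Set (Fin (2 * k + 3)))
    (hF : ∀ i, IsStrongForest (wG k) k (F i))
    (hcov : ∀ e, KValid (wG k) k e → ∃ i, e ∈ forestEdges (wG k) (F i)) : k ≤ N := by
  have hp : ∀ j : Fin (k - 1), ∃ i, (⟨1, by omega⟩ : Fin (2 * k + 3)) ∈ F i ∧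
      (⟨3 + j.1, by omega⟩ : Fin (2 * k + 3)) ∈ F i ∧
      (⟨k + 2, by omega⟩ : Fin (2 * k + 3)) ∈ F i := by
    intro j
    obtain ⟨i, hi⟩ := hcov _ (valid_p k (3 + j.1) (by omega) (by omega))
    have hv := hi.2 ⟨k + 2, by omega⟩ (by simp)
    exact ⟨i, c_mem hk (hF i) hv, hi.2 _ (by simp), hv⟩
  choose g hg1 hg2 hg3 using hp
  obtain ⟨i0, hi0⟩ := hcov _ (valid_ab k)
  have hinj : Function.Injective (fun o : Option (Fin (k - 1)) => o.elim i0 g) := by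
    have hno : ∀ j, g j ≠ i0 := by
      intro j hj
      have h1 := hg1 j
      rw [hj] at h1
      have h0 := hi0.2 ⟨0, by omega⟩ (by simp)
      have h2 := hi0.2 ⟨2, by omega⟩ (by simp)
      refine acyclic_no_triangle (hF i0).1 (x := ⟨_, h0⟩) (y := ⟨_, h1⟩) (z := ⟨_, h2⟩) ?_ ?_ ?_
      all_goals
        change (wG k).Adj _ _
        simp [wG_adj, R]
    rintro (_ | i) (_ | j) h
    · rfl
    · exact absurd h.symm (hno j)
    · exact absurd h (hno i)
    · have h' : g i = g j := h
      have h2 := hg2 i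
      rw [h'] at h2
      have := acyclic_no_square (hF (g j)).1 (x := ⟨_, hg1 j⟩) (y := ⟨_, h2⟩) (z := ⟨_, hg3 j⟩)
        (w := ⟨_, hg2 j⟩) (by change R k 1 (3 + i.1) ∨ R k (3 + i.1) 1; unfold R; omega)
        (by change R k (3 + i.1) (k + 2) ∨ R k (k + 2) (3 + i.1); unfold R; omega)
        (by change R k 1 (3 + j.1) ∨ R k (3 + j.1) 1; unfold R; omega)
        (by change R k (3 + j.1) (k + 2) ∨ R k (k + 2) (3 + j.1); unfold R; omega)
        (by simp)
      simp only [Subtype.mk.injEq, Fin.mk.injEq] at this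
      congr 1
      apply Fin.ext
      omega
  have := Fintype.card_le_of_injective _ hinj
  simp at this
  omega

theorem cover_nonempty {m : ℕ} (G : SimpleGraph (Fin m)) (k : ℕ) :
    {N | ∃ F : Fin N → Set (Fin m), (∀ i, IsStrongForest G k (F i)) ∧
      ∀ e, KValid G k e → ∃ i, e ∈ forestEdges G (F i)}.Nonempty := by
  let A := {S : Set (Fin m) // IsStrongForest G k S}
  let φ := Fintype.equivFin A
  refine ⟨Fintype.card A, fun i => (φ.symm i).1, fun i => (φ.symm i).2, ?_⟩
  rintro e ⟨S, hS, he⟩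
  exact ⟨φ ⟨S, hS⟩, by simpa using he⟩

/-- For every integer `k ≥ 1` there is a finite simple graph `G` with
tree-width `2` and `f_k(G) ≥ k`. -/
theorem exists_treewidth_two_fStrong_ge (k : ℕ) (hk : 1 ≤ k) :
    ∃ (m : ℕ) (G : SimpleGraph (Fin m)), treewidth G = 2 ∧ k ≤ fStrong G k := by
  refine ⟨2 * k + 3, wG k, wG_tw k, ?_⟩
  obtain ⟨F, hF, hcov⟩ := Nat.sInf_mem (cover_nonempty (wG k) k)
  exact wG_bound hk F hF hcov
end InducedArboricity
end

section
/- For every integer k ≥ 1 there exists a finite simple graph G with tree-depth td(G) = 3 and f_k(G) ≥ k − 1. -/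
open scoped Classical

namespace InducedArboricity

/-- Root `0`, star center `1`, star leaves `2..k`, pendant vertices `k+1..2k` at the root. -/
def hardRel (k a b : ℕ) : Prop :=
  (a = 0 ∧ 2 ≤ b) ∨ (a = 1 ∧ 2 ≤ b ∧ b ≤ k)

/-- The graph witnessing the lower bound. -/
def hardGraph (k : ℕ) : SimpleGraph (Fin (2 * k + 1)) where
  Adj u v := hardRel k u.val v.val ∨ hardRel k v.val u.val
  symm := ⟨fun _ _ h => h.symm⟩
  loopless := ⟨fun v h => by unfold hardRel at h; omega⟩

theorem hardGraph_adj (k : ℕ) (u v : Fin (2 * k + 1)) :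
    (hardGraph k).Adj u v ↔ hardRel k u.val v.val ∨ hardRel k v.val u.val := Iff.rfl

theorem hard_td_le (k : ℕ) (hk : 2 ≤ k) : HasTreedepthAtMost (hardGraph k) 3 := by
  refine ⟨fun u v => u = v ∨ (u.val < v.val ∧ u.val ≤ 1), ?_, ?_, ?_, ?_⟩
  · exact
      { refl := fun a => Or.inl rfl
        trans := fun a b c h1 h2 => by
          simp only [Fin.ext_iff] at *; omega
        antisymm := fun a b h1 h2 => by
          simp only [Fin.ext_iff] at *; omega }
  · intro v a ha b hb hab
    simp only [Set.mem_ofPred_eq, Fin.ext_iff, ne_eq] at *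
    omega
  · intro u v h
    rw [hardGraph_adj] at h
    unfold hardRel at h
    simp only [Fin.ext_iff]
    omega
  · intro v
    have hsub : {u : Fin (2 * k + 1) | u = v ∨ (u.val < v.val ∧ u.val ≤ 1)} ⊆
        (({⟨0, by omega⟩, ⟨1, by omega⟩, v} : Finset (Fin (2 * k + 1))) : Set _) := by
      intro u hu
      simp only [Set.mem_ofPred_eq, Finset.coe_insert, Finset.coe_singleton,
        Set.mem_insert_iff, Set.mem_singleton_iff, Fin.ext_iff] at *
      omega
    refine (Set.ncard_le_ncard hsub (Finset.finite_toSet _)).trans ?_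
    rw [Set.ncard_coe_finset]
    exact Finset.card_le_three

theorem three_le_ncard {V : Type*} [Finite V] (s : Set V) {a b c : V} (ha : a ∈ s) (hb : b ∈ s)
    (hc : c ∈ s) (hab : a ≠ b) (hac : a ≠ c) (hbc : b ≠ c) : 3 ≤ s.ncard := by
  have : ({a, b, c} : Set V) ⊆ s := by
    rintro x (rfl | rfl | rfl) <;> assumption
  have h3 : ({a, b, c} : Set V).ncard = 3 := Set.ncard_eq_three.2 ⟨a, b, c, hab, hac, hbc, rfl⟩
  rw [← h3]
  exact Set.ncard_le_ncard this (Set.toFinite _)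

theorem three_le_of_path {V : Type*} [Finite V] (G : SimpleGraph V) {p r l c : V}
    (hpr : G.Adj p r) (hrl : G.Adj r l) (hlc : G.Adj l c) (hpl : p ≠ l) (hrc : r ≠ c)
    {d : ℕ} (h : HasTreedepthAtMost G d) : 3 ≤ d := by
  obtain ⟨le, hpo, -, hcomp, hcard⟩ := h
  have hrefl : ∀ x, le x x := hpo.refl
  have htr : ∀ x y z, le x y → le y z → le x z := hpo.trans
  have key : ∀ x y z w, x ≠ y → x ≠ z → y ≠ z → le x w → le y w → le z w → 3 ≤ d :=
    fun x y z w h1 h2 h3 hx hy hz =>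
      (three_le_ncard {u | le u w} hx hy hz h1 h2 h3).trans (hcard w)
  rcases hcomp _ _ hrl with h1 | h1
  · rcases hcomp _ _ hlc with h2 | h2
    · exact key r l c c hrl.ne hrc hlc.ne (htr _ _ _ h1 h2) h2 (hrefl c)
    · exact key r l c l hrl.ne hrc hlc.ne h1 (hrefl l) h2
  · rcases hcomp _ _ hpr with h2 | h2
    · exact key p r l r hpr.ne hpl hrl.ne h2 (hrefl r) h1
    · exact key p r l p hpr.ne hpl hrl.ne (hrefl p) h2 (htr _ _ _ h1 h2)

theorem hard_td (k : ℕ) (hk : 2 ≤ k) : treedepth (hardGraph k) = 3 := by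
  apply le_antisymm
  · exact Nat.sInf_le (hard_td_le k hk)
  · refine le_csInf ⟨3, hard_td_le k hk⟩ fun d hd => ?_
    refine three_le_of_path (hardGraph k) (p := ⟨2 * k, by omega⟩) (r := ⟨0, by omega⟩)
      (l := ⟨2, by omega⟩) (c := ⟨1, by omega⟩) ?_ ?_ ?_ ?_ ?_ hd
    all_goals simp only [hardGraph_adj, hardRel, ne_eq, Fin.ext_iff]; grind

theorem reach_invariant {V : Type*} (H : SimpleGraph V) (P : V → Prop)
    (hP : ∀ a b, H.Adj a b → (P a ↔ P b)) {a b : V} (h : H.Reachable a b) : P a ↔ P b := by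
  obtain ⟨w⟩ := h
  induction w with
  | nil => exact Iff.rfl
  | cons hadj _ ih => exact (hP _ _ hadj).trans ih

/-- The vertex set of the tree through the leaf `i`. -/
def hardTree (k i : ℕ) : Set (Fin (2 * k + 1)) :=
  {v | v.val ≤ 1 ∨ v.val = i ∨ k < v.val}

theorem hardTree_bridge (k i : ℕ) (hi : 2 ≤ i) (hik : i ≤ k)
    (u v : hardTree k i) (h : hardRel k u.1.val v.1.val) :
    ((hardGraph k).induce (hardTree k i)).IsBridge s(u, v) := by
  rw [SimpleGraph.isBridge_iff]
  intro hr
  have hu := u.2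
  have hv := v.2
  simp only [hardTree, Set.mem_ofPred_eq] at hu hv
  unfold hardRel at h
  -- the side of the edge away from the root
  let P : hardTree k i → Prop := fun x =>
    if u.1.val = 1 then x.1.val = 1
    else if v.1.val = i then x.1.val = 1 ∨ x.1.val = i
    else x.1.val = v.1.val
  have hP := reach_invariant _ P (fun a b hab => by
    rw [SimpleGraph.deleteEdges_adj] at hab
    obtain ⟨hab, hne⟩ := hab
    have ha := a.2
    have hb := b.2
    simp only [hardTree, Set.mem_ofPred_eq] at ha hb
    simp only [SimpleGraph.comap_adj, Function.Embedding.subtype_apply, hardGraph_adj,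
      hardRel] at hab
    simp only [Set.mem_singleton_iff, Sym2.eq_iff, Subtype.ext_iff, Fin.ext_iff] at hne
    simp only [P]
    split_ifs <;> grind) hr
  simp only [P] at hP
  split_ifs at hP <;> grind

theorem hardTree_reach (k i : ℕ) (hi : 2 ≤ i) (hik : i ≤ k) (v : hardTree k i) :
    ((hardGraph k).induce (hardTree k i)).Reachable v
      ⟨⟨0, by omega⟩, Or.inl (Nat.zero_le 1)⟩ := by
  have hv := v.2
  simp only [hardTree, Set.mem_ofPred_eq] at hv
  have step : ∀ w : hardTree k i, 2 ≤ w.1.val →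
      ((hardGraph k).induce (hardTree k i)).Reachable w
      ⟨⟨0, by omega⟩, Or.inl (Nat.zero_le 1)⟩ := fun w hw => by
    apply SimpleGraph.Adj.reachable
    simp only [SimpleGraph.comap_adj, Function.Embedding.subtype_apply, hardGraph_adj, hardRel]
    grind
  by_cases h2 : 2 ≤ v.1.val
  · exact step v h2
  by_cases h0 : v.1.val = 0
  · have : v = ⟨⟨0, by omega⟩, Or.inl (Nat.zero_le 1)⟩ := by
      simp only [Subtype.ext_iff, Fin.ext_iff]; exact h0
    rw [← this]
  · refine SimpleGraph.Reachable.trans ?_ (step ⟨⟨i, by omega⟩, Or.inr (Or.inl rfl)⟩ hi)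
    apply SimpleGraph.Adj.reachable
    simp only [SimpleGraph.comap_adj, Function.Embedding.subtype_apply, hardGraph_adj, hardRel]
    grind

theorem hardTree_strong (k i : ℕ) (hi : 2 ≤ i) (hik : i ≤ k) :
    IsStrongForest (hardGraph k) k (hardTree k i) := by
  refine ⟨?_, fun v => ?_⟩
  · rw [SimpleGraph.isAcyclic_iff_forall_adj_isBridge]
    intro u v h
    rcases h with h | h
    · exact hardTree_bridge k i hi hik u v h
    · rw [Sym2.eq_swap]
      exact hardTree_bridge k i hi hik v u h
  · let z : hardTree k i := ⟨⟨0, by omega⟩, Or.inl (Nat.zero_le 1)⟩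
    let f : Fin k → Sym2 (hardTree k i) := fun j =>
      s(z, ⟨⟨k + 1 + j.val, by omega⟩, Or.inr (Or.inr (by simp only; omega))⟩)
    have hf : Function.Injective f := by
      intro a b hab
      simp only [f, z, Sym2.eq_iff, Subtype.ext_iff, Fin.ext_iff] at hab
      simp only [Fin.ext_iff]
      omega
    have hk : (Set.range f).ncard = k := by
      rw [← Set.image_univ, Set.ncard_image_of_injective _ hf, Set.ncard_univ, Nat.card_fin]
    unfold compEdgeCount
    refine hk.symm.le.trans ?_
    refine Set.ncard_le_ncard ?_ (Set.toFinite _)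
    rintro _ ⟨j, rfl⟩
    refine ⟨?_, fun x _ => (hardTree_reach k i hi hik v).trans
      (hardTree_reach k i hi hik x).symm⟩
    simp only [f, z, SimpleGraph.mem_edgeSet, SimpleGraph.comap_adj,
      Function.Embedding.subtype_apply, hardGraph_adj, hardRel]
    grind

theorem zero_mem_of_strong (k : ℕ) (hk : 2 ≤ k) (S : Set (Fin (2 * k + 1)))
    (hS : IsStrongForest (hardGraph k) k S) (h1 : (⟨1, by omega⟩ : Fin (2 * k + 1)) ∈ S) :
    (⟨0, by omega⟩ : Fin (2 * k + 1)) ∈ S := by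
  by_contra h0
  have hc := hS.2 ⟨_, h1⟩
  unfold compEdgeCount at hc
  set c : S := ⟨⟨1, by omega⟩, h1⟩ with hcdef
  -- every edge joins the center to a star leaf
  let f : ℕ → Sym2 S := fun n =>
    if h : ∃ hn : n < 2 * k + 1, (⟨n, hn⟩ : Fin (2 * k + 1)) ∈ S then
      s(c, ⟨⟨n, h.1⟩, h.2⟩) else s(c, c)
  have hmain : ∀ u v : S, hardRel k u.1.val v.1.val → ∃ n ∈ Finset.Icc 2 k, f n = s(u, v) := by
    intro u v h
    have hu0 : u.1.val ≠ 0 := fun h' => h0 (by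
      have : u.1 = ⟨0, by omega⟩ := Fin.ext h'
      rw [← this]; exact u.2)
    unfold hardRel at h
    have huc : u = c := by
      simp only [hcdef, Subtype.ext_iff, Fin.ext_iff]; grind
    refine ⟨v.1.val, by rw [Finset.mem_Icc]; omega, ?_⟩
    have hex : ∃ hn : v.1.val < 2 * k + 1, (⟨v.1.val, hn⟩ : Fin (2 * k + 1)) ∈ S :=
      ⟨v.1.2, v.2⟩
    simp only [f, dif_pos hex, huc]
  have hsub : {e | e ∈ ((hardGraph k).induce S).edgeSet ∧
      ∀ x ∈ e, ((hardGraph k).induce S).Reachable c x} ⊆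
      (((Finset.Icc 2 k).image f : Finset (Sym2 S)) : Set (Sym2 S)) := by
    rintro e ⟨he, -⟩
    rw [Finset.mem_coe, Finset.mem_image]
    induction e using Sym2.ind with
    | _ u v =>
      rw [SimpleGraph.mem_edgeSet] at he
      rcases he with h | h
      · exact hmain u v h
      · rw [Sym2.eq_swap]
        exact hmain v u h
  have hle := Set.ncard_le_ncard hsub (Finset.finite_toSet _)
  rw [Set.ncard_coe_finset] at hle
  have h3 := Finset.card_image_le (s := Finset.Icc 2 k) (f := f)
  rw [Nat.card_Icc] at h3
  omega

theorem no_square {V : Type*} (H : SimpleGraph V) (hH : H.IsAcyclic) {z c a b : V}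
    (h1 : H.Adj z a) (h2 : H.Adj a c) (h3 : H.Adj z b) (h4 : H.Adj b c) (hzc : z ≠ c) :
    a = b := by
  have hp : (SimpleGraph.Walk.cons h1 (SimpleGraph.Walk.cons h2 .nil)).IsPath := by
    simp [SimpleGraph.Walk.cons_isPath_iff, h1.ne, h2.ne, hzc]
  have hq : (SimpleGraph.Walk.cons h3 (SimpleGraph.Walk.cons h4 .nil)).IsPath := by
    simp [SimpleGraph.Walk.cons_isPath_iff, h3.ne, h4.ne, hzc]
  have h : (⟨_, hp⟩ : H.Path z c) = ⟨_, hq⟩ := (hH.subsingleton_path z c).elim _ _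
  have h' := congrArg (fun w : H.Path z c => w.1.support) h
  simpa using h'

theorem leaf_unique (k : ℕ) (hk : 2 ≤ k) (S : Set (Fin (2 * k + 1)))
    (hS : IsStrongForest (hardGraph k) k S) (h1 : (⟨1, by omega⟩ : Fin (2 * k + 1)) ∈ S)
    (a b : Fin (2 * k + 1)) (ha : a ∈ S) (hb : b ∈ S) (ha2 : 2 ≤ a.val) (hak : a.val ≤ k)
    (hb2 : 2 ≤ b.val) (hbk : b.val ≤ k) : a = b := by
  have h0 := zero_mem_of_strong k hk S hS h1
  have h := no_square _ hS.1 (z := ⟨_, h0⟩) (c := ⟨_, h1⟩) (a := ⟨a, ha⟩) (b := ⟨b, hb⟩)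
    (by simp only [SimpleGraph.comap_adj, Function.Embedding.subtype_apply, hardGraph_adj,
          hardRel]; grind)
    (by simp only [SimpleGraph.comap_adj, Function.Embedding.subtype_apply, hardGraph_adj,
          hardRel]; grind)
    (by simp only [SimpleGraph.comap_adj, Function.Embedding.subtype_apply, hardGraph_adj,
          hardRel]; grind)
    (by simp only [SimpleGraph.comap_adj, Function.Embedding.subtype_apply, hardGraph_adj,
          hardRel]; grind)
    (by simp)
  exact congrArg Subtype.val h

theorem fStrong_spec {V : Type*} [Finite V] (G : SimpleGraph V) (k : ℕ) :
    ∃ F : Fin (fStrong G k) → Set V, (∀ i, IsStrongForest G k (F i)) ∧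
      ∀ e : Sym2 V, KValid G k e → ∃ i, e ∈ forestEdges G (F i) := by
  refine Nat.sInf_mem (s := {N | ∃ F : Fin N → Set V,
    (∀ i, IsStrongForest G k (F i)) ∧
    ∀ e : Sym2 V, KValid G k e → ∃ i, e ∈ forestEdges G (F i)}) ?_
  let T := {S : Set V // IsStrongForest G k S}
  refine ⟨Nat.card T, fun i => ((Finite.equivFin T).symm i).1,
    fun i => ((Finite.equivFin T).symm i).2, ?_⟩
  rintro e ⟨S, hS, he⟩
  exact ⟨Finite.equivFin T ⟨S, hS⟩, by simpa using he⟩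

theorem hard_fStrong (k : ℕ) (hk : 2 ≤ k) : k - 1 ≤ fStrong (hardGraph k) k := by
  obtain ⟨F, hF, hcov⟩ := fStrong_spec (hardGraph k) k
  let c : Fin (2 * k + 1) := ⟨1, by omega⟩
  let l : Fin (k - 1) → Fin (2 * k + 1) := fun j => ⟨j.val + 2, by omega⟩
  have hex : ∀ j : Fin (k - 1), ∃ i, s(c, l j) ∈ forestEdges (hardGraph k) (F i) := by
    intro j
    refine hcov _ ⟨hardTree k (j.val + 2), hardTree_strong k _ (by omega) (by omega), ?_, ?_⟩
    · simp only [SimpleGraph.mem_edgeSet, hardGraph_adj, hardRel, c, l]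
      grind
    · intro x hx
      rw [Sym2.mem_iff] at hx
      rcases hx with rfl | rfl
      · exact Or.inl le_rfl
      · exact Or.inr (Or.inl rfl)
  choose g hg using hex
  have hinj : Function.Injective g := by
    intro a b hab
    have hA := (hg a).2
    have hB := (hg b).2
    rw [← hab] at hB
    have := leaf_unique k hk (F (g a)) (hF _) (hA c (Sym2.mem_mk_left _ _)) (l a) (l b)
      (hA _ (Sym2.mem_mk_right _ _)) (hB _ (Sym2.mem_mk_right _ _))
      (by simp only [l]; omega) (by simp only [l]; omega)
      (by simp only [l]; omega) (by simp only [l]; omega)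
    simp only [l, Fin.ext_iff] at this
    exact Fin.ext (by omega)
  simpa using Fintype.card_le_of_injective g hinj

/-- For every integer `k ≥ 1` there is a finite simple graph `G` with
tree-depth `3` and `f_k(G) ≥ k - 1`. -/
theorem exists_treedepth_three_fStrong_ge (k : ℕ) (hk : 1 ≤ k) :
    ∃ (m : ℕ) (G : SimpleGraph (Fin m)), treedepth G = 3 ∧ k - 1 ≤ fStrong G k := by
  rcases Nat.lt_or_ge k 2 with h | h
  · exact ⟨_, hardGraph 2, hard_td 2 le_rfl, by omega⟩
  · exact ⟨_, hardGraph k, hard_td k h, hard_fStrong k h⟩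

end InducedArboricity
end

section
/- For every finite simple graph G of tree-width t ≥ 2, the 2-strong induced arboricity satisfies f_2(G) ≤ 3·C(t+1, 3), where C(t+1,3) is the binomial coefficient (t+1 choose 3). -/
open scoped Classical

namespace InducedArboricity

/-- A tree decomposition with bags of size at most `n`, where vertices may be uncovered. -/
def IsTD {V ι : Type} (G : SimpleGraph V) (T : SimpleGraph ι) (B : ι → Finset V) (n : ℕ) : Prop :=
  T.IsTree ∧ (∀ x y, G.Adj x y → ∃ i, x ∈ B i ∧ y ∈ B i) ∧
    (∀ v : V, (T.induce {i | v ∈ B i}).Preconnected) ∧ ∀ i, (B i).card ≤ n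

lemma exists_path_in {ι : Type} (T : SimpleGraph ι) (s : Set ι) (h : (T.induce s).Preconnected)
    {i j : ι} (hi : i ∈ s) (hj : j ∈ s) :
    ∃ p : T.Walk i j, p.IsPath ∧ ∀ x ∈ p.support, x ∈ s := by
  have key : ∀ a b : s, ∃ p : T.Walk a.1 b.1, p.IsPath ∧ ∀ x ∈ p.support, x ∈ s := by
    intro a b
    obtain ⟨q, hq⟩ := (h a b).exists_isPath
    let f : T.induce s →g T := ⟨Subtype.val, fun h => h⟩
    have hf : Function.Injective f := Subtype.val_injective
    refine ⟨q.map f, SimpleGraph.Walk.IsPath.map hf hq, ?_⟩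
    intro x hx
    have hx' : x ∈ q.support.map f := by
      rw [← SimpleGraph.Walk.support_map]
      exact hx
    rw [List.mem_map] at hx'
    obtain ⟨y, _, rfl⟩ := hx'
    exact y.2
  exact key ⟨i, hi⟩ ⟨j, hj⟩

/-- Prepending a path inside `s` to a geodesic from the node of `s` closest to the root. -/
lemma exists_path_via_top {ι : Type} (T : SimpleGraph ι) (hT : T.Connected) (s : Set ι)
    (h : (T.induce s).Preconnected) (r : ι) {i j : ι} (hi : i ∈ s) (hj : j ∈ s)
    (hmin : ∀ k ∈ s, T.dist k r ≥ T.dist i r) :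
    ∃ p : T.Walk j r, p.IsPath ∧ i ∈ p.support ∧
      ∀ x ∈ p.support, x ∈ s ∨ T.dist x r < T.dist i r := by
  obtain ⟨p, hp, hps⟩ := exists_path_in T s h hj hi
  obtain ⟨q, hq, hql⟩ := hT.exists_path_of_dist i r
  have key : ∀ x ∈ q.support, x ≠ i → T.dist x r < T.dist i r := by
    intro x hx hxi
    have h1 : (q.takeUntil x hx).length + (q.dropUntil x hx).length = q.length := by
      rw [← SimpleGraph.Walk.length_append, SimpleGraph.Walk.take_spec]
    have h2 := SimpleGraph.dist_le (q.dropUntil x hx)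
    have h3 : (q.takeUntil x hx).length ≠ 0 := by
      intro h0
      exact hxi (SimpleGraph.Walk.eq_of_length_eq_zero h0).symm
    omega
  have hnd := hq.support_nodup
  have hqs : q.support = i :: q.support.tail := by
    rw [SimpleGraph.Walk.cons_tail_support]
  rw [hqs, List.nodup_cons] at hnd
  have key' : ∀ x ∈ q.support.tail, T.dist x r < T.dist i r := by
    intro x hx
    refine key x (List.mem_of_mem_tail hx) ?_
    rintro rfl
    exact hnd.1 hx
  refine ⟨p.append q, ?_, ?_, ?_⟩
  · rw [SimpleGraph.Walk.isPath_def, SimpleGraph.Walk.support_append, List.nodup_append']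
    refine ⟨hp.support_nodup, hnd.2, ?_⟩
    intro x hx hx'
    have := key' x hx'
    have := hmin x (hps x hx)
    omega
  · rw [SimpleGraph.Walk.support_append, List.mem_append]
    exact Or.inl p.end_mem_support
  · intro x hx
    rw [SimpleGraph.Walk.support_append, List.mem_append] at hx
    rcases hx with hx | hx
    · exact Or.inl (hps x hx)
    · exact Or.inr (key' x hx)

/-- Every nonempty finite vertex set has a vertex whose bag-neighbours in the set lie in one bag. -/
lemma exists_simplicial {V ι : Type} {G : SimpleGraph V} {T : SimpleGraph ι} {B : ι → Finset V}
    {n : ℕ} (h : IsTD G T B n) (S : Finset V) (hS : S.Nonempty) :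
    ∃ v ∈ S, ∃ i, ∀ u ∈ S, (∃ j, u ∈ B j ∧ v ∈ B j) → u ∈ B i ∧ v ∈ B i := by
  obtain ⟨hT, -, hconn, -⟩ := h
  obtain ⟨r⟩ := hT.connected.nonempty
  by_cases hcov : ∃ v ∈ S, ∀ j, v ∉ B j
  · obtain ⟨v, hv, hv'⟩ := hcov
    exact ⟨v, hv, r, fun u _ ⟨j, _, hj⟩ => absurd hj (hv' j)⟩
  push Not at hcov
  have htop : ∀ v : V, ∃ i, (∃ j, v ∈ B j) → v ∈ B i ∧ ∀ k, v ∈ B k → T.dist k r ≥ T.dist i r := by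
    intro v
    by_cases hv : ∃ j, v ∈ B j
    · have := exists_minimal_of_wellFoundedLT (fun d => ∃ j, v ∈ B j ∧ T.dist j r = d)
        (by obtain ⟨j, hj⟩ := hv; exact ⟨_, j, hj, rfl⟩)
      obtain ⟨d, ⟨i, hi, hid⟩, hd⟩ := this
      refine ⟨i, fun _ => ⟨hi, fun k hk => ?_⟩⟩
      by_contra hlt
      push Not at hlt
      have := hd ⟨k, hk, rfl⟩ (by omega)
      omega
    · exact ⟨r, fun h => absurd h hv⟩
  choose top htop using htop
  obtain ⟨v, hv, hmax⟩ := S.exists_max_image (fun v => T.dist (top v) r) hS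
  refine ⟨v, hv, top v, ?_⟩
  rintro u hu ⟨j, huj, hvj⟩
  obtain ⟨hv1, hv2⟩ := htop v ⟨j, hvj⟩
  obtain ⟨hu1, hu2⟩ := htop u ⟨j, huj⟩
  refine ⟨?_, hv1⟩
  obtain ⟨p, hp, hip, -⟩ := exists_path_via_top T hT.connected {i | v ∈ B i} (hconn v) r hv1 hvj hv2
  obtain ⟨q, hq, -, hqs⟩ :=
    exists_path_via_top T hT.connected {i | u ∈ B i} (hconn u) r hu1 huj hu2
  have hpq := (hT.isAcyclic.subsingleton_path j r).elim ⟨p, hp⟩ ⟨q, hq⟩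
  have hpq' : p = q := congrArg Subtype.val hpq
  subst hpq'
  rcases hqs _ hip with h1 | h1
  · exact h1
  · have := hmax u hu
    omega

/-- A colouring with `n` colours that is injective on bags. -/
lemma exists_bag_coloring {V ι : Type} [Fintype V] {G : SimpleGraph V} {T : SimpleGraph ι}
    {B : ι → Finset V} {n : ℕ} (h : IsTD G T B (n + 1)) :
    ∃ c : V → Fin (n + 1), ∀ x y, x ≠ y → (∃ i, x ∈ B i ∧ y ∈ B i) → c x ≠ c y := by
  suffices H : ∀ m : ℕ, ∀ S : Finset V, S.card = m → ∃ c : V → Fin (n + 1), ∀ x ∈ S, ∀ y ∈ S,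
      x ≠ y → (∃ i, x ∈ B i ∧ y ∈ B i) → c x ≠ c y by
    obtain ⟨c, hc⟩ := H _ Finset.univ rfl
    exact ⟨c, fun x y => hc x (Finset.mem_univ _) y (Finset.mem_univ _)⟩
  intro m
  induction m with
  | zero =>
    intro S hS
    rw [Finset.card_eq_zero] at hS
    subst hS
    exact ⟨fun _ => 0, by simp⟩
  | succ m ih =>
    intro S hS
    obtain ⟨v, hv, i, hi⟩ := exists_simplicial h S (Finset.card_pos.mp (by omega))
    obtain ⟨c, hc⟩ := ih (S.erase v) (by rw [Finset.card_erase_of_mem hv]; omega)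
    have hfree : ∃ k : Fin (n + 1), ∀ u ∈ S, u ≠ v → (∃ j, u ∈ B j ∧ v ∈ B j) → c u ≠ k := by
      by_cases hvi : v ∈ B i
      · have hcard : (((B i).erase v).image c).card < Fintype.card (Fin (n + 1)) := by
          have h1 := h.2.2.2 i
          have h2 := Finset.card_image_le (s := (B i).erase v) (f := c)
          have h3 := Finset.card_erase_of_mem hvi
          have h4 : 0 < (B i).card := Finset.card_pos.mpr ⟨v, hvi⟩
          rw [Fintype.card_fin]
          omega
        obtain ⟨k, hk⟩ : ∃ k, k ∉ ((B i).erase v).image c := by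
          by_contra hcon
          push Not at hcon
          rw [Finset.eq_univ_iff_forall.mpr hcon, Finset.card_univ] at hcard
          omega
        refine ⟨k, fun u hu huv hj hck => hk ?_⟩
        rw [Finset.mem_image]
        exact ⟨u, Finset.mem_erase.mpr ⟨huv, (hi u hu hj).1⟩, hck⟩
      · exact ⟨0, fun u hu _ hj => absurd (hi u hu hj).2 hvi⟩
    obtain ⟨k, hk⟩ := hfree
    refine ⟨Function.update c v k, ?_⟩
    intro x hx y hy hxy hij
    by_cases hxv : x = v
    · subst hxv
      rw [Function.update_self, Function.update_of_ne (Ne.symm hxy)]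
      obtain ⟨j, h1, h2⟩ := hij
      exact (hk y hy (Ne.symm hxy) ⟨j, h2, h1⟩).symm
    · by_cases hyv : y = v
      · subst hyv
        rw [Function.update_self, Function.update_of_ne hxy]
        exact hk x hx hxy hij
      · rw [Function.update_of_ne hxv, Function.update_of_ne hyv]
        exact hc x (Finset.mem_erase.mpr ⟨hxv, hx⟩) y (Finset.mem_erase.mpr ⟨hyv, hy⟩) hxy hij

/-- Every nonempty finite subset of `S` has a vertex with at most one neighbour in it. -/
def Deg1 {V : Type} (G : SimpleGraph V) (S : Set V) : Prop :=
  ∀ X : Finset V, X.Nonempty → (∀ x ∈ X, x ∈ S) →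
    ∃ x ∈ X, ∀ a ∈ X, ∀ b ∈ X, G.Adj x a → G.Adj x b → a = b

lemma Deg1.isAcyclic {V : Type} {G : SimpleGraph V} {S : Set V} (h : Deg1 G S) :
    (G.induce S).IsAcyclic := by
  intro v p hp
  obtain ⟨x, hx, hx1⟩ := h (p.support.toFinset.image Subtype.val) ⟨v.1, by
    rw [Finset.mem_image]; exact ⟨v, by simp, rfl⟩⟩ (by
    intro x hx
    rw [Finset.mem_image] at hx
    obtain ⟨y, _, rfl⟩ := hx
    exact y.2)
  rw [Finset.mem_image] at hx
  obtain ⟨y, hy, rfl⟩ := hx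
  rw [List.mem_toFinset] at hy
  have hc := hp.rotate hy
  have hsub : ∀ z ∈ (p.rotate y hy).support, z.1 ∈ p.support.toFinset.image Subtype.val := by
    intro z hz
    rw [Finset.mem_image]
    refine ⟨z, ?_, rfl⟩
    rw [List.mem_toFinset]
    simpa using hz
  have h1 := SimpleGraph.Walk.adj_snd hc.not_nil
  have h2 := SimpleGraph.Walk.adj_penultimate hc.not_nil
  have := hx1 _ (hsub _ (SimpleGraph.Walk.getVert_mem_support _ 1))
    _ (hsub _ (SimpleGraph.Walk.getVert_mem_support _ _)) h1 h2.symm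
  exact hc.snd_ne_penultimate (Subtype.ext this)


/-- Tree-width at most two, where vertices may be uncovered. -/
def TW2 {V : Type} (G : SimpleGraph V) : Prop :=
  ∃ (ι : Type) (T : SimpleGraph ι) (B : ι → Finset V), IsTD G T B 3

/-- Some vertex is adjacent to exactly one of `u`, `v`. -/
def Valid {V : Type} (G : SimpleGraph V) (u v : V) : Prop :=
  ∃ w, w ≠ u ∧ w ≠ v ∧ ((G.Adj u w ∧ ¬ G.Adj v w) ∨ (¬ G.Adj u w ∧ G.Adj v w))

/-- A 3-colouring whose pairs of classes induce forests, in which every bichromatic valid edge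
is not a component of the corresponding forest. -/
def Good {V : Type} (G : SimpleGraph V) (c : V → Fin 3) : Prop :=
  (∀ k, Deg1 G {v | c v ≠ k}) ∧
  ∀ u v, G.Adj u v → c u ≠ c v → Valid G u v →
    ∃ w, w ≠ u ∧ w ≠ v ∧ (c w = c u ∨ c w = c v) ∧ (G.Adj u w ∨ G.Adj v w)

lemma four_le_of_mem {V : Type} {s : Finset V} {a b c d : V} (ha : a ∈ s) (hb : b ∈ s)
    (hc : c ∈ s) (hd : d ∈ s) (hab : a ≠ b) (hac : a ≠ c) (had : a ≠ d) (hbc : b ≠ c)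
    (hbd : b ≠ d) (hcd : c ≠ d) : 4 ≤ s.card := by
  have h1 : ({a, b, c, d} : Finset V) ⊆ s := by
    intro x hx
    simp only [Finset.mem_insert, Finset.mem_singleton] at hx
    rcases hx with rfl | rfl | rfl | rfl <;> assumption
  have h2 : ({a, b, c, d} : Finset V).card = 4 := by
    rw [Finset.card_insert_of_notMem, Finset.card_insert_of_notMem, Finset.card_insert_of_notMem,
      Finset.card_singleton] <;> simp [*]
  rw [← h2]
  exact Finset.card_le_card h1

/-- `K₄` with at most one edge subdivided does not have tree-width two. -/
lemma TW2.no_K4_subdivision {V : Type} {G : SimpleGraph V} (h : TW2 G) {p q r s m : V}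
    (hpq : G.Adj p q) (hpr : G.Adj p r) (hps : G.Adj p s) (hqr : G.Adj q r) (hqs : G.Adj q s)
    (hrm : G.Adj r m) (hms : G.Adj m s) (hrs : r ≠ s) (hpm : p ≠ m) (hqm : q ≠ m) : False := by
  obtain ⟨ι, T, B, hTD⟩ := h
  have hB := hTD.2.2.2
  have hE : ∀ x y, G.Adj x y → (∃ i, x ∈ B i ∧ y ∈ B i) ∧ (∃ i, y ∈ B i ∧ x ∈ B i) := by
    intro x y hxy
    obtain ⟨i, h1, h2⟩ := hTD.2.1 x y hxy
    exact ⟨⟨i, h1, h2⟩, ⟨i, h2, h1⟩⟩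
  have hshare : ∃ i, r ∈ B i ∧ s ∈ B i := by
    obtain ⟨v, hv, i, hi⟩ := exists_simplicial hTD {p, q, r, s, m} ⟨p, by simp⟩
    have hip := hi p (by simp)
    have hiq := hi q (by simp)
    have hir := hi r (by simp)
    have his := hi s (by simp)
    have him := hi m (by simp)
    simp only [Finset.mem_insert, Finset.mem_singleton] at hv
    have hBi := hB i
    rcases hv with rfl | rfl | rfl | rfl | rfl
    · have := four_le_of_mem (hiq (hE _ _ hpq).2).2 (hiq (hE _ _ hpq).2).1 (hir (hE _ _ hpr).2).1
        (his (hE _ _ hps).2).1 hpq.ne hpr.ne hps.ne hqr.ne hqs.ne hrs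
      omega
    · have := four_le_of_mem (hip (hE _ _ hpq).1).2 (hip (hE _ _ hpq).1).1 (hir (hE _ _ hqr).2).1
        (his (hE _ _ hqs).2).1 hpq.ne' hqr.ne hqs.ne hpr.ne hps.ne hrs
      omega
    · have := four_le_of_mem (hip (hE _ _ hpr).1).2 (hip (hE _ _ hpr).1).1 (hiq (hE _ _ hqr).1).1
        (him (hE _ _ hrm).2).1 hpr.ne' hqr.ne' hrm.ne hpq.ne hpm hqm
      omega
    · have := four_le_of_mem (hip (hE _ _ hps).1).2 (hip (hE _ _ hps).1).1 (hiq (hE _ _ hqs).1).1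
        (him (hE _ _ hms).1).1 hps.ne' hqs.ne' hms.ne' hpq.ne hpm hqm
      omega
    · exact ⟨i, (hir (hE _ _ hrm).1).1, (his (hE _ _ hms).2).1⟩
  obtain ⟨v, hv, i, hi⟩ := exists_simplicial hTD {p, q, r, s} ⟨p, by simp⟩
  have hip := hi p (by simp)
  have hiq := hi q (by simp)
  have hir := hi r (by simp)
  have his := hi s (by simp)
  simp only [Finset.mem_insert, Finset.mem_singleton] at hv
  have hBi := hB i
  have hshare' : ∃ i, s ∈ B i ∧ r ∈ B i := by
    obtain ⟨i, h1, h2⟩ := hshare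
    exact ⟨i, h2, h1⟩
  have : p ∈ B i ∧ q ∈ B i ∧ r ∈ B i ∧ s ∈ B i := by
    rcases hv with rfl | rfl | rfl | rfl
    · exact ⟨(hiq (hE _ _ hpq).2).2, (hiq (hE _ _ hpq).2).1, (hir (hE _ _ hpr).2).1,
        (his (hE _ _ hps).2).1⟩
    · exact ⟨(hip (hE _ _ hpq).1).1, (hip (hE _ _ hpq).1).2, (hir (hE _ _ hqr).2).1,
        (his (hE _ _ hqs).2).1⟩
    · exact ⟨(hip (hE _ _ hpr).1).1, (hiq (hE _ _ hqr).1).1, (hip (hE _ _ hpr).1).2,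
        (his hshare').1⟩
    · exact ⟨(hip (hE _ _ hps).1).1, (hiq (hE _ _ hqs).1).1, (hir hshare).1,
        (hip (hE _ _ hps).1).2⟩
  have := four_le_of_mem this.1 this.2.1 this.2.2.1 this.2.2.2 hpq.ne hpr.ne hps.ne hqr.ne
    hqs.ne hrs
  omega

/-- If every edge lies in a triangle, the bag-injective colouring is good. -/
lemma good_of_triangles {V : Type} [Fintype V] {G : SimpleGraph V} (h : TW2 G)
    (htri : ∀ u v, G.Adj u v → ∃ t, G.Adj u t ∧ G.Adj v t) : ∃ c, Good G c := by
  obtain ⟨ι, T, B, hTD⟩ := h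
  obtain ⟨c, hc⟩ := exists_bag_coloring hTD
  have hprop : ∀ x y, G.Adj x y → c x ≠ c y := fun x y hxy => hc x y hxy.ne (hTD.2.1 x y hxy)
  refine ⟨c, ?_, ?_⟩
  · intro k X hX hXk
    obtain ⟨v, hv, i, hi⟩ := exists_simplicial hTD X hX
    refine ⟨v, hv, ?_⟩
    intro a ha b hb hva hvb
    by_contra hab
    have ha1 := hi a ha (hTD.2.1 _ _ hva.symm)
    have hb1 := hi b hb (hTD.2.1 _ _ hvb.symm)
    have h1 := hc a b hab ⟨i, ha1.1, hb1.1⟩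
    have h2 := hprop _ _ hva
    have h3 := hprop _ _ hvb
    have h4 : c v ≠ k := hXk v hv
    have h5 : c a ≠ k := hXk a ha
    have h6 : c b ≠ k := hXk b hb
    omega
  · have key : ∀ u v w, G.Adj u v → w ≠ u → w ≠ v → G.Adj u w → ¬ G.Adj v w →
        ∃ w, w ≠ u ∧ w ≠ v ∧ c w = c v ∧ G.Adj u w := by
      intro u v w huv hwu hwv huw hvw
      by_cases hcw : c w = c v
      · exact ⟨w, hwu, hwv, hcw, huw⟩
      · obtain ⟨t, hut, hwt⟩ := htri u w huw
        have h1 := hprop _ _ huv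
        have h2 := hprop _ _ huw
        have h3 := hprop _ _ hut
        have h4 := hprop _ _ hwt
        refine ⟨t, hut.ne', ?_, by omega, hut⟩
        rintro rfl
        exact hvw hwt.symm
    rintro u v huv - ⟨w, hwu, hwv, ⟨h1, h2⟩ | ⟨h1, h2⟩⟩
    · obtain ⟨x, a, b, d, e⟩ := key u v w huv hwu hwv h1 h2
      exact ⟨x, a, b, Or.inr d, Or.inl e⟩
    · obtain ⟨x, a, b, d, e⟩ := key v u w huv.symm hwv hwu h2 h1
      exact ⟨x, b, a, Or.inl d, Or.inr e⟩

/-- Contract the edge `uv` onto `u`; `v` becomes isolated. -/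
def contr {V : Type} (G : SimpleGraph V) (u v : V) : SimpleGraph V where
  Adj x y := x ≠ y ∧ x ≠ v ∧ y ≠ v ∧
    (G.Adj x y ∨ (x = u ∧ G.Adj v y) ∨ (y = u ∧ G.Adj v x))
  symm := ⟨by
    rintro x y ⟨h1, h2, h3, h4⟩
    refine ⟨h1.symm, h3, h2, ?_⟩
    rcases h4 with h | h | h
    · exact Or.inl h.symm
    · exact Or.inr (Or.inr h)
    · exact Or.inr (Or.inl h)⟩
  loopless := ⟨fun x h => h.1 rfl⟩

lemma TW2.contr {V : Type} {G : SimpleGraph V} (h : TW2 G) {u v : V} (huv : G.Adj u v) :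
    TW2 (contr G u v) := by
  obtain ⟨ι, T, B, hT, hE, hconn, hcard⟩ := h
  let B' : ι → Finset V := fun i => if v ∈ B i then insert u ((B i).erase v) else B i
  have hmem : ∀ x i, x ∈ B' i ↔ x ≠ v ∧ (x ∈ B i ∨ (x = u ∧ v ∈ B i)) := by
    intro x i
    have := huv.ne
    simp only [B']
    split_ifs with hv
    · simp only [Finset.mem_insert, Finset.mem_erase]
      grind
    · grind
  refine ⟨ι, T, B', hT, ?_, ?_, ?_⟩
  · rintro x y ⟨h1, h2, h3, h4⟩
    rcases h4 with h | ⟨rfl, h⟩ | ⟨rfl, h⟩ <;> obtain ⟨i, hi1, hi2⟩ := hE _ _ h <;>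
      refine ⟨i, ?_, ?_⟩ <;> rw [hmem] <;> tauto
  · intro x
    by_cases hxv : x = v
    · subst hxv
      rintro ⟨i, hi⟩
      have hi' : x ∈ B' i := hi
      rw [hmem] at hi'
      exact absurd rfl hi'.1
    · by_cases hxu : x = u
      · subst hxu
        have hs : {i | x ∈ B' i} = {i | x ∈ B i} ∪ {i | v ∈ B i} := by
          ext i
          simp only [Set.mem_ofPred_eq, Set.mem_union, hmem]
          tauto
        rw [hs]
        obtain ⟨i, h1, h2⟩ := hE _ _ huv
        exact SimpleGraph.induce_union_connected (hconn x) (hconn v) ⟨i, h1, h2⟩ |>.preconnected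
      · have hs : {i | x ∈ B' i} = {i | x ∈ B i} := by
          ext i
          simp only [Set.mem_ofPred_eq, hmem]
          tauto
        rw [hs]
        exact hconn x
  · intro i
    simp only [B']
    split_ifs with hv
    · have h1 := Finset.card_insert_le u ((B i).erase v)
      have h2 := Finset.card_erase_of_mem hv
      have h3 : 0 < (B i).card := Finset.card_pos.mpr ⟨v, hv⟩
      have := hcard i
      omega
    · exact hcard i

lemma contr_adj {V : Type} {G : SimpleGraph V} {u v x y : V} :
    (contr G u v).Adj x y ↔ x ≠ y ∧ x ≠ v ∧ y ≠ v ∧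
    (G.Adj x y ∨ (x = u ∧ G.Adj v y) ∨ (y = u ∧ G.Adj v x)) := Iff.rfl

/-- The forest property survives un-contracting an edge in no triangle. -/
lemma Deg1.of_contr {V : Type} {G : SimpleGraph V} {u v : V} (huv : G.Adj u v)
    (htri : ∀ t, G.Adj u t → ¬ G.Adj v t) {S S' : Set V} (h : Deg1 (contr G u v) S')
    (hS : ∀ x ∈ S, x ≠ v → x ∈ S') (hSv : v ∈ S → u ∈ S') : Deg1 G S := by
  intro X hX hXS
  have hne := huv.ne
  let f : V → V := fun x => if x = v then u else x
  have hfv : f v = u := by simp [f]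
  have hfx : ∀ x, x ≠ v → f x = x := by intro x hx; simp [f, hx]
  obtain ⟨x', hx', hx1⟩ := h (X.image f) (hX.image f) (by
    intro y hy
    rw [Finset.mem_image] at hy
    obtain ⟨x, hx, rfl⟩ := hy
    by_cases hxv : x = v
    · subst hxv
      rw [hfv]
      exact hSv (hXS _ hx)
    · rw [hfx x hxv]
      exact hS x (hXS x hx) hxv)
  have hadj : ∀ x y, G.Adj x y → f x ≠ f y → (contr G u v).Adj (f x) (f y) := by
    intro x y hxy hf
    rw [contr_adj]
    by_cases hxv : x = v
    · subst hxv
      have := hxy.ne'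
      rw [hfv, hfx y this] at *
      exact ⟨hf, hne, this, Or.inr (Or.inl ⟨rfl, hxy⟩)⟩
    · by_cases hyv : y = v
      · subst hyv
        rw [hfv, hfx x hxv] at *
        exact ⟨hf, hxv, hne, Or.inr (Or.inr ⟨rfl, hxy.symm⟩)⟩
      · rw [hfx x hxv, hfx y hyv] at *
        exact ⟨hf, hxv, hyv, Or.inl hxy⟩
  have hx2 : ∀ x ∈ X, f x = x' → ∀ a ∈ X, ∀ b ∈ X, f a ≠ x' → f b ≠ x' → G.Adj x a → G.Adj x b →
      f a = f b := by
    intro x hx hfx a ha b hb hfa hfb hxa hxb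
    apply hx1 _ (Finset.mem_image_of_mem f ha) _ (Finset.mem_image_of_mem f hb)
    · rw [← hfx] at *; exact hadj _ _ hxa hfa.symm
    · rw [← hfx] at *; exact hadj _ _ hxb hfb.symm
  have hinj : ∀ a b, f a = f b → a = b ∨ (a = u ∧ b = v) ∨ (a = v ∧ b = u) := by
    intro a b hab
    simp only [f] at hab
    split_ifs at hab <;> grind
  have hfu := hfx u hne
  rw [Finset.mem_image] at hx'
  obtain ⟨x, hx, hfxx⟩ := hx'
  by_cases hxu : x' = u
  · -- the contracted vertex
    subst hxu
    by_cases hboth : x' ∈ X ∧ v ∈ X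
    · by_cases hall : ∃ a ∈ X, a ≠ v ∧ G.Adj x' a
      · obtain ⟨a, ha, hav, hxa⟩ := hall
        refine ⟨v, hboth.2, ?_⟩
        have key : ∀ b ∈ X, G.Adj v b → b = x' := by
          intro b hb hvb
          by_contra hbx
          have hbv := hvb.ne'
          have hax := hxa.ne'
          have h1 := hx1 (f a) (Finset.mem_image_of_mem f ha) (f b) (Finset.mem_image_of_mem f hb)
            (by
              have := hadj _ _ hxa (by rw [hfu, hfx a hav]; exact hax.symm)
              rw [hfu] at this
              exact this)
            (by
              have := hadj _ _ hvb (by rw [hfv, hfx b hbv]; exact Ne.symm hbx)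
              rw [hfv] at this
              exact this)
          rw [hfx a hav, hfx b hbv] at h1
          subst h1
          exact htri a hxa hvb
        intro b hb d hd h1 h2
        rw [key b hb h1, key d hd h2]
      · push Not at hall
        refine ⟨x', hboth.1, ?_⟩
        intro a ha b hb h1 h2
        have e1 : a = v := by by_contra hc; exact hall a ha hc h1
        have e2 : b = v := by by_contra hc; exact hall b hb hc h2
        rw [e1, e2]
    · refine ⟨x, hx, ?_⟩
      have hxe : x = x' ∨ x = v := by
        by_cases hxv : x = v
        · exact Or.inr hxv
        · rw [hfx x hxv] at hfxx; exact Or.inl hfxx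
      have hf1 : ∀ a ∈ X, G.Adj x a → f a ≠ x' := by
        intro a ha hxa hfa
        have := hinj a x (hfa.trans hfxx.symm)
        have := hxa.ne
        grind
      intro a ha b hb h1 h2
      have := hinj _ _ (hx2 x hx hfxx a ha b hb (hf1 a ha h1) (hf1 b hb h2) h1 h2)
      grind
  · have hxv : x ≠ v := by
      rintro rfl
      exact hxu (hfxx.symm.trans hfv)
    rw [hfx x hxv] at hfxx
    subst hfxx
    refine ⟨x, hx, ?_⟩
    have hf1 : ∀ a ∈ X, G.Adj x a → f a ≠ x := by
      intro a ha hxa hfa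
      have := hinj a x (by rw [hfa, hfx x hxv])
      have := hxa.ne
      grind
    intro a ha b hb h1 h2
    have := hinj _ _ (hx2 x hx (hfx x hxv) a ha b hb (hf1 a ha h1) (hf1 b hb h2) h1 h2)
    rcases this with h | ⟨rfl, rfl⟩ | ⟨rfl, rfl⟩
    · exact h
    · exact absurd h2.symm (htri x h1.symm)
    · exact absurd h1.symm (htri x h2.symm)

/-- The obstruction to contracting the edge `uv`. -/
def Rung {V : Type} (G : SimpleGraph V) (u v a b : V) : Prop :=
  a ≠ v ∧ b ≠ u ∧ G.Adj a u ∧ G.Adj b v ∧ G.Adj a b ∧ ¬ G.Adj u b ∧ ¬ G.Adj v a ∧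
    ∀ w, w ≠ u → w ≠ v → w ≠ a → w ≠ b → (G.Adj a w ↔ G.Adj b w)

lemma contr_support {V : Type} [Fintype V] {G : SimpleGraph V} {u v : V} (huv : G.Adj u v) :
    (contr G u v).support.ncard < G.support.ncard := by
  apply Set.ncard_lt_ncard _ (Set.toFinite _)
  refine (Set.ssubset_iff_of_subset ?_).mpr ⟨v, ?_, ?_⟩
  · rintro x ⟨y, hxy⟩
    obtain ⟨_, _, _, h | ⟨rfl, h⟩ | ⟨rfl, h⟩⟩ := hxy
    · exact ⟨y, h⟩
    · exact ⟨v, huv⟩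
    · exact ⟨v, h.symm⟩
  · exact ⟨u, huv.symm⟩
  · rintro ⟨y, hxy⟩
    exact hxy.2.1 rfl

/-- Without rungs, validity of edges away from `uv` survives contraction. -/
lemma valid_contr {V : Type} {G : SimpleGraph V} {u v p q : V}
    (htri : ∀ t, G.Adj u t → ¬ G.Adj v t) (hno : ∀ a b, ¬ Rung G u v a b)
    (hpu : p ≠ u) (hpv : p ≠ v) (hqu : q ≠ u) (hqv : q ≠ v) (hpq : G.Adj p q)
    (hval : Valid G p q) : Valid (contr G u v) p q := by
  by_contra hcon
  have hiff : ∀ w, w ≠ p → w ≠ q → ((contr G u v).Adj p w ↔ (contr G u v).Adj q w) := by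
    intro w h1 h2
    by_contra h3
    apply hcon
    refine ⟨w, h1, h2, ?_⟩
    tauto
  have hiff1 : ∀ w, w ≠ p → w ≠ q → w ≠ u → w ≠ v → (G.Adj p w ↔ G.Adj q w) := by
    intro w h1 h2 h3 h4
    have := hiff w h1 h2
    simp only [contr_adj] at this
    grind
  have hiffu : (G.Adj p u ∨ G.Adj p v) ↔ (G.Adj q u ∨ G.Adj q v) := by
    have := hiff u (Ne.symm hpu) (Ne.symm hqu)
    simp only [contr_adj] at this
    grind [G.adj_comm]
  have tp := htri p
  have tq := htri q
  have hr1 := hno p q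
  have hr2 := hno q p
  simp only [Rung, not_and, not_forall] at hr1 hr2
  obtain ⟨w, hwp, hwq, hw⟩ := hval
  have hs1 := G.adj_comm u p
  have hs2 := G.adj_comm u q
  have hs3 := G.adj_comm v p
  have hs4 := G.adj_comm v q
  have hcase : (G.Adj p u ∧ G.Adj q v ∧ ¬ G.Adj p v ∧ ¬ G.Adj q u) ∨
      (G.Adj q u ∧ G.Adj p v ∧ ¬ G.Adj q v ∧ ¬ G.Adj p u) := by
    rw [hs1, hs3] at tp
    rw [hs2, hs4] at tq
    clear hr1 hr2 hiff hcon hs1 hs2 hs3 hs4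
    by_cases hwu : w = u
    · subst hwu; clear hiff1; tauto
    by_cases hwv : w = v
    · subst hwv; clear hiff1; tauto
    have := hiff1 w hwp hwq hwu hwv
    tauto
  rcases hcase with ⟨h1, h2, h3, h4⟩ | ⟨h1, h2, h3, h4⟩
  · obtain ⟨w, a1, a2, a3, a4, a5⟩ := hr1 hpv hqu h1 h2 hpq (fun h => h4 h.symm) (fun h => h3 h.symm)
    exact a5 (hiff1 w a3 a4 a1 a2)
  · obtain ⟨w, a1, a2, a3, a4, a5⟩ := hr2 hqv hpu h1 h2 hpq.symm (fun h => h4 h.symm) (fun h => h3 h.symm)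
    exact a5 (hiff1 w a4 a3 a1 a2).symm

/-- Contracting an edge in no triangle works unless there is a rung. -/
lemma good_of_contr {V : Type} {G : SimpleGraph V} {u v : V} (huv : G.Adj u v)
    (htri : ∀ t, G.Adj u t → ¬ G.Adj v t) (hgood : ∃ c, Good (contr G u v) c)
    (hno : ∀ a b, ¬ Rung G u v a b) : ∃ c, Good G c := by
  obtain ⟨c', hc1, hc2⟩ := hgood
  have hne := huv.ne
  let c : V → Fin 3 := fun x => if x = v then c' u else c' x
  have hcv : c v = c' u := by simp [c]
  have hcx : ∀ x, x ≠ v → c x = c' x := by intro x hx; simp [c, hx]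
  have hcu := hcx u hne
  refine ⟨c, ?_, ?_⟩
  · intro k
    apply (hc1 k).of_contr huv htri
    · intro x hx hxv
      have hx' : c x ≠ k := hx
      rw [hcx x hxv] at hx'
      exact hx'
    · intro hv
      have hv' : c v ≠ k := hv
      rw [hcv] at hv'
      exact hv'
  · intro p q hpq hcpq hval
    by_cases hpu : p = u
    · exact ⟨v, by grind, by grind, by grind, by grind⟩
    by_cases hpv : p = v
    · exact ⟨u, by grind, by grind, by grind, by grind [G.adj_comm]⟩
    by_cases hqu : q = u
    · exact ⟨v, by grind, by grind, by grind, by grind⟩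
    by_cases hqv : q = v
    · exact ⟨u, by grind, by grind, by grind, by grind [G.adj_comm]⟩
    have hval' := valid_contr htri hno hpu hpv hqu hqv hpq hval
    have hpq' : (contr G u v).Adj p q := ⟨hpq.ne, hpv, hqv, Or.inl hpq⟩
    have hcp := hcx p hpv
    have hcq := hcx q hqv
    obtain ⟨w, h1, h2, h3, h4⟩ := hc2 p q hpq' (by rw [← hcp, ← hcq]; exact hcpq) hval'
    have hwv : w ≠ v := by
      rintro rfl
      rcases h4 with h | h
      · exact h.2.2.1 rfl
      · exact h.2.2.1 rfl
    by_cases hwu : w = u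
    · subst hwu
      simp only [contr_adj] at h4
      have : (G.Adj p w ∨ G.Adj q w) ∨ (G.Adj p v ∨ G.Adj q v) := by
        grind [G.adj_comm]
      rcases this with h | h
      · exact ⟨w, h1, h2, by rw [hcp, hcq, hcu]; exact h3, h⟩
      · exact ⟨v, Ne.symm hpv, Ne.symm hqv, by rw [hcp, hcq, hcv]; exact h3, h⟩
    · refine ⟨w, h1, h2, by rw [hcp, hcq, hcx w hwv]; exact h3, ?_⟩
      simp only [contr_adj] at h4
      tauto


/-- Restrict the edges of `G` to a vertex set, keeping the vertex type. -/
def restr {V : Type} (G : SimpleGraph V) (S : Set V) : SimpleGraph V where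
  Adj x y := G.Adj x y ∧ x ∈ S ∧ y ∈ S
  symm := ⟨fun _ _ h => ⟨h.1.symm, h.2.2, h.2.1⟩⟩
  loopless := ⟨fun _ h => h.1.ne rfl⟩

lemma restr_adj {V : Type} {G : SimpleGraph V} {S : Set V} {x y : V} :
    (restr G S).Adj x y ↔ G.Adj x y ∧ x ∈ S ∧ y ∈ S := Iff.rfl

lemma TW2.restr {V : Type} {G : SimpleGraph V} (h : TW2 G) (S : Set V) : TW2 (restr G S) := by
  obtain ⟨ι, T, B, hT, hE, h⟩ := h
  exact ⟨ι, T, B, hT, fun x y hxy => hE x y hxy.1, h⟩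

/-- A 4-cycle component can be coloured separately. -/
lemma good_of_C4 {V : Type} {G : SimpleGraph V} {u a b v : V}
    (hu : ∀ x, G.Adj u x ↔ x = a ∨ x = v) (ha : ∀ x, G.Adj a x ↔ x = u ∨ x = b)
    (hb : ∀ x, G.Adj b x ↔ x = a ∨ x = v) (hv : ∀ x, G.Adj v x ↔ x = u ∨ x = b)
    (hub : u ≠ b) (hav : a ≠ v)
    (hgood : ∃ c, Good (restr G {x | x ≠ u ∧ x ≠ a ∧ x ≠ b ∧ x ≠ v}) c) : ∃ c, Good G c := by
  obtain ⟨c', h1, h2⟩ := hgood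
  have hua : u ≠ a := ((hu a).mpr (Or.inl rfl)).ne
  have huv : u ≠ v := ((hu v).mpr (Or.inr rfl)).ne
  have hba : b ≠ a := ((hb a).mpr (Or.inl rfl)).ne
  have hbv : b ≠ v := ((hb v).mpr (Or.inr rfl)).ne
  let c : V → Fin 3 := fun x => if x = u ∨ x = b then 0 else if x = a then 1 else
    if x = v then 2 else c' x
  have cu : c u = 0 := by simp [c]
  have cb : c b = 0 := by simp [c]
  have ca : c a = 1 := by simp [c, hua.symm, hba.symm]
  have cv : c v = 2 := by simp [c, huv.symm, hbv.symm, hav.symm]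
  have cx : ∀ x, x ≠ u → x ≠ a → x ≠ b → x ≠ v → c x = c' x := by
    intro x q1 q2 q3 q4
    simp [c, q1, q2, q3, q4]
  have hcl : ∀ x y, G.Adj x y → x ≠ u → x ≠ a → x ≠ b → x ≠ v →
      y ≠ u ∧ y ≠ a ∧ y ≠ b ∧ y ≠ v := by
    intro x y hxy q1 q2 q3 q4
    refine ⟨?_, ?_, ?_, ?_⟩ <;> rintro rfl <;> replace hxy := hxy.symm
    · rw [hu] at hxy; tauto
    · rw [ha] at hxy; tauto
    · rw [hb] at hxy; tauto
    · rw [hv] at hxy; tauto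
  refine ⟨c, ?_, ?_⟩
  · intro k X hX hXk
    have hXk' : ∀ x ∈ X, c x ≠ k := hXk
    by_cases huX : u ∈ X
    · refine ⟨u, huX, fun x hx y hy hux huy => ?_⟩
      have := hXk' x hx
      have := hXk' y hy
      have := hXk' u huX
      rw [hu] at hux huy
      rcases hux with rfl | rfl <;> rcases huy with rfl | rfl <;> first | rfl | omega
    by_cases hbX : b ∈ X
    · refine ⟨b, hbX, fun x hx y hy hux huy => ?_⟩
      have := hXk' x hx
      have := hXk' y hy
      have := hXk' b hbX
      rw [hb] at hux huy
      rcases hux with rfl | rfl <;> rcases huy with rfl | rfl <;> first | rfl | omega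
    by_cases haX : a ∈ X
    · refine ⟨a, haX, fun x hx y hy hux huy => ?_⟩
      rw [ha] at hux
      rcases hux with rfl | rfl <;> contradiction
    by_cases hvX : v ∈ X
    · refine ⟨v, hvX, fun x hx y hy hux huy => ?_⟩
      rw [hv] at hux
      rcases hux with rfl | rfl <;> contradiction
    have hout : ∀ x ∈ X, x ≠ u ∧ x ≠ a ∧ x ≠ b ∧ x ≠ v := by
      intro x hx
      refine ⟨?_, ?_, ?_, ?_⟩ <;> rintro rfl <;> contradiction
    obtain ⟨x, hx, hx1⟩ := h1 k X hX (by
      intro x hx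
      obtain ⟨q1, q2, q3, q4⟩ := hout x hx
      have := hXk' x hx
      rw [cx x q1 q2 q3 q4] at this
      exact this)
    refine ⟨x, hx, fun y hy z hz hxy hxz => hx1 y hy z hz ?_ ?_⟩
    · exact ⟨hxy, hout x hx, hout y hy⟩
    · exact ⟨hxz, hout x hx, hout z hz⟩
  · intro p q hpq hc hval
    by_cases hpu : p = u
    · subst hpu
      rw [hu] at hpq
      refine ⟨b, hub.symm, ?_, Or.inl (by rw [cu, cb]), Or.inr ?_⟩
      · rcases hpq with rfl | rfl <;> assumption
      · rcases hpq with rfl | rfl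
        · rw [ha]; exact Or.inr rfl
        · rw [hv]; exact Or.inr rfl
    by_cases hpb : p = b
    · subst hpb
      rw [hb] at hpq
      refine ⟨u, hub, ?_, Or.inl (by rw [cu, cb]), Or.inr ?_⟩
      · rcases hpq with rfl | rfl <;> assumption
      · rcases hpq with rfl | rfl
        · rw [ha]; exact Or.inl rfl
        · rw [hv]; exact Or.inl rfl
    by_cases hpa : p = a
    · subst hpa
      rw [ha] at hpq
      rcases hpq with rfl | rfl
      · exact ⟨b, hba, hub.symm, Or.inr (by rw [cu, cb]), Or.inl ((ha _).mpr (Or.inr rfl))⟩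
      · exact ⟨u, hua, hub, Or.inr (by rw [cu, cb]), Or.inl ((ha _).mpr (Or.inl rfl))⟩
    by_cases hpv : p = v
    · subst hpv
      rw [hv] at hpq
      rcases hpq with rfl | rfl
      · exact ⟨b, hbv, hub.symm, Or.inr (by rw [cu, cb]), Or.inl ((hv _).mpr (Or.inr rfl))⟩
      · exact ⟨u, huv, hub, Or.inr (by rw [cu, cb]), Or.inl ((hv _).mpr (Or.inl rfl))⟩
    have hp : p ≠ u ∧ p ≠ a ∧ p ≠ b ∧ p ≠ v := ⟨hpu, hpa, hpb, hpv⟩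
    have hq := hcl p q hpq hpu hpa hpb hpv
    have hcp := cx p hp.1 hp.2.1 hp.2.2.1 hp.2.2.2
    have hcq := cx q hq.1 hq.2.1 hq.2.2.1 hq.2.2.2
    have hadj : ∀ x w, (x ≠ u ∧ x ≠ a ∧ x ≠ b ∧ x ≠ v) →
        ((restr G {x | x ≠ u ∧ x ≠ a ∧ x ≠ b ∧ x ≠ v}).Adj x w ↔ G.Adj x w) := by
      intro x w hx
      exact ⟨fun h => h.1, fun h => ⟨h, hx, hcl x w h hx.1 hx.2.1 hx.2.2.1 hx.2.2.2⟩⟩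
    obtain ⟨w, w1, w2, w3, w4⟩ := h2 p q ((hadj p q hp).mpr hpq)
      (by rw [← hcp, ← hcq]; exact hc) (by
        obtain ⟨w, w1, w2, w3⟩ := hval
        refine ⟨w, w1, w2, ?_⟩
        rw [hadj p w hp, hadj q w hq]
        exact w3)
    have hw : w ≠ u ∧ w ≠ a ∧ w ≠ b ∧ w ≠ v := by
      rcases w4 with h | h
      · exact h.2.2
      · exact h.2.2
    rw [hadj p w hp, hadj q w hq] at w4
    refine ⟨w, w1, w2, ?_, w4⟩
    rw [hcp, hcq, cx w hw.1 hw.2.1 hw.2.2.1 hw.2.2.2]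
    exact w3

/-- Every graph of tree-width at most two has a good 3-colouring. -/
lemma exists_good {V : Type} [Fintype V] (n : ℕ) : ∀ G : SimpleGraph V, TW2 G →
    G.support.ncard = n → ∃ c, Good G c := by
  induction n using Nat.strong_induction_on with
  | _ n ih =>
  intro G hG hn
  by_contra hbad
  -- every edge in no triangle has a rung
  have hrung : ∀ u v, G.Adj u v → (∀ t, G.Adj u t → ¬ G.Adj v t) → ∃ a b, Rung G u v a b := by
    intro u v huv htri
    by_contra hno
    push Not at hno
    refine hbad (good_of_contr huv htri ?_ hno)
    exact ih _ (hn ▸ contr_support huv) _ (hG.contr huv) rfl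
  refine hbad (good_of_triangles hG ?_)
  intro u v huv
  by_contra htri
  push Not at htri
  obtain ⟨a, b, hne_va, hne_bu, hau, hbv, hab, hub, hva, hW⟩ := hrung u v huv htri
  have hne_ub : u ≠ b := hne_bu.symm
  -- `ua` lies in no triangle
  have htri2 : ∀ t, G.Adj a t → ¬ G.Adj u t := by
    intro t hat hut
    have htv : t ≠ v := by rintro rfl; exact hva hat.symm
    have htb : t ≠ b := by rintro rfl; exact hub hut
    have hbt := (hW t hut.ne' htv hat.ne' htb).mp hat
    exact hG.no_K4_subdivision hat hau hab hut.symm hbt.symm huv hbv.symm hne_ub hne_va htv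
  have hK : ∀ w, G.Adj a w → G.Adj b w → G.Adj v w → False := by
    intro w h1 h2 h3
    have hwu : w ≠ u := by rintro rfl; exact hub h2.symm
    exact hG.no_K4_subdivision h2 hab.symm hbv h1.symm h3.symm hau huv hne_va hne_ub.symm hwu
  obtain ⟨c, d, hcu, hda, hca, hdu, hcd, had, huc, hW2⟩ := hrung a u hau htri2
  have hcv : c ≠ v := by rintro rfl; exact huc huv
  have hdb : d ≠ b := by rintro rfl; exact hub hdu.symm
  by_cases hcb : c = b
  · subst hcb
    have hdv : d = v := by
      by_contra hdv
      exact had ((hW d hdu.ne hdv hda hdb).mpr hcd)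
    subst hdv
    -- no further vertices at `a`, `b`, `v`
    have hnone : ∀ w, w ≠ u → w ≠ d → w ≠ a → w ≠ c → ¬ G.Adj a w := by
      intro w w1 w2 w3 w4 haw
      have hcw := (hW w w1 w2 w3 w4).mp haw
      exact hK w haw hcw ((hW2 w w3 w1 w4 w2).mp hcw)
    have hnoneb : ∀ w, w ≠ u → w ≠ d → w ≠ a → w ≠ c → ¬ G.Adj c w := by
      intro w w1 w2 w3 w4 hcw
      exact hnone w w1 w2 w3 w4 ((hW w w1 w2 w3 w4).mpr hcw)
    have hnonev : ∀ w, w ≠ u → w ≠ d → w ≠ a → w ≠ c → ¬ G.Adj d w := by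
      intro w w1 w2 w3 w4 hdw
      exact hnoneb w w1 w2 w3 w4 ((hW2 w w3 w1 w4 w2).mpr hdw)
    have hNa : ∀ x, G.Adj a x ↔ x = u ∨ x = c := by
      intro x
      constructor
      · intro hx
        by_contra hcon
        push Not at hcon
        refine hnone x hcon.1 ?_ hx.ne' hcon.2 hx
        rintro rfl
        exact hva hx.symm
      · rintro (rfl | rfl)
        · exact hau
        · exact hab
    have hNb : ∀ x, G.Adj c x ↔ x = a ∨ x = d := by
      intro x
      constructor
      · intro hx
        by_contra hcon
        push Not at hcon
        refine hnoneb x ?_ hcon.2 hcon.1 hx.ne' hx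
        rintro rfl
        exact hub hx.symm
      · rintro (rfl | rfl)
        · exact hca
        · exact hcd
    have hNv : ∀ x, G.Adj d x ↔ x = u ∨ x = c := by
      intro x
      constructor
      · intro hx
        by_contra hcon
        push Not at hcon
        refine hnonev x hcon.1 hx.ne' ?_ hcon.2 hx
        rintro rfl
        exact hva hx
      · rintro (rfl | rfl)
        · exact hdu
        · exact hcd.symm
    obtain ⟨e, f, hec, hfa, hea, hfc, hef, -, -, hW3⟩ := hrung a c hab (by
      intro t h1 h2
      rw [hNa] at h1
      rw [hNb] at h2
      rcases h1 with rfl | rfl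
      · rcases h2 with rfl | rfl
        · exact hau.ne rfl
        · exact huv.ne rfl
      · rcases h2 with rfl | rfl
        · exact hab.ne rfl
        · exact hcd.ne rfl)
    have hfe : e = u := ((hNa e).mp hea.symm).resolve_right hec
    have hfd : f = d := ((hNb f).mp hfc.symm).resolve_left hfa
    subst hfe hfd
    have hNu : ∀ x, G.Adj e x ↔ x = a ∨ x = f := by
      intro x
      constructor
      · intro hx
        by_contra hcon
        push Not at hcon
        have hxc : x ≠ c := by rintro rfl; exact hub hx
        exact hnonev x hx.ne' hcon.2 hcon.1 hxc ((hW3 x hcon.1 hxc hx.ne' hcon.2).mp hx)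
      · rintro (rfl | rfl)
        · exact hea
        · exact huv
    refine hbad (good_of_C4 hNu hNa hNb hNv hne_ub hne_va ?_)
    refine ih _ ?_ _ (hG.restr _) rfl
    rw [← hn]
    apply Set.ncard_lt_ncard _ (Set.toFinite _)
    refine (Set.ssubset_iff_of_subset ?_).mpr ⟨e, ⟨a, hea⟩, ?_⟩
    · rintro x ⟨y, hxy⟩
      exact ⟨y, hxy.1⟩
    · rintro ⟨y, hxy⟩
      exact hxy.2.1.1 rfl
  · have hbc := (hW c hcu hcv hca.ne hcb).mp hca.symm
    have hbd := (hW2 b hab.ne' hne_ub.symm (Ne.symm hcb) hdb.symm).mp hbc.symm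
    by_cases hdv : d = v
    · subst hdv
      exact hK c hca.symm hbc hcd.symm
    · exact had ((hW d hdu.ne hdv hda hdb).mpr hbd.symm)


/-- Restricting to three colour classes of a bag-injective colouring gives tree-width two. -/
lemma tw2_restr {V ι : Type} {G : SimpleGraph V} {T : SimpleGraph ι} {B : ι → Finset V} {n m : ℕ}
    (h : IsTD G T B m) (c : V → Fin n)
    (hc : ∀ x y, x ≠ y → (∃ i, x ∈ B i ∧ y ∈ B i) → c x ≠ c y) (A : Finset (Fin n))
    (hA : A.card = 3) : TW2 (restr G {v | c v ∈ A}) := by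
  obtain ⟨hT, hE, hconn, -⟩ := h
  refine ⟨ι, T, fun i => (B i).filter (fun v => c v ∈ A), hT, ?_, ?_, ?_⟩
  · rintro x y ⟨hxy, hx, hy⟩
    obtain ⟨i, h1, h2⟩ := hE x y hxy
    exact ⟨i, Finset.mem_filter.mpr ⟨h1, hx⟩, Finset.mem_filter.mpr ⟨h2, hy⟩⟩
  · intro v
    by_cases hv : c v ∈ A
    · have hs : {i | v ∈ (B i).filter (fun v => c v ∈ A)} = {i | v ∈ B i} := by
        ext i
        simp only [Set.mem_ofPred_eq, Finset.mem_filter]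
        tauto
      rw [hs]
      exact hconn v
    · rintro ⟨i, hi⟩
      have hi' : v ∈ (B i).filter (fun v => c v ∈ A) := hi
      exact absurd (Finset.mem_filter.mp hi').2 hv
  · intro i
    rw [← hA]
    apply Finset.card_le_card_of_injOn c
    · intro x hx
      exact (Finset.mem_filter.mp hx).2
    · intro x hx y hy hxy
      by_contra hne
      exact hc x y hne ⟨i, (Finset.mem_filter.mp hx).1, (Finset.mem_filter.mp hy).1⟩ hxy

/-- The vertices of `S` lying on a path with two edges inside `S`. -/
def core {V : Type} (G : SimpleGraph V) (S : Set V) : Set V :=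
  {v | ∃ x y z, x ∈ S ∧ y ∈ S ∧ z ∈ S ∧ G.Adj x y ∧ G.Adj y z ∧ x ≠ z ∧
    (v = x ∨ v = y ∨ v = z)}

lemma core_subset {V : Type} {G : SimpleGraph V} {S : Set V} {v : V} (hv : v ∈ core G S) :
    v ∈ S := by
  obtain ⟨x, y, z, hx, hy, hz, -, -, -, rfl | rfl | rfl⟩ := hv <;> assumption

lemma isStrongForest_core {V : Type} [Fintype V] {G : SimpleGraph V} {S : Set V}
    (h : Deg1 G S) : IsStrongForest G 2 (core G S) := by
  refine ⟨Deg1.isAcyclic fun X hX hXS => h X hX fun x hx => core_subset (hXS x hx), ?_⟩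
  rintro ⟨v, hv⟩
  have hv' := hv
  obtain ⟨x, y, z, hx, hy, hz, hxy, hyz, hxz, hvv⟩ := hv
  have cx : x ∈ core G S := ⟨x, y, z, hx, hy, hz, hxy, hyz, hxz, Or.inl rfl⟩
  have cy : y ∈ core G S := ⟨x, y, z, hx, hy, hz, hxy, hyz, hxz, Or.inr (Or.inl rfl)⟩
  have cz : z ∈ core G S := ⟨x, y, z, hx, hy, hz, hxy, hyz, hxz, Or.inr (Or.inr rfl)⟩
  let H := G.induce (core G S)
  have axy : H.Adj ⟨x, cx⟩ ⟨y, cy⟩ := hxy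
  have ayz : H.Adj ⟨y, cy⟩ ⟨z, cz⟩ := hyz
  have hry : H.Reachable ⟨v, hv'⟩ ⟨y, cy⟩ := by
    rcases hvv with rfl | rfl | rfl
    · exact axy.reachable
    · exact SimpleGraph.Reachable.refl _
    · exact ayz.symm.reachable
  have hrx : H.Reachable ⟨v, hv'⟩ ⟨x, cx⟩ := hry.trans axy.symm.reachable
  have hrz : H.Reachable ⟨v, hv'⟩ ⟨z, cz⟩ := hry.trans ayz.reachable
  have hne : s((⟨x, cx⟩ : core G S), ⟨y, cy⟩) ≠ s(⟨y, cy⟩, ⟨z, cz⟩) := by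
    intro heq
    rw [Sym2.eq_iff] at heq
    simp only [Subtype.mk.injEq] at heq
    rcases heq with ⟨h1, _⟩ | ⟨h1, _⟩
    · exact hxy.ne h1
    · exact hxz h1
  have hsub : ({s((⟨x, cx⟩ : core G S), ⟨y, cy⟩), s(⟨y, cy⟩, ⟨z, cz⟩)} : Set (Sym2 (core G S))) ⊆
      {e | e ∈ H.edgeSet ∧ ∀ w ∈ e, H.Reachable ⟨v, hv'⟩ w} := by
    intro e he
    rcases he with rfl | rfl
    · refine ⟨axy, fun w hw => ?_⟩
      rw [Sym2.mem_iff] at hw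
      rcases hw with rfl | rfl <;> assumption
    · refine ⟨ayz, fun w hw => ?_⟩
      rw [Sym2.mem_iff] at hw
      rcases hw with rfl | rfl <;> assumption
  have := Set.ncard_le_ncard hsub (Set.toFinite _)
  rw [Set.ncard_pair hne] at this
  exact this

lemma valid_of_kValid {V : Type} {G : SimpleGraph V} {u v : V}
    (h : KValid G 2 s(u, v)) : G.Adj u v ∧ Valid G u v := by
  obtain ⟨S, ⟨hac, hst⟩, he, hS⟩ := h
  have huv : G.Adj u v := he
  have hu : u ∈ S := hS u (Sym2.mem_mk_left u v)
  have hv : v ∈ S := hS v (Sym2.mem_mk_right u v)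
  refine ⟨huv, ?_⟩
  by_contra hval
  let H := G.induce S
  have auv : H.Adj ⟨u, hu⟩ ⟨v, hv⟩ := huv
  have hclosed : ∀ w : S, w.1 ≠ u → w.1 ≠ v → ¬ G.Adj u w ∧ ¬ G.Adj v w := by
    intro w h1 h2
    by_contra hcon
    have hboth : G.Adj u w ∧ G.Adj v w := by
      by_contra h3
      exact hval ⟨w, h1, h2, by tauto⟩
    have a1 : H.Adj ⟨u, hu⟩ w := hboth.1
    have a2 : H.Adj w ⟨v, hv⟩ := hboth.2.symm
    have p1 : (SimpleGraph.Walk.cons auv SimpleGraph.Walk.nil).IsPath := by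
      simp [SimpleGraph.Walk.isPath_def, huv.ne]
    have p2 : (SimpleGraph.Walk.cons a1 (SimpleGraph.Walk.cons a2 SimpleGraph.Walk.nil)).IsPath := by
      simp [SimpleGraph.Walk.isPath_def, huv.ne, a1.ne, a2.ne]
    have := (hac.subsingleton_path _ _).elim ⟨_, p1⟩ ⟨_, p2⟩
    have := congrArg (fun p : H.Path ⟨u, hu⟩ ⟨v, hv⟩ => p.1.length) this
    simp at this
  have hreach : ∀ a b : S, H.Walk a b → (a.1 = u ∨ a.1 = v) → (b.1 = u ∨ b.1 = v) := by
    intro a b p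
    induction p with
    | nil => exact id
    | @cons a b d hab _ ih =>
      intro ha
      apply ih
      by_contra hb
      push Not at hb
      have := hclosed b hb.1 hb.2
      have hab' : G.Adj a b := hab
      rcases ha with ha | ha
      · rw [ha] at hab'; exact this.1 hab'
      · rw [ha] at hab'; exact this.2 hab'
  have hle := hst ⟨u, hu⟩
  have hsub : {e | e ∈ H.edgeSet ∧ ∀ x ∈ e, H.Reachable ⟨u, hu⟩ x} ⊆
      {s((⟨u, hu⟩ : S), ⟨v, hv⟩)} := by
    rintro e ⟨he, hr⟩
    induction e with
    | _ a b =>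
    have hab : H.Adj a b := he
    obtain ⟨pa⟩ := hr a (Sym2.mem_mk_left a b)
    obtain ⟨pb⟩ := hr b (Sym2.mem_mk_right a b)
    have ha := hreach _ _ pa (Or.inl rfl)
    have hb := hreach _ _ pb (Or.inl rfl)
    have hne : a.1 ≠ b.1 := fun h => hab.ne (Subtype.ext h)
    rw [Set.mem_singleton_iff, Sym2.eq_iff]
    rcases ha with ha | ha <;> rcases hb with hb | hb
    · exact absurd (ha.trans hb.symm) hne
    · exact Or.inl ⟨Subtype.ext ha, Subtype.ext hb⟩
    · exact Or.inr ⟨Subtype.ext ha, Subtype.ext hb⟩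
    · exact absurd (ha.trans hb.symm) hne
  have := Set.ncard_le_ncard hsub (Set.finite_singleton _)
  rw [Set.ncard_singleton] at this
  have h2 : compEdgeCount (G.induce S) ⟨u, hu⟩ ≤ 1 := this
  omega

/-- A path with two edges containing the edge `uv` inside `S` puts `uv` in the core. -/
lemma mem_core {V : Type} {G : SimpleGraph V} {S : Set V} {u v w : V} (hu : u ∈ S) (hv : v ∈ S)
    (hw : w ∈ S) (huv : G.Adj u v) (hwu : w ≠ u) (hwv : w ≠ v) (h : G.Adj u w ∨ G.Adj v w) :
    u ∈ core G S ∧ v ∈ core G S := by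
  rcases h with h | h
  · exact ⟨⟨w, u, v, hw, hu, hv, h.symm, huv, hwv, by tauto⟩,
      ⟨w, u, v, hw, hu, hv, h.symm, huv, hwv, by tauto⟩⟩
  · exact ⟨⟨u, v, w, hu, hv, hw, huv, h, hwu.symm, by tauto⟩,
      ⟨u, v, w, hu, hv, hw, huv, h, hwu.symm, by tauto⟩⟩

/-- For one triple of colour classes, three forests cover all edges valid inside the triple. -/
lemma cover_restr {V : Type} [Fintype V] {G : SimpleGraph V} {R : Set V} (h : TW2 (restr G R)) :
    ∃ F : Fin 3 → Set V, (∀ k, IsStrongForest G 2 (F k)) ∧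
      ∀ u v, u ∈ R → v ∈ R → G.Adj u v →
        (∃ w ∈ R, w ≠ u ∧ w ≠ v ∧ ((G.Adj u w ∧ ¬ G.Adj v w) ∨ (¬ G.Adj u w ∧ G.Adj v w))) →
        ∃ k, u ∈ F k ∧ v ∈ F k := by
  obtain ⟨c, hc1, hc2⟩ := exists_good _ _ h rfl
  refine ⟨fun k => core G {v | v ∈ R ∧ c v ≠ k}, ?_, ?_⟩
  · intro k
    apply isStrongForest_core
    intro X hX hXS
    obtain ⟨x, hx, hx1⟩ := hc1 k X hX (fun x hx => (hXS x hx).2)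
    exact ⟨x, hx, fun a ha b hb h1 h2 => hx1 a ha b hb ⟨h1, (hXS x hx).1, (hXS a ha).1⟩
      ⟨h2, (hXS x hx).1, (hXS b hb).1⟩⟩
  · rintro u v hu hv huv ⟨w, hw, hwu, hwv, hadj⟩
    have hk : ∀ i j : Fin 3, ∃ k, i ≠ k ∧ j ≠ k := by decide
    by_cases hcuv : c u = c v
    · obtain ⟨k, h1, h2⟩ := hk (c u) (c w)
      exact ⟨k, mem_core ⟨hu, h1⟩ ⟨hv, hcuv ▸ h1⟩ ⟨hw, h2⟩ huv hwu hwv (by tauto)⟩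
    · obtain ⟨x, x1, x2, x3, x4⟩ := hc2 u v ⟨huv, hu, hv⟩ hcuv ⟨w, hwu, hwv, by
        simp only [restr_adj]
        tauto⟩
      obtain ⟨k, h1, h2⟩ := hk (c u) (c v)
      have hxR : x ∈ R := by
        rcases x4 with h | h
        · exact h.2.2
        · exact h.2.2
      have hxk : c x ≠ k := by
        rcases x3 with h | h
        · rw [h]; exact h1
        · rw [h]; exact h2
      refine ⟨k, mem_core ⟨hu, h1⟩ ⟨hv, h2⟩ ⟨hxR, hxk⟩ huv x1 x2 ?_⟩
      rcases x4 with h | h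
      · exact Or.inl h.1
      · exact Or.inr h.1

lemma exists_isTD {V : Type} (G : SimpleGraph V) (t : ℕ) (ht : 2 ≤ t) (htw : treewidth G = t) :
    ∃ (ι : Type) (T : SimpleGraph ι) (B : ι → Finset V), IsTD G T B (t + 1) := by
  have hne : {t | HasTreewidthAtMost G t}.Nonempty := by
    apply Nat.nonempty_of_pos_sInf
    have h : sInf {t | HasTreewidthAtMost G t} = t := htw
    omega
  have hmem : HasTreewidthAtMost G (sInf {t | HasTreewidthAtMost G t}) := Nat.sInf_mem hne
  have h : sInf {t | HasTreewidthAtMost G t} = t := htw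
  rw [h] at hmem
  obtain ⟨ι, T, B, hT, hE, hconn, hcard⟩ := hmem
  refine ⟨ι, T, B, hT, ?_, fun v => (hconn v).preconnected, hcard⟩
  intro x y hxy
  obtain ⟨i, hi⟩ := hE s(x, y) hxy
  exact ⟨i, hi x (Sym2.mem_mk_left x y), hi y (Sym2.mem_mk_right x y)⟩



/-- Every finite simple graph `G` of tree-width `t ≥ 2` has 2-strong
induced arboricity `f₂(G) ≤ 3 * (t+1 choose 3)`. -/
theorem fStrong_two_le_of_treewidth {V : Type} [Fintype V] (G : SimpleGraph V) (t : ℕ)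
    (ht : 2 ≤ t) (htw : treewidth G = t) :
    fStrong G 2 ≤ 3 * (t + 1).choose 3 := by
  obtain ⟨ι, T, B, hTD⟩ := exists_isTD G t ht htw
  obtain ⟨c, hc⟩ := exists_bag_coloring hTD
  have hcov : ∀ A : {A : Finset (Fin (t + 1)) // A ∈ Finset.powersetCard 3 Finset.univ},
      TW2 (restr G {v | c v ∈ A.1}) := fun A =>
    tw2_restr hTD c hc A.1 (Finset.mem_powersetCard.mp A.2).2
  choose F hF1 hF2 using fun A => cover_restr (hcov A)
  have hcard : Nat.card (Fin 3 × {A : Finset (Fin (t + 1)) //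
      A ∈ Finset.powersetCard 3 Finset.univ}) = 3 * (t + 1).choose 3 := by
    rw [Nat.card_prod, Nat.card_fin, Nat.card_eq_fintype_card, Fintype.card_coe,
      Finset.card_powersetCard, Finset.card_univ, Fintype.card_fin]
  let φ := Finite.equivFinOfCardEq hcard
  apply Nat.sInf_le
  refine ⟨fun i => F (φ.symm i).2 (φ.symm i).1, fun i => hF1 _ _, ?_⟩
  intro e he
  induction e with
  | _ u v =>
  obtain ⟨huv, w, hwu, hwv, hadj⟩ := valid_of_kValid he
  obtain ⟨A, hA1, -, hA2⟩ := Finset.exists_subsuperset_card_eq (n := 3)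
    (Finset.subset_univ ({c u, c v, c w} : Finset (Fin (t + 1)))) Finset.card_le_three (by
      rw [Finset.card_univ, Fintype.card_fin]
      omega)
  have hA : A ∈ Finset.powersetCard 3 (Finset.univ : Finset (Fin (t + 1))) :=
    Finset.mem_powersetCard.mpr ⟨Finset.subset_univ _, hA2⟩
  obtain ⟨k, hk1, hk2⟩ := hF2 ⟨A, hA⟩ u v (hA1 (by simp)) (hA1 (by simp)) huv
    ⟨w, hA1 (by simp), hwu, hwv, hadj⟩
  refine ⟨φ (k, ⟨A, hA⟩), huv, ?_⟩
  intro x hx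
  simp only [Equiv.symm_apply_apply]
  rw [Sym2.mem_iff] at hx
  rcases hx with rfl | rfl
  · exact hk1
  · exact hk2

end InducedArboricity
end

section
/- For all positive integers k and d with d ≥ k+1, every finite simple graph G of tree-depth at most d satisfies f_k(G) ≤ (2k)^{k+1}·C(d, k+1), where C(d,k+1) is the binomial coefficient (d choose k+1). -/
open scoped Classical

namespace InducedArboricity

section GraphLemmas

set_option linter.unusedSectionVars false

variable {V : Type} [Fintype V]

lemma acyclic_mono {G : SimpleGraph V} {A B : Set V} (h : A ⊆ B)
    (hB : (G.induce B).IsAcyclic) : (G.induce A).IsAcyclic :=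
  hB.comap (SimpleGraph.induceHomOfLE G h).toHom (SimpleGraph.induceHomOfLE G h).injective

lemma conn_insert {G : SimpleGraph V} {K : Set V} {w z : V}
    (hK : (G.induce K).Connected) (hz : z ∈ K) (hw : G.Adj w z) :
    (G.induce (insert w K)).Connected := by
  have h1 : (G.induce ({w} : Set V)).Preconnected := by
    intro a b
    obtain ⟨a, rfl⟩ := a
    obtain ⟨b, rfl⟩ := b
    exact SimpleGraph.Reachable.refl _
  have := SimpleGraph.connected_induce_union h1 hK.preconnected (Set.mem_singleton w) hz hw
  rwa [Set.singleton_union] at this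

lemma exists_exit {G : SimpleGraph V} {S K : Set V} (hS : (G.induce S).Connected)
    (hKS : K ⊆ S) {z r : V} (hz : z ∈ K) (hr : r ∈ S) (hrK : r ∉ K) :
    ∃ x ∈ K, ∃ w ∈ S, w ∉ K ∧ G.Adj x w := by
  obtain ⟨p⟩ := hS.preconnected ⟨z, hKS hz⟩ ⟨r, hr⟩
  obtain ⟨d, _, h1, h2⟩ := p.exists_boundary_dart {x | x.1 ∈ K} hz hrK
  exact ⟨d.fst.1, h1, d.snd.1, d.snd.2, h2, d.adj⟩

lemma exists_grow {G : SimpleGraph V} {S U K : Set V} (hS : (G.induce S).Connected)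
    (hK : (G.induce K).Connected) (hKS : K ⊆ S ∩ U) {r : V} (hr : r ∈ S) (hrU : r ∉ U) :
    ∃ K', K ⊆ K' ∧ K' ⊆ S ∩ U ∧ (G.induce K').Connected ∧
      ∃ z ∈ K', ∃ w ∈ S, w ∉ U ∧ G.Adj w z := by
  obtain ⟨K', hKK', hmax⟩ := Set.Finite.exists_le_maximal
    (s := {X : Set V | K ⊆ X ∧ X ⊆ S ∩ U ∧ (G.induce X).Connected})
    (Set.toFinite _) (a := K) ⟨le_refl _, hKS, hK⟩
  obtain ⟨h1, h2, h3⟩ := hmax.prop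
  obtain ⟨z0⟩ := h3.nonempty
  obtain ⟨x, hx, w, hw, hwK, ha⟩ := exists_exit hS (fun y hy => (h2 hy).1) z0.2 hr
    (fun h => hrU (h2 h).2)
  refine ⟨K', h1, h2, h3, x, hx, w, hw, ?_, ha.symm⟩
  intro hwU
  have h4 : insert w K' ≤ K' := hmax.le_of_ge
    ⟨h1.trans (Set.subset_insert _ _), Set.insert_subset ⟨hw, hwU⟩ h2,
      conn_insert h3 hx ha.symm⟩ (Set.subset_insert _ _)
  exact hwK (h4 (Set.mem_insert _ _))

lemma exists_grow_card {G : SimpleGraph V} {S K : Set V} (hS : (G.induce S).Connected)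
    (hK : (G.induce K).Connected) (hKS : K ⊆ S) {n : ℕ} (h1 : K.ncard ≤ n)
    (h2 : n ≤ S.ncard) :
    ∃ K', K ⊆ K' ∧ K' ⊆ S ∧ (G.induce K').Connected ∧ K'.ncard = n := by
  obtain ⟨K', hKK', hmax⟩ := Set.Finite.exists_le_maximal
    (s := {X : Set V | K ⊆ X ∧ X ⊆ S ∧ (G.induce X).Connected ∧ X.ncard ≤ n})
    (Set.toFinite _) (a := K) ⟨le_refl _, hKS, hK, h1⟩
  obtain ⟨h3, h4, h5, h6⟩ := hmax.prop
  refine ⟨K', h3, h4, h5, ?_⟩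
  by_contra hne
  have hlt : K'.ncard < n := lt_of_le_of_ne h6 hne
  obtain ⟨r, hr, hrK⟩ := Set.exists_mem_notMem_of_ncard_lt_ncard (lt_of_lt_of_le hlt h2)
  obtain ⟨z0⟩ := h5.nonempty
  obtain ⟨x, hx, w, hw, hwK, ha⟩ := exists_exit hS h4 z0.2 hr hrK
  have h7 : insert w K' ≤ K' := hmax.le_of_ge
    ⟨h3.trans (Set.subset_insert _ _), Set.insert_subset hw h4,
      conn_insert h5 hx ha.symm, by rw [Set.ncard_insert_of_notMem hwK]; omega⟩
    (Set.subset_insert _ _)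
  exact hwK (h7 (Set.mem_insert _ _))

lemma acyclic_of_retract {G : SimpleGraph V} {F : Set V}
    (h : ∀ a ∈ F, ∀ b ∈ F, G.Adj a b → ∃ P : Set V, ∃ p ∈ P, a ∈ P ∧ b ∈ P ∧
      (G.induce P).IsAcyclic ∧ ∀ z ∈ P, ∀ z' ∈ F, z' ∉ P → G.Adj z z' → z = p) :
    (G.induce F).IsAcyclic := by
  rw [SimpleGraph.isAcyclic_iff_forall_adj_isBridge]
  rintro ⟨a, ha⟩ ⟨b, hb⟩ hab
  obtain ⟨P, p, hp, haP, hbP, hac, hP⟩ := h a ha b hb hab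
  rw [SimpleGraph.isBridge_iff]
  have hbr := (SimpleGraph.isAcyclic_iff_forall_adj_isBridge.1 hac)
    (v := ⟨a, haP⟩) (w := ⟨b, hbP⟩) hab
  rw [SimpleGraph.isBridge_iff] at hbr
  intro hreach
  apply hbr
  let ρ : F → P := fun z => if hz : z.1 ∈ P then ⟨z.1, hz⟩ else ⟨p, hp⟩
  have key : ∀ x y : F, ((G.induce F).deleteEdges {s(⟨a, ha⟩, ⟨b, hb⟩)}).Reachable x y →
      ((G.induce P).deleteEdges {s(⟨a, haP⟩, ⟨b, hbP⟩)}).Reachable (ρ x) (ρ y) := by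
    rintro x y ⟨w⟩
    induction w with
    | nil => exact SimpleGraph.Reachable.refl _
    | @cons x y z hxy w ih =>
      refine SimpleGraph.Reachable.trans ?_ ih
      obtain ⟨x, hx⟩ := x
      obtain ⟨y, hy⟩ := y
      simp only [SimpleGraph.deleteEdges_adj, SimpleGraph.comap_adj,
        Function.Embedding.subtype_apply, Set.mem_singleton_iff] at hxy
      obtain ⟨hxy, hne⟩ := hxy
      by_cases hxP : x ∈ P <;> by_cases hyP : y ∈ P
      · apply SimpleGraph.Adj.reachable
        simp only [ρ, hxP, hyP, dif_pos, SimpleGraph.deleteEdges_adj, SimpleGraph.comap_adj,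
          Function.Embedding.subtype_apply, Set.mem_singleton_iff]
        refine ⟨hxy, ?_⟩
        intro heq
        apply hne
        simpa [Sym2.eq_iff] using heq
      · have := hP x hxP y hy hyP hxy
        subst this
        simp only [ρ, hxP, hyP, dif_pos, dif_neg, not_false_eq_true]
        exact SimpleGraph.Reachable.refl _
      · have := hP y hyP x hx hxP hxy.symm
        subst this
        simp only [ρ, hxP, hyP, dif_pos, dif_neg, not_false_eq_true]
        exact SimpleGraph.Reachable.refl _
      · simp only [ρ, hxP, hyP, dif_neg, not_false_eq_true]
        exact SimpleGraph.Reachable.refl _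
  have := key _ _ hreach
  simpa only [ρ, haP, hbP, dif_pos] using this

lemma le_compEdgeCount {G : SimpleGraph V} {F Z : Set V} (hZF : Z ⊆ F) {z : V} (hz : z ∈ Z)
    (hZ : (G.induce Z).Connected) {k : ℕ} (hk : k + 1 ≤ Z.ncard) :
    k ≤ compEdgeCount (G.induce F) ⟨z, hZF hz⟩ := by
  have h1 := hZ.card_vert_le_card_edgeSet_add_one
  have h2 : Nat.card Z = Z.ncard := rfl
  have h3 : k ≤ (G.induce Z).edgeSet.ncard := by
    have : Nat.card (G.induce Z).edgeSet = (G.induce Z).edgeSet.ncard := rfl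
    omega
  refine h3.trans ?_
  unfold compEdgeCount
  let f : Z → F := fun x => ⟨x.1, hZF x.2⟩
  have hf : Function.Injective f := by
    intro x y h
    exact Subtype.ext (congrArg (fun t : F => t.1) h)
  apply Set.ncard_le_ncard_of_injOn (Sym2.map f)
  · intro e he
    induction e using Sym2.ind with
    | _ a b =>
      refine ⟨he, ?_⟩
      intro x hx
      have hreach : ∀ y : Z, (G.induce F).Reachable ⟨z, hZF hz⟩ (f y) := fun y =>
        (hZ.preconnected ⟨z, hz⟩ y).map (SimpleGraph.induceHomOfLE G hZF).toHom
      simp only [Sym2.map_mk, Sym2.mem_iff] at hx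
      rcases hx with rfl | rfl
      · exact hreach a
      · exact hreach b
  · exact (Sym2.map.injective hf).injOn

lemma exists_tree_of_strong {G : SimpleGraph V} {k : ℕ} (hk : 1 ≤ k) {S : Set V}
    (hS : IsStrongForest G k S) {u v : V} (hu : u ∈ S) (hv : v ∈ S) (huv : G.Adj u v) :
    ∃ K ⊆ S, u ∈ K ∧ v ∈ K ∧ (G.induce K).Connected ∧ (G.induce K).IsAcyclic ∧
      K.ncard = k + 1 := by
  let C : Set V := {x | ∃ hx : x ∈ S, (G.induce S).Reachable ⟨u, hu⟩ ⟨x, hx⟩}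
  have hCS : C ⊆ S := fun x hx => hx.1
  have huC : u ∈ C := ⟨hu, SimpleGraph.Reachable.refl _⟩
  have hvC : v ∈ C := ⟨hv, SimpleGraph.Adj.reachable huv⟩
  have hClosed : ∀ x ∈ C, ∀ w ∈ S, G.Adj x w → w ∈ C := by
    rintro x ⟨hx, hr⟩ w hw ha
    exact ⟨hw, hr.trans (SimpleGraph.Adj.reachable ha)⟩
  have hpair := SimpleGraph.induce_pair_connected_of_adj huv
  have hCconn : (G.induce C).Connected := by
    obtain ⟨K', hKK', hmax⟩ := Set.Finite.exists_le_maximal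
      (s := {X : Set V | {u, v} ⊆ X ∧ X ⊆ C ∧ (G.induce X).Connected})
      (Set.toFinite _) (a := {u, v}) ⟨le_refl _, by
        intro x hx; rcases hx with rfl | rfl <;> assumption, hpair⟩
    obtain ⟨h3, h4, h5⟩ := hmax.prop
    have : K' = C := by
      apply subset_antisymm h4
      rintro x ⟨hx, ⟨p⟩⟩
      by_contra hxK
      obtain ⟨d, _, h1, h2⟩ := p.exists_boundary_dart {x | x.1 ∈ K'} (h3 (by simp)) hxK
      have hd : G.Adj d.fst.1 d.snd.1 := d.adj
      have h7 : insert d.snd.1 K' ≤ K' := hmax.le_of_ge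
        ⟨h3.trans (Set.subset_insert _ _),
          Set.insert_subset (hClosed _ (h4 h1) _ d.snd.2 hd) h4,
          conn_insert h5 h1 hd.symm⟩
        (Set.subset_insert _ _)
      exact h2 (h7 (Set.mem_insert _ _))
    rw [← this]; exact h5
  have hCac : (G.induce C).IsAcyclic := acyclic_mono hCS hS.1
  have htree : (G.induce C).IsTree := ⟨hCconn, hCac⟩
  have hcard := (SimpleGraph.isTree_iff_connected_and_card.1 htree).2
  have hle : compEdgeCount (G.induce S) ⟨u, hu⟩ ≤ (G.induce C).edgeSet.ncard := by
    unfold compEdgeCount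
    let f : C → S := fun x => ⟨x.1, hCS x.2⟩
    have : {e | e ∈ (G.induce S).edgeSet ∧ ∀ x ∈ e, (G.induce S).Reachable ⟨u, hu⟩ x} ⊆
        Sym2.map f '' (G.induce C).edgeSet := by
      rintro e ⟨he, hr⟩
      induction e using Sym2.ind with
      | _ a b =>
        refine ⟨s(⟨a.1, a.2, hr a (by simp)⟩, ⟨b.1, b.2, hr b (by simp)⟩), he, ?_⟩
        simp [f]
    exact (Set.ncard_le_ncard this (Set.toFinite _)).trans (Set.ncard_image_le (Set.toFinite _))
  have h1 := hS.2 ⟨u, hu⟩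
  have h2 : Nat.card C = C.ncard := rfl
  have h3 : Nat.card (G.induce C).edgeSet = (G.induce C).edgeSet.ncard := rfl
  obtain ⟨K, hK1, hK2, hK3, hK4⟩ := exists_grow_card (n := k + 1) hCconn hpair
    (by intro x hx; rcases hx with rfl | rfl <;> assumption)
    (by rw [Set.ncard_pair huv.ne]; omega) (by omega)
  exact ⟨K, hK2.trans hCS, hK1 (by simp), hK1 (by simp), hK3, acyclic_mono hK2 hCac, hK4⟩

end GraphLemmas
/-- A set-level sufficient form of being a strong forest. -/
def StrongSet {V : Type} (G : SimpleGraph V) (k : ℕ) (F : Set V) : Prop :=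
  (G.induce F).IsAcyclic ∧ ∀ z ∈ F, ∃ Z ⊆ F, z ∈ Z ∧ (G.induce Z).Connected ∧ k + 1 ≤ Z.ncard

/-- The data of a rooted forest order in which the edges of `G` join comparable vertices,
with level function `lev` (bounded by `k`) and ancestor function `anc`. -/
structure TreeOrd {V : Type} [PartialOrder V] (G : SimpleGraph V) (k : ℕ) where
  lev : V → ℕ
  anc : V → ℕ → V
  chain : ∀ {a b v : V}, a ≤ v → b ≤ v → a ≤ b ∨ b ≤ a
  comp : ∀ {u v : V}, G.Adj u v → u ≤ v ∨ v ≤ u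
  lev_lt : ∀ {u v : V}, u < v → lev u < lev v
  anc_le : ∀ {v : V} {i : ℕ}, i ≤ lev v → anc v i ≤ v
  lev_anc : ∀ {v : V} {i : ℕ}, i ≤ lev v → lev (anc v i) = i
  lev_le : ∀ v, lev v ≤ k

namespace TreeOrd

variable {V : Type} [Fintype V] [PartialOrder V] {G : SimpleGraph V} {k : ℕ} (T : TreeOrd G k)

set_option linter.unusedSectionVars false

lemma lev_mono {a b : V} (h : a ≤ b) : T.lev a ≤ T.lev b := by
  rcases h.eq_or_lt with rfl | h
  · exact le_rfl
  · exact (T.lev_lt h).le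

lemma le_of_lev {a b v : V} (ha : a ≤ v) (hb : b ≤ v) (h : T.lev a ≤ T.lev b) : a ≤ b := by
  rcases T.chain ha hb with h1 | h1
  · exact h1
  · rcases h1.eq_or_lt with rfl | h1
    · exact le_rfl
    · have := T.lev_lt h1
      omega

lemma eq_of_lev {a b v : V} (ha : a ≤ v) (hb : b ≤ v) (h : T.lev a = T.lev b) : a = b :=
  le_antisymm (T.le_of_lev ha hb h.le) (T.le_of_lev hb ha h.ge)

lemma anc_eq {a v : V} (h : a ≤ v) : T.anc v (T.lev a) = a :=
  T.eq_of_lev (T.anc_le (T.lev_mono h)) h (T.lev_anc (T.lev_mono h))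

lemma anc_self (v : V) : T.anc v (T.lev v) = v := T.anc_eq le_rfl

lemma anc_mono {v : V} {i j : ℕ} (hij : i ≤ j) (hj : j ≤ T.lev v) : T.anc v i ≤ T.anc v j :=
  T.le_of_lev (T.anc_le (hij.trans hj)) (T.anc_le hj)
    (by rw [T.lev_anc (hij.trans hj), T.lev_anc hj]; exact hij)

lemma anc_anc {v : V} {i j : ℕ} (hij : i ≤ j) (hj : j ≤ T.lev v) :
    T.anc (T.anc v j) i = T.anc v i := by
  have h := T.anc_eq (T.anc_mono hij hj)
  rwa [T.lev_anc (hij.trans hj)] at h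

lemma exists_top (T : TreeOrd G k) {S : Set V} (hS : (G.induce S).Connected) : ∃ r ∈ S, ∀ s ∈ S, r ≤ s := by
  obtain ⟨z⟩ := hS.nonempty
  obtain ⟨r, hr, hmin⟩ := Set.exists_min_image S T.lev (Set.toFinite _) ⟨z.1, z.2⟩
  refine ⟨r, hr, ?_⟩
  by_contra hcon
  push Not at hcon
  obtain ⟨s, hs, hrs⟩ := hcon
  obtain ⟨x, ⟨hx, hxr⟩, w, hw, hwK, ha⟩ := exists_exit (K := {x | x ∈ S ∧ r ≤ x}) hS
    (fun x hx => hx.1) (z := r) ⟨hr, le_rfl⟩ hs (fun h => hrs h.2)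
  apply hwK
  refine ⟨hw, ?_⟩
  rcases T.comp ha with h | h
  · exact hxr.trans h
  · exact T.le_of_lev hxr h (hmin w hw)

/-- `c` together with a connected part of `S` below the level `i + 1` ancestor of `v`
contains `u` and `v`. -/
def Pet (S : Set V) (u v c : V) (i : ℕ) : Prop :=
  ∃ K ⊆ S, (∀ x ∈ K, T.anc v (i + 1) ≤ x) ∧ (G.induce (insert c K)).Connected ∧
    u ∈ insert c K ∧ v ∈ insert c K

lemma exit_aux {S : Set V} (hS : (G.induce S).Connected) {r u v : V} (hr : r ∈ S)
    (hrS : ∀ s ∈ S, r ≤ s) (hu : u ∈ S) (hv : v ∈ S) (huv : G.Adj u v) (hlt : u < v) (n : ℕ) :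
    ∀ i, i + 1 + n = T.lev v → T.lev r ≤ i → ∃ cl : ℕ → ℕ,
      cl (T.lev v - 1) = T.lev u ∧
      (∀ i', i ≤ i' → i' < T.lev v → T.lev r ≤ cl i' ∧ cl i' ≤ i' ∧ T.anc v (cl i') ∈ S ∧
        T.Pet S u v (T.anc v (cl i')) i') ∧
      (∀ i₁ i₂, i ≤ i₁ → i₁ ≤ i₂ → i₂ < T.lev v → cl i₂ ≤ i₁ → cl i₁ = cl i₂) := by
  induction n with
  | zero =>
    intro i hi hri
    have hul := T.lev_lt hlt
    refine ⟨fun _ => T.lev u, rfl, ?_, fun _ _ _ _ _ _ => rfl⟩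
    intro i' h1 h2
    have hi' : i' = i := by omega
    subst hi'
    have hau : T.anc v (T.lev u) = u := T.anc_eq hlt.le
    refine ⟨T.lev_mono (hrS u hu), by show T.lev u ≤ i'; omega, by rw [hau]; exact hu, {v}, ?_, ?_, ?_, ?_, ?_⟩
    · simpa using hv
    · intro x hx
      rw [Set.mem_singleton_iff] at hx
      subst hx
      exact T.anc_le (by omega)
    · rw [hau]
      exact SimpleGraph.induce_pair_connected_of_adj huv
    · rw [hau]; simp
    · simp
  | succ n ih =>
    intro i hi hri
    obtain ⟨cl, h1, h2, h3⟩ := ih (i + 1) (by omega) (by omega)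
    obtain ⟨ha, hb, hc, hd⟩ := h2 (i + 1) le_rfl (by omega)
    by_cases hj : cl (i + 1) ≤ i
    · refine ⟨fun x => if x = i then cl (i + 1) else cl x, ?_, ?_, ?_⟩
      · simp only
        rw [if_neg (by omega)]; exact h1
      · intro i' hi1 hi2
        simp only
        by_cases hii : i' = i
        · subst hii
          rw [if_pos rfl]
          refine ⟨ha, hj, hc, ?_⟩
          obtain ⟨K, hK1, hK2, hK3, hK4⟩ := hd
          exact ⟨K, hK1, fun x hx => (T.anc_mono (by omega) (by omega)).trans (hK2 x hx), hK3, hK4⟩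
        · rw [if_neg hii]
          exact h2 i' (by omega) hi2
      · intro i₁ i₂ g1 g2 g3
        simp only
        by_cases e1 : i₁ = i
        · by_cases e2 : i₂ = i
          · simp [e1, e2]
          · rw [if_pos e1, if_neg e2]
            intro g4
            exact h3 (i + 1) i₂ le_rfl (by omega) g3 (by omega)
        · rw [if_neg e1, if_neg (by omega)]
          exact h3 i₁ i₂ (by omega) g2 g3
    · have hj' : cl (i + 1) = i + 1 := by omega
      rw [hj'] at ha hc hd
      obtain ⟨K, hK1, hK2, hK3, hK4, hK5⟩ := hd
      have hrU : r ∉ {x | T.anc v (i + 1) ≤ x} := by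
        intro h
        have := T.lev_mono h
        rw [T.lev_anc (by omega)] at this
        omega
      obtain ⟨K', hKK', hK', hKc, z, hz, w, hw, hwU, hadj⟩ := exists_grow
        (U := {x | T.anc v (i + 1) ≤ x}) hS hK3
        (by
          intro x hx
          rcases hx with rfl | hx
          · exact ⟨hc, le_refl _⟩
          · exact ⟨hK1 hx, (T.anc_mono (by omega) (by omega)).trans (hK2 x hx)⟩) hr hrU
      have hzU : T.anc v (i + 1) ≤ z := (hK' hz).2
      have hwU' : ¬ T.anc v (i + 1) ≤ w := hwU
      have hwz : w ≤ z := by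
        rcases T.comp hadj with h | h
        · exact h
        · exact absurd (hzU.trans h) hwU'
      have hwa : w ≤ T.anc v (i + 1) := by
        rcases T.chain hwz hzU with h | h
        · exact h
        · exact absurd h hwU'
      have hwlev : T.lev w < i + 1 := by
        have := T.lev_lt (lt_of_le_of_ne hwa (fun h => hwU' h.ge))
        rwa [T.lev_anc (by omega)] at this
      have hwv : T.anc v (T.lev w) = w := T.anc_eq (hwa.trans (T.anc_le (by omega)))
      refine ⟨fun x => if x = i then T.lev w else cl x, ?_, ?_, ?_⟩
      · simp only
        rw [if_neg (by omega)]; exact h1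
      · intro i' hi1 hi2
        simp only
        by_cases hii : i' = i
        · subst hii
          rw [if_pos rfl, hwv]
          exact ⟨T.lev_mono (hrS w hw), by omega, hw, K', fun x hx => (hK' hx).1,
            fun x hx => (hK' hx).2, conn_insert hKc hz hadj, Or.inr (hKK' hK4),
            Or.inr (hKK' hK5)⟩
        · rw [if_neg hii]
          exact h2 i' (by omega) hi2
      · intro i₁ i₂ g1 g2 g3
        simp only
        by_cases e1 : i₁ = i
        · by_cases e2 : i₂ = i
          · simp [e1, e2]
          · rw [if_pos e1, if_neg e2]
            intro g4
            have := h3 (i + 1) i₂ le_rfl (by omega) g3 (by omega)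
            omega
        · rw [if_neg e1, if_neg (by omega)]
          exact h3 i₁ i₂ (by omega) g2 g3

lemma exists_cl {S : Set V} (hS : (G.induce S).Connected) {r u v : V} (hr : r ∈ S)
    (hrS : ∀ s ∈ S, r ≤ s) (hu : u ∈ S) (hv : v ∈ S) (huv : G.Adj u v) (hlt : u < v) :
    ∃ cl : ℕ → ℕ,
      cl (T.lev v - 1) = T.lev u ∧
      (∀ i', T.lev r ≤ i' → i' < T.lev v → T.lev r ≤ cl i' ∧ cl i' ≤ i' ∧ T.anc v (cl i') ∈ S ∧
        T.Pet S u v (T.anc v (cl i')) i') ∧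
      (∀ i₁ i₂, T.lev r ≤ i₁ → i₁ ≤ i₂ → i₂ < T.lev v → cl i₂ ≤ i₁ → cl i₁ = cl i₂) := by
  have h1 := T.lev_lt hlt
  have h2 := T.lev_mono (hrS u hu)
  exact T.exit_aux hS hr hrS hu hv huv hlt (T.lev v - T.lev r - 1) (T.lev r) (by omega) le_rfl

lemma poor_forest {I : Type} (S : I → Set V) (r : I → V) (hinj : Function.Injective r)
    (ht : ∀ i i', T.lev (r i) = T.lev (r i')) (hr : ∀ i, r i ∈ S i) (hS : ∀ i, ∀ s ∈ S i, r i ≤ s)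
    (hc : ∀ i, (G.induce (S i)).Connected) (ha : ∀ i, (G.induce (S i)).IsAcyclic)
    (hn : ∀ i, k + 1 ≤ (S i).ncard) : StrongSet G k (⋃ i, S i) := by
  have key : ∀ i i' z z', z ∈ S i → z' ∈ S i' → (z ≤ z' ∨ z' ≤ z) → i = i' := by
    intro i i' z z' hz hz' h
    apply hinj
    rcases h with h | h
    · exact T.eq_of_lev ((hS i z hz).trans h) (hS i' z' hz') (ht _ _)
    · exact T.eq_of_lev (hS i z hz) ((hS i' z' hz').trans h) (ht _ _)
  constructor
  · apply acyclic_of_retract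
    intro a ha' b hb hab
    obtain ⟨i, hi⟩ := Set.mem_iUnion.1 ha'
    obtain ⟨i', hi'⟩ := Set.mem_iUnion.1 hb
    have := key i i' a b hi hi' (T.comp hab)
    subst this
    refine ⟨S i, r i, hr i, hi, hi', ha i, ?_⟩
    intro z hz z' hz' hzn hadj
    obtain ⟨i'', hi''⟩ := Set.mem_iUnion.1 hz'
    have := key i i'' z z' hz hi'' (T.comp hadj)
    subst this
    exact absurd hi'' hzn
  · intro z hz
    obtain ⟨i, hi⟩ := Set.mem_iUnion.1 hz
    exact ⟨S i, Set.subset_iUnion _ i, hi, hc i, hn i⟩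

lemma rich_forest (B : Set V) (c : V → V) (K : V → Set V) (t j : ℕ) (htj : t ≤ j)
    (hB : ∀ b ∈ B, T.lev b = j + 1) (hcb : ∀ b ∈ B, c b ≤ b) (hct : ∀ b ∈ B, T.lev (c b) = t)
    (hK : ∀ b ∈ B, ∀ x ∈ K b, b ≤ x) (hne : ∀ b ∈ B, (K b).Nonempty)
    (hc : ∀ b ∈ B, (G.induce (insert (c b) (K b))).Connected)
    (ha : ∀ b ∈ B, (G.induce (insert (c b) (K b))).IsAcyclic)
    (hn : ∀ b ∈ B, k ≤ {b' | b' ∈ B ∧ c b' = c b}.ncard) :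
    StrongSet G k (⋃ b ∈ B, insert (c b) (K b)) := by
  have hcK : ∀ b ∈ B, c b ∉ K b := by
    intro b hb h
    have := T.lev_mono (hK b hb _ h)
    rw [hB b hb, hct b hb] at this
    omega
  -- an element of one block adjacent to a non-root element of another
  have key : ∀ b ∈ B, ∀ b' ∈ B, ∀ z ∈ K b, ∀ z' ∈ insert (c b') (K b'), G.Adj z z' →
      z' ∈ insert (c b) (K b) := by
    intro b hb b' hb' z hz z' hz' hadj
    rcases hz' with rfl | hz'
    · left
      have hlt : c b' ≤ z := by
        rcases T.comp hadj with h | h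
        · have := T.lev_mono ((hK b hb z hz).trans h)
          rw [hB b hb, hct b' hb'] at this
          omega
        · exact h
      exact T.eq_of_lev hlt ((hcb b hb).trans (hK b hb z hz)) (by rw [hct b hb, hct b' hb'])
    · have : b = b' := by
        rcases T.comp hadj with h | h
        · exact T.eq_of_lev ((hK b hb z hz).trans h) (hK b' hb' z' hz') (by rw [hB b hb, hB b' hb'])
        · exact T.eq_of_lev (hK b hb z hz) ((hK b' hb' z' hz').trans h) (by rw [hB b hb, hB b' hb'])
      subst this
      exact Or.inr hz'
  constructor
  · apply acyclic_of_retract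
    intro x hx y hy hxy
    simp only [Set.mem_iUnion, exists_prop] at hx hy
    obtain ⟨b, hb, hxb⟩ := hx
    obtain ⟨b', hb', hyb⟩ := hy
    have : ∃ b ∈ B, x ∈ insert (c b) (K b) ∧ y ∈ insert (c b) (K b) := by
      rcases hxb with rfl | hxb
      · rcases hyb with rfl | hyb
        · exfalso
          have hne := hxy.ne
          rcases T.comp hxy with h | h
          · exact hne (T.eq_of_lev h le_rfl (by rw [hct b hb, hct b' hb']))
          · exact hne (T.eq_of_lev le_rfl h (by rw [hct b hb, hct b' hb']))
        · exact ⟨b', hb', key b' hb' b hb y hyb _ (Or.inl rfl) hxy.symm, Or.inr hyb⟩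
      · exact ⟨b, hb, Or.inr hxb, key b hb b' hb' x hxb y hyb hxy⟩
    obtain ⟨b, hb, h1, h2⟩ := this
    refine ⟨_, c b, Or.inl rfl, h1, h2, ha b hb, ?_⟩
    intro z hz z' hz' hzn hadj
    simp only [Set.mem_iUnion, exists_prop] at hz'
    obtain ⟨b'', hb'', hz''⟩ := hz'
    rcases hz with rfl | hz
    · rfl
    · exact absurd (key b hb b'' hb'' z hz z' hz'' hadj) hzn
  · intro z hz
    simp only [Set.mem_iUnion, exists_prop] at hz
    obtain ⟨b, hb, hz⟩ := hz
    refine ⟨⋃ b' ∈ {b' | b' ∈ B ∧ c b' = c b}, insert (c b') (K b'), ?_, ?_, ?_, ?_⟩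
    · intro x hx
      simp only [Set.mem_iUnion, exists_prop] at hx ⊢
      obtain ⟨b', ⟨h1, _⟩, h2⟩ := hx
      exact ⟨b', h1, h2⟩
    · simp only [Set.mem_iUnion, exists_prop]
      exact ⟨b, ⟨hb, rfl⟩, hz⟩
    · apply SimpleGraph.induce_connected_of_patches (c b)
      · simp only [Set.mem_iUnion, exists_prop]
        exact ⟨b, ⟨hb, rfl⟩, Or.inl rfl⟩
      · intro v hv
        simp only [Set.mem_iUnion, exists_prop] at hv
        obtain ⟨b', ⟨h1, h2⟩, h3⟩ := hv
        refine ⟨insert (c b') (K b'), ?_, Or.inl h2.symm, h3, (hc b' h1).preconnected _ _⟩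
        intro x hx
        simp only [Set.mem_iUnion, exists_prop]
        exact ⟨b', ⟨h1, h2⟩, hx⟩
    · choose! w hw using hne
      have hinj : Set.InjOn w {b' | b' ∈ B ∧ c b' = c b} := by
        rintro b1 ⟨h1, _⟩ b2 ⟨h2, _⟩ h
        have h3 := hK b1 h1 _ (hw b1 h1)
        have h4 := hK b2 h2 _ (hw b2 h2)
        rw [← h] at h4
        exact T.eq_of_lev h3 h4 (by rw [hB b1 h1, hB b2 h2])
      have hnot : c b ∉ w '' {b' | b' ∈ B ∧ c b' = c b} := by
        rintro ⟨b', ⟨h1, h2⟩, h3⟩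
        apply hcK b' h1
        rw [h2, ← h3]
        exact hw b' h1
      have hcard : (insert (c b) (w '' {b' | b' ∈ B ∧ c b' = c b})).ncard =
          {b' | b' ∈ B ∧ c b' = c b}.ncard + 1 := by
        rw [Set.ncard_insert_of_notMem hnot, hinj.ncard_image]
      have := hn b hb
      calc k + 1 ≤ (insert (c b) (w '' {b' | b' ∈ B ∧ c b' = c b})).ncard := by omega
        _ ≤ _ := by
          apply Set.ncard_le_ncard _ (Set.toFinite _)
          rintro x (rfl | ⟨b', ⟨h1, h2⟩, rfl⟩)
          · simp only [Set.mem_iUnion, exists_prop]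
            exact ⟨b, ⟨hb, rfl⟩, Or.inl rfl⟩
          · simp only [Set.mem_iUnion, exists_prop]
            exact ⟨b', ⟨h1, h2⟩, Or.inr (hw b' h1)⟩

end TreeOrd
namespace TreeOrd

variable {V : Type} [Fintype V] [PartialOrder V] {G : SimpleGraph V} {k : ℕ} (T : TreeOrd G k)

set_option linter.unusedSectionVars false

/-- The children of `x` whose subtree contains a neighbour of `c`. -/
def Br (c x : V) : Set V :=
  {b | x ≤ b ∧ T.lev b = T.lev x + 1 ∧ ∃ w, b ≤ w ∧ G.Adj c w}

/-- The chosen data attached to an edge `u < v`. -/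
structure Good (u v : V) (S : Set V) (r : V) (i0 : ℕ) (cl : ℕ → ℕ) : Prop where
  conn : (G.induce S).Connected
  acyc : (G.induce S).IsAcyclic
  hr : r ∈ S
  top : ∀ s ∈ S, r ≤ s
  hu : u ∈ S
  hv : v ∈ S
  lt : u < v
  le0 : T.lev r ≤ i0
  le1 : i0 ≤ T.lev v
  cl_last : cl (T.lev v - 1) = T.lev u
  cl_ge : ∀ i, T.lev r ≤ i → i < T.lev v → T.lev r ≤ cl i
  cl_le : ∀ i, T.lev r ≤ i → i < T.lev v → cl i ≤ i
  cl_cons : ∀ i₁ i₂, T.lev r ≤ i₁ → i₁ ≤ i₂ → i₂ < T.lev v → cl i₂ ≤ i₁ → cl i₁ = cl i₂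
  poor : ∀ i, i0 ≤ i → i < T.lev v →
    T.anc v (i + 1) ∈ T.Br (T.anc v (cl i)) (T.anc v i) ∧
      (T.Br (T.anc v (cl i)) (T.anc v i)).ncard < k
  size : i0 = T.lev r → k + 1 ≤ S.ncard
  rich : T.lev r < i0 → k ≤ (T.Br r (T.anc v (i0 - 1))).ncard ∧ ∀ s ∈ S, s = r ∨ T.anc v i0 ≤ s

/-- The edge `u v` has a rich petal at level `j`. -/
def RichAt (u v : V) (j : ℕ) : Prop :=
  j < T.lev v ∧ ∃ c ≤ T.anc v j, ∃ K : Set V, (∀ x ∈ K, T.anc v (j + 1) ≤ x) ∧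
    (G.induce (insert c K)).Connected ∧ (G.induce (insert c K)).IsAcyclic ∧
    u ∈ insert c K ∧ v ∈ insert c K ∧ k ≤ (T.Br c (T.anc v j)).ncard

lemma good_of_set {u v r : V} {S : Set V} {i0 : ℕ}
    (conn : (G.induce S).Connected) (acyc : (G.induce S).IsAcyclic) (hr : r ∈ S)
    (top : ∀ s ∈ S, r ≤ s) (hu : u ∈ S) (hv : v ∈ S) (huv : G.Adj u v) (lt : u < v)
    (le0 : T.lev r ≤ i0) (le1 : i0 ≤ T.lev v) (hR : ∀ i, i0 ≤ i → ¬ T.RichAt u v i)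
    (size : i0 = T.lev r → k + 1 ≤ S.ncard)
    (rich : T.lev r < i0 →
      k ≤ (T.Br r (T.anc v (i0 - 1))).ncard ∧ ∀ s ∈ S, s = r ∨ T.anc v i0 ≤ s) :
    ∃ cl, T.Good u v S r i0 cl := by
  obtain ⟨cl, h1, h2, h3⟩ := T.exists_cl conn hr top hu hv huv lt
  refine ⟨cl, conn, acyc, hr, top, hu, hv, lt, le0, le1, h1, fun i a b => (h2 i a b).1,
    fun i a b => (h2 i a b).2.1, h3, ?_, size, rich⟩
  intro i ha hb
  obtain ⟨-, hcl, hcS, K, hKS, hKa, hKc, hKu, hKv⟩ := h2 i (le0.trans ha) hb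
  have hac : (G.induce (insert (T.anc v (cl i)) K)).IsAcyclic :=
    acyclic_mono (Set.insert_subset hcS hKS) acyc
  constructor
  · refine ⟨T.anc_mono (Nat.le_succ i) hb, ?_, ?_⟩
    · rw [T.lev_anc hb, T.lev_anc hb.le]
    · have hne : v ∉ ({T.anc v (cl i)} : Set V) := by
        intro h
        rw [Set.mem_singleton_iff] at h
        have := congrArg T.lev h
        rw [T.lev_anc (by omega)] at this
        omega
      obtain ⟨x, hx, w, hw, hwn, hadj⟩ := exists_exit (K := {T.anc v (cl i)}) hKc
        (by simp) (Set.mem_singleton _) hKv hne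
      rw [Set.mem_singleton_iff] at hx
      subst hx
      rcases hw with rfl | hw
      · exact absurd rfl hwn
      · exact ⟨w, hKa w hw, hadj⟩
  · by_contra hcon
    exact hR i ha ⟨hb, _, T.anc_mono hcl hb.le, K, hKa, hKc, hac, hKu, hKv, not_lt.1 hcon⟩

lemma exists_good {u v : V} {S : Set V} (huv : G.Adj u v) (lt : u < v)
    (conn : (G.induce S).Connected) (acyc : (G.induce S).IsAcyclic)
    (hu : u ∈ S) (hv : v ∈ S) (hS : k + 1 ≤ S.ncard) :
    ∃ S r i0 cl, T.Good u v S r i0 cl := by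
  by_cases hR : ∃ j, T.RichAt u v j
  · obtain ⟨j, hj, hmax⟩ := Set.exists_max_image {j | T.RichAt u v j} id
      ((Set.finite_lt_nat (T.lev v)).subset (fun j hj => hj.1)) hR
    obtain ⟨hjv, c, hc, K, hKa, hKc, hKac, hKu, hKv, hk⟩ := hj
    have hcl : T.lev c ≤ j := by
      have := T.lev_mono hc
      rwa [T.lev_anc hjv.le] at this
    obtain ⟨cl, h⟩ := T.good_of_set (i0 := j + 1) (r := c) hKc hKac (Or.inl rfl)
      (by
        rintro s (rfl | hs)
        · exact le_rfl
        · exact hc.trans ((T.anc_mono (Nat.le_succ j) hjv).trans (hKa s hs)))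
      hKu hKv huv lt (by omega) hjv
      (by
        intro i hi hcon
        have : i ≤ j := hmax i hcon
        omega)
      (by intro h; omega)
      (by
        intro _
        refine ⟨hk, ?_⟩
        rintro s (rfl | hs)
        · exact Or.inl rfl
        · exact Or.inr (hKa s hs))
    exact ⟨_, _, _, cl, h⟩
  · obtain ⟨r, hr, top⟩ := T.exists_top conn
    obtain ⟨cl, h⟩ := T.good_of_set (i0 := T.lev r) conn acyc hr top hu hv huv lt le_rfl
      (T.lev_mono (top v hv)) (fun i _ h => hR ⟨i, h⟩) (fun _ => hS)
      (fun h => absurd h (lt_irrefl _))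
    exact ⟨_, _, _, cl, h⟩

lemma exists_index (s : Set V) : ∃ f : V → ℕ, Set.InjOn f s ∧ ∀ x ∈ s, f x < s.ncard := by
  let e := Finite.equivFin s
  refine ⟨fun x => if h : x ∈ s then (e ⟨x, h⟩).1 else 0, ?_, ?_⟩
  · intro x hx y hy h
    simp only [hx, hy, dif_pos] at h
    have := e.injective (Fin.ext h)
    exact congrArg Subtype.val this
  · intro x hx
    simp only [hx, dif_pos]
    exact (e ⟨x, hx⟩).2

/-- A choice of an indexing of `Br c x`. -/
noncomputable def idx (c x : V) : V → ℕ := (exists_index (T.Br c x)).choose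

lemma idx_injOn (c x : V) : Set.InjOn (T.idx c x) (T.Br c x) :=
  (exists_index (T.Br c x)).choose_spec.1

lemma idx_lt (c x : V) {b : V} (hb : b ∈ T.Br c x) : T.idx c x b < (T.Br c x).ncard :=
  (exists_index (T.Br c x)).choose_spec.2 b hb

/-- The bit of the code at level `i`. -/
def bitP (v r : V) (cl : ℕ → ℕ) (i : ℕ) : Prop :=
  (∃ i', T.lev r ≤ i' ∧ i' < T.lev v ∧ cl i' = i) ∨ i = T.lev v

/-- The index part of the code at level `i`. -/
noncomputable def idxN (v : V) (i0 : ℕ) (cl : ℕ → ℕ) (i : ℕ) : ℕ :=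
  min (if i0 ≤ i ∧ i < T.lev v then T.idx (T.anc v (cl i)) (T.anc v i) (T.anc v (i + 1))
    else k - 1) (k - 1)

section decode

variable {T}
variable {u v r u' v' r' : V} {S S' : Set V} {i0 i0' : ℕ} {cl cl' : ℕ → ℕ}

lemma Good.lev_r_lt (h : T.Good u v S r i0 cl) : T.lev r < T.lev v :=
  (T.lev_mono (h.top u h.hu)).trans_lt (T.lev_lt h.lt)

lemma Good.bit_le (h : T.Good u v S r i0 cl) {i : ℕ} (hi : T.bitP v r cl i) :
    T.lev r ≤ i ∧ i ≤ T.lev v := by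
  have h0 := h.lev_r_lt
  rcases hi with ⟨i', h1, h2, h3⟩ | h1
  · have := h.cl_le i' h1 h2
    have := h.cl_ge i' h1 h2
    omega
  · omega

lemma Good.bit_top (h : T.Good u v S r i0 cl) : T.bitP v r cl (T.lev r) := by
  have h0 := h.lev_r_lt
  exact Or.inl ⟨T.lev r, le_rfl, h0, le_antisymm (h.cl_le _ le_rfl h0) (h.cl_ge _ le_rfl h0)⟩

lemma Good.cl_mono (h : T.Good u v S r i0 cl) {i i' : ℕ} (h1 : T.lev r ≤ i) (h2 : i < T.lev v)
    (h3 : T.lev r ≤ i') (h4 : i' < T.lev v) (h5 : cl i' ≤ i) : cl i' ≤ cl i := by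
  rcases le_or_gt i i' with h6 | h6
  · exact (h.cl_cons i i' h1 h6 h4 h5).ge
  · by_contra hcon
    push Not at hcon
    have h7 := h.cl_le i' h3 h4
    have := h.cl_cons i' i h3 h6.le h2 (by omega)
    omega

lemma Good.idxN_lt (h : T.Good u v S r i0 cl) {i : ℕ} (h1 : i0 ≤ i) (h2 : i < T.lev v) :
    T.idxN v i0 cl i = T.idx (T.anc v (cl i)) (T.anc v i) (T.anc v (i + 1)) ∧
      T.idxN v i0 cl i < k - 1 := by
  obtain ⟨h3, h4⟩ := h.poor i h1 h2
  have := T.idx_lt _ _ h3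
  unfold idxN
  rw [if_pos ⟨h1, h2⟩]
  omega

lemma idxN_special {i : ℕ} (h : i < i0) : T.idxN v i0 cl i = k - 1 := by
  unfold idxN
  rw [if_neg (by omega)]
  simp

lemma Good.decode_aux (h : T.Good u v S r i0 cl) (h' : T.Good u' v' S' r' i0' cl')
    (hb : ∀ i, i ≤ k → T.bitP v r cl i → T.bitP v' r' cl' i) :
    T.lev v ≤ T.lev v' ∧ T.lev r' ≤ T.lev r := by
  have h1 := T.lev_le v
  have h2 := T.lev_le r
  exact ⟨(h'.bit_le (hb _ h1 (Or.inr rfl))).2, (h'.bit_le (hb _ h2 h.bit_top)).1⟩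

lemma Good.decode_aux2 (h : T.Good u v S r i0 cl) (h' : T.Good u' v' S' r' i0' cl')
    (hb : ∀ i, i ≤ k → T.bitP v r cl i → T.bitP v' r' cl' i) (hv : T.lev v = T.lev v')
    (hr : T.lev r = T.lev r') {i : ℕ} (h1 : T.lev r ≤ i) (h2 : i < T.lev v) : cl i ≤ cl' i := by
  have h3 := h.cl_le i h1 h2
  have h4 := T.lev_le v
  rcases hb (cl i) (by omega) (Or.inl ⟨i, h1, h2, rfl⟩) with ⟨i', g1, g2, g3⟩ | g1
  · rw [← g3]
    exact h'.cl_mono (by omega) (by omega) g1 g2 (by omega)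
  · omega

lemma Good.decode_aux3 (h : T.Good u v S r i0 cl) (h' : T.Good u' v' S' r' i0' cl')
    (hi : ∀ i, i ≤ k → T.idxN v i0 cl i = T.idxN v' i0' cl' i) (hv : T.lev v = T.lev v') :
    i0' ≤ i0 := by
  by_contra hcon
  push Not at hcon
  have h1 := T.lev_le v
  have h2 := h'.le1
  have h3 := (h.idxN_lt le_rfl (by omega)).2
  rw [hi i0 (by omega), idxN_special hcon] at h3
  omega

lemma Good.decode (h : T.Good u v S r i0 cl) (h' : T.Good u' v' S' r' i0' cl')
    (hb : ∀ i, i ≤ k → (T.bitP v r cl i ↔ T.bitP v' r' cl' i))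
    (hi : ∀ i, i ≤ k → T.idxN v i0 cl i = T.idxN v' i0' cl' i) :
    T.lev v = T.lev v' ∧ T.lev r = T.lev r' ∧ i0 = i0' ∧
      ∀ i, T.lev r ≤ i → i < T.lev v → cl i = cl' i := by
  obtain ⟨a1, a2⟩ := h.decode_aux h' (fun i hik => (hb i hik).1)
  obtain ⟨b1, b2⟩ := h'.decode_aux h (fun i hik => (hb i hik).2)
  have hv : T.lev v = T.lev v' := le_antisymm a1 b1
  have hr : T.lev r = T.lev r' := le_antisymm b2 a2
  refine ⟨hv, hr, le_antisymm (h'.decode_aux3 h (fun i hik => (hi i hik).symm) hv.symm)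
    (h.decode_aux3 h' hi hv), ?_⟩
  intro i h1 h2
  exact le_antisymm (h.decode_aux2 h' (fun i hik => (hb i hik).1) hv hr h1 h2)
    (h'.decode_aux2 h (fun i hik => (hb i hik).2) hv.symm hr.symm (by omega) (by omega))

lemma Good.determ (h : T.Good u v S r i0 cl) (h' : T.Good u' v' S' r' i0' cl')
    (hb : ∀ i, i ≤ k → (T.bitP v r cl i ↔ T.bitP v' r' cl' i))
    (hi : ∀ i, i ≤ k → T.idxN v i0 cl i = T.idxN v' i0' cl' i)
    (h0 : T.anc v i0 = T.anc v' i0) : u = u' ∧ v = v' := by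
  obtain ⟨hv, hr, rfl, hcl⟩ := h.decode h' hb hi
  have hl1 := h.le1
  have hl0 := h.le0
  have hk := T.lev_le v
  have key : ∀ n, i0 + n ≤ T.lev v → T.anc v (i0 + n) = T.anc v' (i0 + n) := by
    intro n
    induction n with
    | zero => intro _; exact h0
    | succ n ih =>
      intro hn
      have e1 := ih (by omega)
      have hle := h.cl_le (i0 + n) (by omega) (by omega)
      have e2 : T.anc v (cl (i0 + n)) = T.anc v' (cl' (i0 + n)) := by
        rw [← hcl (i0 + n) (by omega) (by omega), ← T.anc_anc hle (by omega), e1,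
          T.anc_anc hle (by omega)]
      have p1 := (h.poor (i0 + n) (by omega) (by omega)).1
      have p2 := (h'.poor (i0 + n) (by omega) (by omega)).1
      have q1 := (h.idxN_lt (i := i0 + n) (by omega) (by omega)).1
      have q2 := (h'.idxN_lt (i := i0 + n) (by omega) (by omega)).1
      have q3 := hi (i0 + n) (by omega)
      rw [q1, q2] at q3
      rw [e1, e2] at p1 q3
      exact T.idx_injOn _ _ p1 p2 q3
  have hvv : v = v' := by
    have := key (T.lev v - i0) (by omega)
    rw [Nat.add_sub_cancel' hl1, T.anc_self, hv, T.anc_self] at this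
    exact this
  refine ⟨?_, hvv⟩
  subst hvv
  have h5 := h.lev_r_lt
  have := hcl (T.lev v - 1) (by omega) (by omega)
  rw [h.cl_last, h'.cl_last] at this
  exact T.eq_of_lev h.lt.le h'.lt.le this

end decode

end TreeOrd
namespace TreeOrd

variable {V : Type} [Fintype V] [PartialOrder V] {G : SimpleGraph V} {k : ℕ} (T : TreeOrd G k)

set_option linter.unusedSectionVars false

/-- All edges with the same code fit into one strong forest. -/
lemma class_forest {I : Type} (u v : I → V) (S : I → Set V) (r : I → V) (i0 : I → ℕ)
    (cl : I → ℕ → ℕ) (hG : ∀ p, T.Good (u p) (v p) (S p) (r p) (i0 p) (cl p))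
    (hb : ∀ p q, ∀ i, i ≤ k → (T.bitP (v p) (r p) (cl p) i ↔ T.bitP (v q) (r q) (cl q) i))
    (hi : ∀ p q, ∀ i, i ≤ k → T.idxN (v p) (i0 p) (cl p) i = T.idxN (v q) (i0 q) (cl q) i)
    (hinj : ∀ p q, u p = u q → v p = v q → p = q) :
    ∃ F, StrongSet G k F ∧ ∀ p, u p ∈ F ∧ v p ∈ F := by
  have hdec := fun p q => (hG p).decode (hG q) (hb p q) (hi p q)
  have hdet : ∀ p q, T.anc (v p) (i0 p) = T.anc (v q) (i0 p) → p = q := by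
    intro p q h
    obtain ⟨h1, h2⟩ := (hG p).determ (hG q) (hb p q) (hi p q) h
    exact hinj p q h1 h2
  by_cases hrich : ∃ p, T.lev (r p) < i0 p
  · obtain ⟨p0, hp0⟩ := hrich
    obtain ⟨t, ht⟩ : ∃ t, t = T.lev (r p0) := ⟨_, rfl⟩
    obtain ⟨j, hj⟩ : ∃ j, i0 p0 = j + 1 := ⟨i0 p0 - 1, by omega⟩
    have hrt : ∀ p, T.lev (r p) = t := fun p => by rw [ht]; exact (hdec p p0).2.1
    have hij : ∀ p, i0 p = j + 1 := fun p => by rw [← hj]; exact (hdec p p0).2.2.1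
    have htj : t ≤ j := by omega
    have hjv : ∀ p, j + 1 ≤ T.lev (v p) := fun p => by rw [← hij p]; exact (hG p).le1
    have hrp : ∀ p, r p ≤ T.anc (v p) j := fun p =>
      T.le_of_lev ((hG p).top _ (hG p).hv) (T.anc_le (by have := hjv p; omega))
        (by rw [hrt, T.lev_anc (by have := hjv p; omega)]; exact htj)
    have hRich : ∀ p, k ≤ (T.Br (r p) (T.anc (v p) j)).ncard ∧
        ∀ s ∈ S p, s = r p ∨ T.anc (v p) (j + 1) ≤ s := by
      intro p
      have := (hG p).rich (by rw [hrt, hij]; omega)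
      rw [hij] at this
      exact this
    let B : Set V := {b | ∃ p, b ∈ T.Br (r p) (T.anc (v p) j)}
    have hmem : ∀ p b, b ∈ T.Br (r p) (T.anc (v p) j) → T.lev b = j + 1 ∧ T.anc b t = r p := by
      intro p b hb
      obtain ⟨h1, h2, _⟩ := hb
      rw [T.lev_anc (by have := hjv p; omega)] at h2
      refine ⟨h2, ?_⟩
      rw [← hrt p]
      exact T.anc_eq ((hrp p).trans h1)
    have hvB : ∀ p, T.anc (v p) (j + 1) ∈ B := by
      intro p
      have hvr : v p ∉ ({r p} : Set V) := by
        intro h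
        have h : v p = r p := h
        have := (hG p).lev_r_lt
        rw [h] at this
        omega
      obtain ⟨x, hx, w, hw, hwr, ha⟩ := exists_exit (hG p).conn
        (Set.singleton_subset_iff.2 (hG p).hr) (Set.mem_singleton _) (hG p).hv hvr
      obtain rfl : x = r p := hx
      refine ⟨p, T.anc_mono (by omega) (hjv p), ?_, w, ?_, ha⟩
      · rw [T.lev_anc (hjv p), T.lev_anc (by have := hjv p; omega)]
      · exact ((hRich p).2 w hw).resolve_left hwr
    have hK : ∀ b, ∃ K : Set V, b ∈ B → (∀ x ∈ K, b ≤ x) ∧ K.Nonempty ∧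
        (G.induce (insert (T.anc b t) K)).Connected ∧
        (G.induce (insert (T.anc b t) K)).IsAcyclic ∧
        ∀ p, T.anc (v p) (j + 1) = b → S p = insert (T.anc b t) K := by
      intro b
      by_cases hbB : b ∈ B
      swap
      · exact ⟨∅, fun h => absurd h hbB⟩
      by_cases hp : ∃ p, T.anc (v p) (j + 1) = b
      · obtain ⟨p, rfl⟩ := hp
        have hc : T.anc (T.anc (v p) (j + 1)) t = r p := by
          rw [T.anc_anc (by omega) (hjv p), ← hrt p]
          exact T.anc_eq ((hG p).top _ (hG p).hv)
        have hins : insert (r p) (S p \ {r p}) = S p := by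
          rw [Set.insert_sdiff_singleton, Set.insert_eq_of_mem (hG p).hr]
        refine ⟨S p \ {r p}, fun _ => ⟨?_, ?_, ?_, ?_, ?_⟩⟩
        · intro x hx
          exact ((hRich p).2 x hx.1).resolve_left hx.2
        · refine ⟨v p, (hG p).hv, fun h => ?_⟩
          have h : v p = r p := h
          have := (hG p).lev_r_lt
          rw [h] at this
          omega
        · rw [hc, hins]; exact (hG p).conn
        · rw [hc, hins]; exact (hG p).acyc
        · intro q hq
          rw [hc, hins]
          rw [hdet q p (by rw [hij]; exact hq)]
      · obtain ⟨p, hbp⟩ := hbB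
        obtain ⟨_, hc⟩ := hmem p b hbp
        obtain ⟨_, _, w, hw, ha⟩ := hbp
        refine ⟨{w}, fun _ => ⟨?_, ⟨w, rfl⟩, ?_, ?_, ?_⟩⟩
        · intro x hx
          rw [Set.mem_singleton_iff.1 hx]; exact hw
        · rw [hc]; exact SimpleGraph.induce_pair_connected_of_adj ha
        · apply SimpleGraph.IsAcyclic.of_card_le_two
          rw [hc, ENat.card_eq_coe_natCard]
          have : Nat.card ↑({r p, w} : Set V) ≤ 2 := by
            rw [Nat.card_coe_set_eq]; exact Set.ncard_insert_le _ _ |>.trans (by simp)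
          exact_mod_cast this
        · intro q hq
          exact absurd ⟨q, hq⟩ hp
    choose K hK using hK
    refine ⟨⋃ b ∈ B, insert (T.anc b t) (K b), ?_, ?_⟩
    · have hBl : ∀ b ∈ B, T.lev b = j + 1 := fun b ⟨p, hp⟩ => (hmem p b hp).1
      apply T.rich_forest B (fun b => T.anc b t) K t j htj hBl
      · intro b hb; exact T.anc_le (by rw [hBl b hb]; omega)
      · intro b hb; exact T.lev_anc (by rw [hBl b hb]; omega)
      · intro b hb; exact (hK b hb).1
      · intro b hb; exact (hK b hb).2.1
      · intro b hb; exact (hK b hb).2.2.1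
      · intro b hb; exact (hK b hb).2.2.2.1
      · rintro b ⟨p, hp⟩
        refine (hRich p).1.trans (Set.ncard_le_ncard ?_ (Set.toFinite _))
        intro b' hb'
        exact ⟨⟨p, hb'⟩, by rw [(hmem p b' hb').2, (hmem p b hp).2]⟩
    · intro p
      have h := (hK _ (hvB p)).2.2.2.2 p rfl
      have hsub : S p ⊆ ⋃ b ∈ B, insert (T.anc b t) (K b) := by
        rw [h]
        exact Set.subset_biUnion_of_mem (u := fun b => insert (T.anc b t) (K b)) (hvB p)
      exact ⟨hsub (hG p).hu, hsub (hG p).hv⟩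
  · push Not at hrich
    have he : ∀ p, i0 p = T.lev (r p) := fun p => le_antisymm (hrich p) (hG p).le0
    refine ⟨⋃ p, S p, T.poor_forest S r ?_ (fun p q => (hdec p q).2.1) (fun p => (hG p).hr)
      (fun p => (hG p).top) (fun p => (hG p).conn) (fun p => (hG p).acyc)
      (fun p => (hG p).size (he p)), fun p => ⟨Set.mem_iUnion_of_mem p (hG p).hu,
        Set.mem_iUnion_of_mem p (hG p).hv⟩⟩
    intro p q hpq
    apply hdet
    rw [he, T.anc_eq ((hG p).top _ (hG p).hv), hpq, T.anc_eq ((hG q).top _ (hG q).hv)]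

lemma exists_forests (T : TreeOrd G k) (hk : 1 ≤ k) :
    ∃ F : (Fin (k + 1) → Bool × Fin k) → Set V, (∀ σ, StrongSet G k (F σ)) ∧
      ∀ u v (S : Set V), G.Adj u v → u < v → (G.induce S).Connected → (G.induce S).IsAcyclic →
        u ∈ S → v ∈ S → k + 1 ≤ S.ncard → ∃ σ, u ∈ F σ ∧ v ∈ F σ := by
  let P : Type := {p : V × V // ∃ S r i0 cl, T.Good p.1 p.2 S r i0 cl}
  have hP : ∀ p : P, ∃ S r i0 cl, T.Good p.1.1 p.1.2 S r i0 cl := fun p => p.2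
  choose S r i0 cl hG using hP
  let code : P → (Fin (k + 1) → Bool × Fin k) := fun p i =>
    (decide (T.bitP p.1.2 (r p) (cl p) i),
      ⟨T.idxN p.1.2 (i0 p) (cl p) i, by
        have : T.idxN p.1.2 (i0 p) (cl p) i ≤ k - 1 := min_le_right _ _
        omega⟩)
  have hF : ∀ σ, ∃ F, StrongSet G k F ∧ ∀ p : {p // code p = σ}, p.1.1.1 ∈ F ∧ p.1.1.2 ∈ F := by
    intro σ
    have hcode : ∀ (p q : {p // code p = σ}) (i : ℕ) (h : i ≤ k),
        code p.1 ⟨i, by omega⟩ = code q.1 ⟨i, by omega⟩ := by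
      intro p q i h
      rw [p.2, q.2]
    apply T.class_forest (I := {p // code p = σ}) (fun p => p.1.1.1) (fun p => p.1.1.2)
      (fun p => S p.1) (fun p => r p.1) (fun p => i0 p.1) (fun p => cl p.1) (fun p => hG p.1)
    · intro p q i h
      have := congrArg Prod.fst (hcode p q i h)
      simpa [code] using this
    · intro p q i h
      have := congrArg (fun x => (Prod.snd x).1) (hcode p q i h)
      simpa [code] using this
    · intro p q h1 h2
      exact Subtype.ext (Subtype.ext (Prod.ext h1 h2))
  choose F hF1 hF2 using hF
  refine ⟨F, hF1, ?_⟩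
  intro u v S huv lt conn acyc hu hv hS
  let p : P := ⟨(u, v), T.exists_good huv lt conn acyc hu hv hS⟩
  exact ⟨code p, hF2 (code p) ⟨p, rfl⟩⟩

end TreeOrd

/-- A finite forest order of bounded height yields level and ancestor functions. -/
lemma exists_treeOrd {V : Type} [Fintype V] [PartialOrder V] (G : SimpleGraph V) (k : ℕ)
    (chain : ∀ a b v : V, a ≤ v → b ≤ v → a ≤ b ∨ b ≤ a)
    (comp : ∀ u v, G.Adj u v → u ≤ v ∨ v ≤ u)
    (hlev : ∀ v : V, {u | u < v}.ncard ≤ k) : Nonempty (TreeOrd G k) := by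
  let lev : V → ℕ := fun v => {u | u < v}.ncard
  have hlt : ∀ u v : V, u < v → lev u < lev v := by
    intro u v h
    apply Set.ncard_lt_ncard _ (Set.toFinite _)
    refine ⟨fun x hx => lt_trans hx h, fun h' => lt_irrefl u (h' h)⟩
  have hanc : ∀ v i, ∃ a, i ≤ lev v → a ≤ v ∧ lev a = i := by
    intro v i
    by_cases hi : i ≤ lev v
    swap
    · exact ⟨v, fun h => absurd h hi⟩
    have hinj : Set.InjOn lev (Set.Iic v) := by
      intro a ha b hb hab
      rcases chain a b v ha hb with h | h
      · rcases h.eq_or_lt with h | h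
        · exact h
        · have := hlt _ _ h; omega
      · rcases h.eq_or_lt with h | h
        · exact h.symm
        · have := hlt _ _ h; omega
    have hsub : lev '' Set.Iic v ⊆ Set.Iic (lev v) := by
      rintro _ ⟨a, ha, rfl⟩
      rcases (show a ≤ v from ha).eq_or_lt with h | h
      · rw [h]; exact le_refl (lev v)
      · exact (hlt _ _ h).le
    have hcard : (Set.Iic v).ncard = lev v + 1 := by
      have : Set.Iic v = insert v {u | u < v} := by
        ext x; simp [le_iff_eq_or_lt]
      rw [this, Set.ncard_insert_of_notMem (by simp) (Set.toFinite _)]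
    have hcard2 : (Set.Iic (lev v)).ncard = lev v + 1 := by
      rw [← Finset.coe_Iic, Set.ncard_coe_finset, Nat.card_Iic]
    have heq := Set.eq_of_subset_of_ncard_le hsub
      (by rw [Set.ncard_image_of_injOn hinj, hcard, hcard2]) (Set.finite_Iic _)
    have : i ∈ lev '' Set.Iic v := by rw [heq]; exact hi
    obtain ⟨a, ha, hai⟩ := this
    exact ⟨a, fun _ => ⟨ha, hai⟩⟩
  choose anc hanc using hanc
  exact ⟨{ lev := lev, anc := anc, chain := fun h1 h2 => chain _ _ _ h1 h2,
           comp := fun h => comp _ _ h, lev_lt := fun h => hlt _ _ h,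
           anc_le := fun h => (hanc _ _ h).1, lev_anc := fun h => (hanc _ _ h).2,
           lev_le := hlev }⟩

lemma hasTreedepth_of_le {V : Type} [Fintype V] (G : SimpleGraph V) (d : ℕ)
    (htd : treedepth G ≤ d) : HasTreedepthAtMost G d := by
  have hne : {d | HasTreedepthAtMost G d}.Nonempty := by
    let e := Fintype.equivFin V
    refine ⟨Fintype.card V, fun u v => e u ≤ e v, ?_, ?_, ?_, ?_⟩
    · exact { refl := fun a => le_rfl, trans := fun a b c h1 h2 => le_trans h1 h2,
              antisymm := fun a b h1 h2 => e.injective (le_antisymm h1 h2) }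
    · intro v a _ b _ _; exact le_total (e a) (e b)
    · intro u v _; exact le_total _ _
    · intro v
      exact (Set.ncard_le_card _).trans (by simp)
  obtain ⟨le, h1, h2, h3, h4⟩ := Nat.sInf_mem hne
  exact ⟨le, h1, h2, h3, fun v => (h4 v).trans htd⟩

/-- The subgraph of `G` keeping only the edges inside `W`. -/
def cut {V : Type} (G : SimpleGraph V) (W : Set V) : SimpleGraph V where
  Adj u v := G.Adj u v ∧ u ∈ W ∧ v ∈ W
  symm := ⟨fun _ _ h => ⟨h.1.symm, h.2.2, h.2.1⟩⟩
  loopless := ⟨fun _ h => G.loopless.irrefl _ h.1⟩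

lemma cut_induce {V : Type} (G : SimpleGraph V) {W F : Set V} (h : F ⊆ W) :
    (cut G W).induce F = G.induce F := by
  ext a b
  simp only [SimpleGraph.comap_adj, Function.Embedding.subtype_apply, cut]
  exact ⟨fun h => h.1, fun h' => ⟨h', h a.2, h b.2⟩⟩

lemma strong_of_cut {V : Type} [Fintype V] (G : SimpleGraph V) {W F : Set V} {k : ℕ} (hk : 1 ≤ k)
    (h : StrongSet (cut G W) k F) : IsStrongForest G k F := by
  have hFW : F ⊆ W := by
    intro z hz
    obtain ⟨Z, hZF, hzZ, hZ, hn⟩ := h.2 z hz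
    obtain ⟨y, hy, hyz⟩ := Set.exists_ne_of_one_lt_ncard (s := Z) (by omega) z
    obtain ⟨x, hx, w, _, _, ha⟩ := exists_exit hZ (Set.singleton_subset_iff.2 hzZ)
      (Set.mem_singleton z) hy hyz
    obtain rfl : x = z := hx
    exact ha.2.1
  obtain ⟨h1, h2⟩ := h
  rw [cut_induce G hFW] at h1
  refine ⟨h1, ?_⟩
  rintro ⟨z, hz⟩
  obtain ⟨Z, hZF, hzZ, hZ, hn⟩ := h2 z hz
  rw [cut_induce G (hZF.trans hFW)] at hZ
  exact le_compEdgeCount hZF hzZ hZ hn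

/-- Forests for one choice of `k + 1` levels. -/
lemma level_forests {V : Type} [Fintype V] (G : SimpleGraph V) (k : ℕ) (hk : 1 ≤ k)
    (le : V → V → Prop) (hle : IsPartialOrder V le) (hch : ∀ v : V, IsChain le {u | le u v})
    (hco : ∀ u v : V, G.Adj u v → le u v ∨ le v u) (lev : V → ℕ)
    (hlev : ∀ u v, le u v → u ≠ v → lev u < lev v) (L : Finset ℕ) (hL : L.card = k + 1) :
    ∃ F : (Fin (k + 1) → Bool × Fin k) → Set V, (∀ σ, IsStrongForest G k (F σ)) ∧
      ∀ u v (S : Set V), (∀ s ∈ S, lev s ∈ L) → G.Adj u v → (G.induce S).Connected →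
        (G.induce S).IsAcyclic →
        u ∈ S → v ∈ S → k + 1 ≤ S.ncard → ∃ σ, u ∈ F σ ∧ v ∈ F σ := by
  let W : Set V := {v | lev v ∈ L}
  letI : PartialOrder V :=
    { le := fun u v => u = v ∨ (le u v ∧ u ∈ W ∧ v ∈ W)
      le_refl := fun a => Or.inl rfl
      le_trans := by
        rintro a b c (rfl | h1) (rfl | h2)
        · exact Or.inl rfl
        · exact Or.inr h2
        · exact Or.inr h1
        · exact Or.inr ⟨hle.trans _ _ _ h1.1 h2.1, h1.2.1, h2.2.2⟩
      le_antisymm := by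
        rintro a b (rfl | h1) (h | h2)
        · rfl
        · rfl
        · exact h.symm
        · exact hle.antisymm _ _ h1.1 h2.1 }
  have ledef : ∀ u v : V, u ≤ v ↔ (u = v ∨ (le u v ∧ u ∈ W ∧ v ∈ W)) := fun u v => Iff.rfl
  have ltdef : ∀ u v : V, u < v → le u v ∧ u ≠ v ∧ u ∈ W ∧ v ∈ W := by
    intro u v h
    have h1 := h.ne
    rcases (ledef u v).1 h.le with h2 | h2
    · exact absurd h2 h1
    · exact ⟨h2.1, h1, h2.2⟩
  have chainle : ∀ a b v : V, le a v → le b v → le a b ∨ le b a := by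
    intro a b v ha hb
    by_cases hab : a = b
    · subst hab; exact Or.inl (hle.refl a)
    · exact hch v ha hb hab
  have chain : ∀ a b v : V, a ≤ v → b ≤ v → a ≤ b ∨ b ≤ a := by
    intro a b v ha hb
    rcases (ledef a v).1 ha with rfl | h1
    · exact Or.inr hb
    rcases (ledef b v).1 hb with rfl | h2
    · exact Or.inl ha
    rcases chainle a b v h1.1 h2.1 with h | h
    · exact Or.inl (Or.inr ⟨h, h1.2.1, h2.2.1⟩)
    · exact Or.inr (Or.inr ⟨h, h2.2.1, h1.2.1⟩)
  have comp : ∀ u v, (cut G W).Adj u v → u ≤ v ∨ v ≤ u := by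
    intro u v h
    rcases hco u v h.1 with h' | h'
    · exact Or.inl (Or.inr ⟨h', h.2⟩)
    · exact Or.inr (Or.inr ⟨h', h.2.2, h.2.1⟩)
  have hcard : ∀ v : V, {u | u < v}.ncard ≤ k := by
    intro v
    by_cases hv : v ∈ W
    swap
    · have : {u | u < v} = ∅ := by
        ext x; simp only [Set.mem_setOf_eq, Set.mem_empty_iff_false, iff_false]
        exact fun h => hv (ltdef x v h).2.2.2
      rw [this]; simp
    have h1 : {u | u < v}.ncard ≤ ((L.erase (lev v) : Finset ℕ) : Set ℕ).ncard := by
      apply Set.ncard_le_ncard_of_injOn lev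
      · intro u hu
        obtain ⟨g1, g2, g3, _⟩ := ltdef u v hu
        have := hlev u v g1 g2
        have g3 : lev u ∈ L := g3
        simp only [Finset.coe_erase, Set.mem_sdiff, Finset.mem_coe, Set.mem_singleton_iff]
        exact ⟨g3, by omega⟩
      · intro a ha b hb hab
        by_contra hne
        rcases chainle a b v (ltdef a v ha).1 (ltdef b v hb).1 with h | h
        · have := hlev _ _ h hne; omega
        · have := hlev _ _ h (Ne.symm hne); omega
    rw [Set.ncard_coe_finset, Finset.card_erase_of_mem hv, hL] at h1
    exact h1
  obtain ⟨T⟩ := exists_treeOrd (cut G W) k chain comp hcard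
  obtain ⟨F, hF1, hF2⟩ := T.exists_forests hk
  refine ⟨F, fun σ => strong_of_cut G hk (hF1 σ), ?_⟩
  intro u v S hSW huv hc ha hu hv hn
  have hSW : S ⊆ W := hSW
  rw [← cut_induce G hSW] at hc ha
  have hadj : (cut G W).Adj u v := ⟨huv, hSW hu, hSW hv⟩
  rcases comp u v hadj with h | h
  · exact hF2 u v S hadj (lt_of_le_of_ne h huv.ne) hc ha hu hv hn
  · obtain ⟨σ, h1, h2⟩ := hF2 v u S hadj.symm (lt_of_le_of_ne h huv.ne.symm) hc ha hv hu hn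
    exact ⟨σ, h2, h1⟩

/-- For all positive integers `k` and `d` with `d ≥ k + 1`, every finite
simple graph `G` of tree-depth at most `d` satisfies `f_k(G) ≤ (2k)^(k+1) * (d choose k+1)`. -/
theorem fStrong_le_of_treedepth_ge {V : Type} [Fintype V] (G : SimpleGraph V) (k d : ℕ)
    (hk : 1 ≤ k) (hd : k + 1 ≤ d) (htd : treedepth G ≤ d) :
    fStrong G k ≤ (2 * k) ^ (k + 1) * d.choose (k + 1) := by
  obtain ⟨le, hle, hch, hco, hn⟩ := hasTreedepth_of_le G d htd
  let lev : V → ℕ := fun v => {u | le u v ∧ u ≠ v}.ncard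
  have hlev : ∀ u v, le u v → u ≠ v → lev u < lev v := by
    intro u v h hne
    apply Set.ncard_lt_ncard _ (Set.toFinite _)
    refine ⟨?_, fun h' => (h' (show u ∈ {x | le x v ∧ x ≠ v} from ⟨h, hne⟩)).2 rfl⟩
    rintro x ⟨h1, h2⟩
    refine ⟨hle.trans _ _ _ h1 h, ?_⟩
    rintro rfl
    exact h2 (hle.antisymm _ _ h1 h)
  have hlevd : ∀ v, lev v < d := by
    intro v
    refine lt_of_lt_of_le (Set.ncard_lt_ncard ?_ (Set.toFinite _)) (hn v)
    refine ⟨fun x hx => hx.1, fun h' => (h' (show v ∈ {u | le u v} from hle.refl v)).2 rfl⟩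
  have hF := fun L : {L // L ∈ Finset.powersetCard (k + 1) (Finset.range d)} =>
    level_forests G k hk le hle hch hco lev hlev L.1 (Finset.mem_powersetCard.1 L.2).2
  choose F hF1 hF2 using hF
  have hcard : Fintype.card ({L // L ∈ Finset.powersetCard (k + 1) (Finset.range d)} ×
      (Fin (k + 1) → Bool × Fin k)) = (2 * k) ^ (k + 1) * d.choose (k + 1) := by
    rw [Fintype.card_prod, Fintype.card_coe, Finset.card_powersetCard, Finset.card_range]
    simp [mul_comm]
  let e := Fintype.equivFinOfCardEq hcard
  apply Nat.sInf_le
  refine ⟨fun i => F (e.symm i).1 (e.symm i).2, fun i => hF1 _ _, ?_⟩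
  rintro ⟨u, v⟩ ⟨S, hS, hadj, hmem⟩
  have huv : G.Adj u v := hadj
  obtain ⟨K, hKS, hu, hv, hc, ha, hKn⟩ := exists_tree_of_strong hk hS
    (hmem u (Sym2.mem_mk_left u v)) (hmem v (Sym2.mem_mk_right u v)) huv
  have hKf : K.toFinset.card = k + 1 := by rw [← hKn, Set.ncard_eq_toFinset_card']
  obtain ⟨L, hL1, hL2, hL3⟩ := Finset.exists_subsuperset_card_eq
    (s := K.toFinset.image lev) (t := Finset.range d) (n := k + 1)
    (by intro x hx; obtain ⟨y, _, rfl⟩ := Finset.mem_image.1 hx; exact Finset.mem_range.2 (hlevd y))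
    (Finset.card_image_le.trans hKf.le) (by rw [Finset.card_range]; exact hd)
  obtain ⟨σ, h1, h2⟩ := hF2 ⟨L, Finset.mem_powersetCard.2 ⟨hL2, hL3⟩⟩ u v K
    (fun s hs => hL1 (Finset.mem_image_of_mem _ (Set.mem_toFinset.2 hs))) huv hc ha hu hv hKn.ge
  refine ⟨e (⟨L, Finset.mem_powersetCard.2 ⟨hL2, hL3⟩⟩, σ), hadj, ?_⟩
  intro x hx
  beta_reduce
  rw [Equiv.symm_apply_apply]
  rcases Sym2.mem_iff.1 hx with rfl | rfl
  · exact h1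
  · exact h2
end InducedArboricity
end
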